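/- arXiv:1008.2368 — 2 statements merged into one kernel-verified Lean document; each statement's English description precedes it below -/
import Mathlib

section
/- Let q be a prime power, d a positive integer, and f ∈ F_q[x,y,z] a nonzero homogeneous polynomial of degree d that is not a product of d linear forms with coefficients in F_q (i.e., the plane curve C = V(f) is not a union of d F_q-rational lines). Then the number of points [a:b:c] ∈ P²(F_q) with f(a,b,c) = 0 is at most (d-1)q + 2. -/
open MvPolynomial

noncomputable section

set_option linter.unusedSectionVars false


namespace PlaneCurve

/-- dot product -/
def dt {S : Type*} [CommRing S] (a b : Fin 3 → S) : S := a 0 * b 0 + a 1 * b 1 + a 2 * b 2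

/-- cross product -/
def crs {S : Type*} [CommRing S] (a b : Fin 3 → S) : Fin 3 → S :=
  ![a 1 * b 2 - a 2 * b 1, a 2 * b 0 - a 0 * b 2, a 0 * b 1 - a 1 * b 0]

section vec
variable {S : Type*} [CommRing S]

@[simp] lemma crs_zero (a b : Fin 3 → S) : crs a b 0 = a 1 * b 2 - a 2 * b 1 := rfl
@[simp] lemma crs_one (a b : Fin 3 → S) : crs a b 1 = a 2 * b 0 - a 0 * b 2 := rfl
@[simp] lemma crs_two (a b : Fin 3 → S) : crs a b 2 = a 0 * b 1 - a 1 * b 0 := rfl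

lemma crs_map {T : Type*} [CommRing T] (φ : S →+* T) (a b : Fin 3 → S) :
    (fun i => φ (crs a b i)) = crs (fun i => φ (a i)) (fun i => φ (b i)) := by
  funext i; fin_cases i <;> simp

lemma dt_map {T : Type*} [CommRing T] (φ : S →+* T) (a b : Fin 3 → S) :
    φ (dt a b) = dt (fun i => φ (a i)) (fun i => φ (b i)) := by
  simp [dt]

lemma dt_comm (a b : Fin 3 → S) : dt a b = dt b a := by simp [dt]; ring

lemma exists_dt_eq_one {F : Type*} [Field F] (v : Fin 3 → F) (hv : v ≠ 0) :
    ∃ b : Fin 3 → F, dt b v = 1 := by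
  obtain ⟨i, hi⟩ := Function.ne_iff.1 hv
  refine ⟨Pi.single i (v i)⁻¹, ?_⟩
  simp only [Pi.zero_apply] at hi
  fin_cases i <;> simp_all [dt]

end vec

variable {F : Type*} [Field F]

/-- constant vectors -/
def cv (v : Fin 3 → F) : Fin 3 → MvPolynomial (Fin 3) F := fun i => C (v i)

/-- the linear form with coefficients `v` -/
def lam (v : Fin 3 → F) : MvPolynomial (Fin 3) F := dt (cv v) X

/-- Taylor expansion at `p` -/
def psi (p : Fin 3 → F) : MvPolynomial (Fin 3) F →ₐ[F] Polynomial (MvPolynomial (Fin 3) F) :=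
  aeval (fun i => Polynomial.C (C (p i)) + Polynomial.X * Polynomial.C (X i))

lemma aeval_smul {S : Type*} [CommRing S] [Algebra F S] {E : MvPolynomial (Fin 3) F} {e : ℕ}
    (hE : E.IsHomogeneous e) (s : S) (g : Fin 3 → S) :
    aeval (fun i => s * g i) E = s ^ e * aeval g E := by
  rw [aeval_def, aeval_def, eval₂_eq', eval₂_eq', Finset.mul_sum]
  refine Finset.sum_congr rfl fun m hm => ?_
  have h := hE (mem_support_iff.1 hm)
  simp only [mul_pow, Finset.prod_mul_distrib, Finset.prod_pow_eq_pow_sum]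
  have h2 : ∑ i, m i = e := by
    rw [← h, Finsupp.weight_apply, Finsupp.sum_fintype] <;> simp
  rw [h2]; ring

lemma eval_smul' {E : MvPolynomial (Fin 3) F} {e : ℕ}
    (hE : E.IsHomogeneous e) (s : F) (g : Fin 3 → F) :
    eval (fun i => s * g i) E = s ^ e * eval g E := by
  have := aeval_smul hE s g
  simpa [← aeval_eq_eval] using this

/-- substituting in the Taylor expansion -/
lemma psi_subst {S : Type*} [CommRing S] [Algebra F S] (p : Fin 3 → F) (V : Fin 3 → S) (τ : S)
    (E : MvPolynomial (Fin 3) F) :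
    Polynomial.eval₂ (aeval V : MvPolynomial (Fin 3) F →ₐ[F] S).toRingHom τ (psi p E) =
      aeval (fun i => algebraMap F S (p i) + τ * V i) E := by
  have : ((Polynomial.eval₂RingHom (aeval V : MvPolynomial (Fin 3) F →ₐ[F] S).toRingHom τ).comp
      (psi p).toRingHom) = (aeval (fun i => algebraMap F S (p i) + τ * V i) :
        MvPolynomial (Fin 3) F →ₐ[F] S).toRingHom := by
    apply MvPolynomial.ringHom_ext
    · intro r
      simp [psi, Polynomial.algebraMap_apply, MvPolynomial.algebraMap_eq]
    · intro i
      simp [psi]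
      exact mul_comm _ _
  exact RingHom.congr_fun this E

lemma psi_injective (p : Fin 3 → F) : Function.Injective (psi p) := by
  rw [injective_iff_map_eq_zero]
  intro E hE
  have h := psi_subst p (fun i => X i - C (p i)) (1 : MvPolynomial (Fin 3) F) E
  rw [hE] at h
  simpa [MvPolynomial.algebraMap_eq] using h.symm

lemma psi_natDegree (p : Fin 3 → F) {E : MvPolynomial (Fin 3) F} {e : ℕ}
    (hE : E.IsHomogeneous e) : (psi p E).natDegree ≤ e := by
  rw [psi, aeval_def, eval₂_eq']
  refine Polynomial.natDegree_sum_le_of_forall_le _ _ fun m hm => ?_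
  have h := hE (mem_support_iff.1 hm)
  have h2 : ∑ i, m i = e := by
    rw [← h, Finsupp.weight_apply, Finsupp.sum_fintype] <;> simp
  rw [Polynomial.algebraMap_apply]
  refine (Polynomial.natDegree_C_mul_le _ _).trans ?_
  refine (Polynomial.natDegree_prod_le _ _).trans ?_
  rw [← h2]
  refine Finset.sum_le_sum fun i _ => ?_
  refine Polynomial.natDegree_pow_le.trans ?_
  have : (Polynomial.C (C (p i)) + Polynomial.X * Polynomial.C (X i) :
    Polynomial (MvPolynomial (Fin 3) F)).natDegree ≤ 1 := by compute_degree
  nlinarith [this, Nat.zero_le (m i)]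

lemma taylor_aux {S : Type*} [CommRing S] [IsDomain S] [Algebra F S] (p : Fin 3 → F)
    {E : MvPolynomial (Fin 3) F} {e : ℕ} (hE : E.IsHomogeneous e) (ρ l : S) (hρ : ρ ≠ 0)
    (V : Fin 3 → S) (K : Type*) [Field K] [Algebra S K] [Algebra F K] [IsScalarTower F S K]
    (hinj : Function.Injective (algebraMap S K)) :
    aeval (fun i => ρ * algebraMap F S (p i) + l * V i) E =
      ∑ k ∈ Finset.range (e + 1), ρ ^ (e - k) * l ^ k * aeval V ((psi p E).coeff k) := by
  apply hinj
  set i := algebraMap S K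
  have hρ' : i ρ ≠ 0 := fun h => hρ (hinj (by simpa using h))
  have h1 := psi_subst p (fun j => i (V j)) (i l / i ρ) E
  have h2 : i (aeval (fun j => ρ * algebraMap F S (p j) + l * V j) E) =
      aeval (fun j => i ρ * (algebraMap F K (p j) + i l / i ρ * i (V j))) E := by
    have : i (aeval (fun j => ρ * algebraMap F S (p j) + l * V j) E) =
      aeval (fun j => i (ρ * algebraMap F S (p j) + l * V j)) E :=
      (MvPolynomial.aeval_algebraMap_apply _ _ _).symm
    rw [this]
    congr 2
    funext j
    rw [map_add, map_mul, map_mul, ← IsScalarTower.algebraMap_apply F S K]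
    field_simp
  rw [h2, aeval_smul hE, ← h1, Polynomial.eval₂_eq_sum_range' _ (Nat.lt_succ_of_le
    (psi_natDegree p hE)), map_sum, Finset.mul_sum]
  refine Finset.sum_congr rfl fun k hk => ?_
  have hk : k ≤ e := by simpa [Nat.lt_succ_iff] using hk
  have h3 : (aeval (fun j => i (V j)) : MvPolynomial (Fin 3) F →ₐ[F] K).toRingHom
      ((psi p E).coeff k) = i (aeval V ((psi p E).coeff k)) := by
    exact MvPolynomial.aeval_algebraMap_apply _ _ _
  rw [h3, map_mul, map_mul, map_pow, map_pow, div_pow]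
  have : i ρ ^ e = i ρ ^ (e - k) * i ρ ^ k := by rw [← pow_add]; congr 1; omega
  rw [this]; field_simp

/-- Taylor formula for homogeneous polynomials -/
lemma taylor {S : Type*} [CommRing S] [IsDomain S] [Algebra F S] (p : Fin 3 → F)
    {E : MvPolynomial (Fin 3) F} {e : ℕ} (hE : E.IsHomogeneous e) (ρ l : S) (hρ : ρ ≠ 0)
    (V : Fin 3 → S) :
    aeval (fun i => ρ * algebraMap F S (p i) + l * V i) E =
      ∑ k ∈ Finset.range (e + 1), ρ ^ (e - k) * l ^ k * aeval V ((psi p E).coeff k) :=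
  taylor_aux p hE ρ l hρ V (FractionRing S) (IsFractionRing.injective S (FractionRing S))

lemma taylor_dvd {S : Type*} [CommRing S] [IsDomain S] [Algebra F S] (p : Fin 3 → F)
    {E : MvPolynomial (Fin 3) F} {e : ℕ} (hE : E.IsHomogeneous e) (ρ l : S) (hρ : ρ ≠ 0)
    (V : Fin 3 → S) (j : ℕ) (hj : ∀ k < j, aeval V ((psi p E).coeff k) = 0) :
    l ^ j ∣ aeval (fun i => ρ * algebraMap F S (p i) + l * V i) E := by
  rw [taylor p hE ρ l hρ]
  refine Finset.dvd_sum fun k _ => ?_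
  by_cases h : k < j
  · simp [hj k h]
  · exact Dvd.dvd.mul_right (Dvd.dvd.mul_left (pow_dvd_pow _ (by omega)) _) _

end PlaneCurve



namespace PlaneCurve
variable {F : Type*} [Field F]

lemma psi_zero_hom {E : MvPolynomial (Fin 3) F} {e : ℕ} (hE : E.IsHomogeneous e) :
    psi 0 E = Polynomial.monomial e E := by
  have h := aeval_smul hE (Polynomial.X : Polynomial (MvPolynomial (Fin 3) F))
    (fun i => Polynomial.C (X i))
  have h2 : psi (0 : Fin 3 → F) = aeval (fun i => Polynomial.X * Polynomial.C (X i)) := by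
    rw [psi]; congr 1; funext i; simp
  rw [h2, h]
  have h3 : aeval (fun i => Polynomial.C (X i)) E = Polynomial.C E := by
    have := MvPolynomial.aeval_algebraMap_apply (Polynomial (MvPolynomial (Fin 3) F)) (X : Fin 3 → MvPolynomial (Fin 3) F) E
    simpa [Function.comp_def] using this
  rw [h3, ← Polynomial.C_mul_X_pow_eq_monomial, mul_comm]

lemma psi_zero_coeff (E : MvPolynomial (Fin 3) F) (k : ℕ) :
    (psi 0 E).coeff k = homogeneousComponent k E := by
  conv_lhs => rw [← sum_homogeneousComponent E]
  rw [map_sum, Polynomial.finsetSum_coeff]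
  simp_rw [psi_zero_hom (homogeneousComponent_isHomogeneous _ E), Polynomial.coeff_monomial]
  simp only [Finset.sum_ite_eq', Finset.mem_range]
  split_ifs with h
  · rfl
  · rw [homogeneousComponent_eq_zero]; omega

lemma hom_of_mul {f g h : MvPolynomial (Fin 3) F} {d : ℕ} (hf : f.IsHomogeneous d) (hf0 : f ≠ 0)
    (hgh : f = g * h) : ∃ m n, m + n = d ∧ g.IsHomogeneous m ∧ h.IsHomogeneous n := by
  have hg0 : psi 0 g ≠ 0 := fun h0 => hf0 (by
    rw [hgh, psi_injective 0 (h0.trans (map_zero _).symm), zero_mul])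
  have hh0 : psi 0 h ≠ 0 := fun h0 => hf0 (by
    rw [hgh, psi_injective 0 (h0.trans (map_zero _).symm), mul_zero])
  have h1 : psi 0 g * psi 0 h = Polynomial.monomial d f := by
    rw [← map_mul, ← hgh, psi_zero_hom hf]
  have h2 := Polynomial.natDegree_mul hg0 hh0
  have h3 := Polynomial.natTrailingDegree_mul hg0 hh0
  rw [h1, Polynomial.natDegree_monomial_eq _ hf0] at h2
  rw [h1, Polynomial.natTrailingDegree_monomial hf0] at h3
  have h4 := Polynomial.natTrailingDegree_le_natDegree (psi 0 g)
  have h5 := Polynomial.natTrailingDegree_le_natDegree (psi 0 h)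
  have key : ∀ u : MvPolynomial (Fin 3) F, (psi 0 u).natTrailingDegree = (psi 0 u).natDegree →
      u.IsHomogeneous (psi 0 u).natDegree := by
    intro u hu
    have : u = homogeneousComponent (psi 0 u).natDegree u := by
      conv_lhs => rw [← sum_homogeneousComponent u]
      by_cases hm : (psi 0 u).natDegree < u.totalDegree + 1
      · refine Finset.sum_eq_single_of_mem _ (Finset.mem_range.2 hm) fun k _ hk => ?_
        rw [← psi_zero_coeff]
        rcases lt_or_gt_of_ne hk with hk | hk
        · exact Polynomial.coeff_eq_zero_of_lt_natTrailingDegree (by omega)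
        · exact Polynomial.coeff_eq_zero_of_natDegree_lt hk
      · rw [homogeneousComponent_eq_zero _ _ (by omega)]
        refine Finset.sum_eq_zero fun k hk => ?_
        rw [← psi_zero_coeff]
        simp only [Finset.mem_range] at hk
        exact Polynomial.coeff_eq_zero_of_lt_natTrailingDegree (by omega)
    rw [this]
    conv => arg 2; rw [← this]
    exact homogeneousComponent_isHomogeneous _ _
  exact ⟨_, _, h2.symm, key g (by omega), key h (by omega)⟩

lemma hom_of_dvd {f g : MvPolynomial (Fin 3) F} {d : ℕ} (hf : f.IsHomogeneous d) (hf0 : f ≠ 0)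
    (hgh : g ∣ f) : ∃ m ≤ d, g.IsHomogeneous m := by
  obtain ⟨h, hh⟩ := hgh
  obtain ⟨m, n, h1, h2, h3⟩ := hom_of_mul hf hf0 hh
  exact ⟨m, by omega, h2⟩

lemma le_of_hom_dvd {f g : MvPolynomial (Fin 3) F} {d e : ℕ} (hf : f.IsHomogeneous d) (hf0 : f ≠ 0)
    (hg : g.IsHomogeneous e) (hgh : g ∣ f) : e ≤ d := by
  obtain ⟨m, hm, h⟩ := hom_of_dvd hf hf0 hgh
  have : g ≠ 0 := fun h0 => hf0 (by rw [h0] at hgh; exact zero_dvd_iff.1 hgh)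
  rwa [hg.inj_right h this]

lemma cofactor_hom {f g h : MvPolynomial (Fin 3) F} {d e m : ℕ} (hf : f.IsHomogeneous d)
    (hf0 : f ≠ 0) (hg : g.IsHomogeneous e) (hgh : f = g * h) (hm : d = e + m) :
    h.IsHomogeneous m := by
  obtain ⟨m', n, h1, h2, h3⟩ := hom_of_mul hf hf0 hgh
  have hg0 : g ≠ 0 := fun h0 => hf0 (by rw [hgh, h0, zero_mul])
  have := hg.inj_right h2 hg0
  have : n = m := by omega
  rwa [← this]

lemma hom_zero_isUnit {f : MvPolynomial (Fin 3) F} (hf : f.IsHomogeneous 0) (hf0 : f ≠ 0) :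
    IsUnit f := by
  have h := (totalDegree_zero_iff_isHomogeneous _).2 hf
  have h2 := totalDegree_eq_zero_iff_eq_C.1 h
  have : coeff 0 f ≠ 0 := fun h0 => hf0 (by rw [h2, h0, C_0])
  rw [h2]
  exact (isUnit_iff_ne_zero.2 this).map C

lemma isUnit_hom {f : MvPolynomial (Fin 3) F} {d : ℕ} (hf : f.IsHomogeneous d) (hu : IsUnit f) :
    d = 0 := by
  have := le_of_hom_dvd (isHomogeneous_one (Fin 3) F) one_ne_zero hf (isUnit_iff_dvd_one.1 hu)
  omega

lemma dvd_of_same_deg {f g : MvPolynomial (Fin 3) F} {d : ℕ} (hf : f.IsHomogeneous d) (hf0 : f ≠ 0)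
    (hg : g.IsHomogeneous d) (h : g ∣ f) : Associated g f := by
  obtain ⟨u, hu⟩ := h
  have := cofactor_hom hf hf0 hg hu (m := 0) rfl
  have hu0 : u ≠ 0 := fun h0 => hf0 (by rw [hu, h0, mul_zero])
  obtain ⟨w, hw⟩ := hom_zero_isUnit this hu0
  exact ⟨w, by rw [hw, hu]⟩

/-! linear forms -/

lemma lam_hom (v : Fin 3 → F) : (lam v).IsHomogeneous 1 := by
  unfold lam dt cv
  exact ((isHomogeneous_C_mul_X _ _).add (isHomogeneous_C_mul_X _ _)).add (isHomogeneous_C_mul_X _ _)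

lemma eval_lam (v x : Fin 3 → F) : eval x (lam v) = dt v x := by
  simp [lam, dt, cv]

lemma coeff_lam (v : Fin 3 → F) (i : Fin 3) : eval (Pi.single i 1) (lam v) = v i := by
  rw [eval_lam]; fin_cases i <;> simp [dt]

lemma lam_injective : Function.Injective (lam : (Fin 3 → F) → _) := by
  intro v w h
  funext i
  rw [← coeff_lam v, h, coeff_lam]

lemma lam_zero : lam (0 : Fin 3 → F) = 0 := by simp [lam, dt, cv]

lemma lam_ne_zero {v : Fin 3 → F} (hv : v ≠ 0) : lam v ≠ 0 := by
  rw [← lam_zero]; exact fun h => hv (lam_injective h)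

lemma lam_prime {v : Fin 3 → F} (hv : v ≠ 0) : Prime (lam v) := by
  rw [← UniqueFactorizationMonoid.irreducible_iff_prime]
  constructor
  · intro h
    have := isUnit_hom (lam_hom v) h
    omega
  · intro a b hab
    obtain ⟨m, n, h1, h2, h3⟩ := hom_of_mul (lam_hom v) (lam_ne_zero hv) hab
    have h0 := lam_ne_zero hv
    rw [hab] at h0
    rcases Nat.eq_zero_or_pos m with rfl | hm
    · exact Or.inl (hom_zero_isUnit h2 (left_ne_zero_of_mul h0))
    · have : n = 0 := by omega
      subst this
      exact Or.inr (hom_zero_isUnit h3 (right_ne_zero_of_mul h0))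

lemma lam_smul (c : F) (v : Fin 3 → F) : lam (c • v) = C c * lam v := by
  simp [lam, dt, cv]; ring

lemma lam_dvd_lam {v w : Fin 3 → F} (hw : w ≠ 0) (h : lam v ∣ lam w) :
    ∃ c : F, c ≠ 0 ∧ w = c • v := by
  obtain ⟨u, hu⟩ := h
  have hu' := cofactor_hom (lam_hom w) (lam_ne_zero hw) (lam_hom v) hu (m := 0) rfl
  have h2 := totalDegree_eq_zero_iff_eq_C.1 ((totalDegree_zero_iff_isHomogeneous _).2 hu')
  have h3 : w = (coeff 0 u) • v := by
    apply lam_injective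
    rw [lam_smul, hu, mul_comm, ← h2]
  refine ⟨_, fun h0 => hw ?_, h3⟩
  rw [h3, h0, zero_smul]

lemma hom_one_eq_lam {g : MvPolynomial (Fin 3) F} (hg : g.IsHomogeneous 1) : ∃ v, g = lam v := by
  have : g ∈ homogeneousSubmodule (Fin 3) F 1 := hg
  rw [homogeneousSubmodule_one_eq_span_X] at this
  induction this using Submodule.span_induction with
  | mem x hx =>
    obtain ⟨i, rfl⟩ := hx
    refine ⟨Pi.single i 1, ?_⟩
    fin_cases i <;> simp [lam, dt, cv]
  | zero => exact ⟨0, lam_zero.symm⟩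
  | add x y hx hy h1 h2 =>
    have hx' : x.IsHomogeneous 1 := by
      rw [← mem_homogeneousSubmodule, homogeneousSubmodule_one_eq_span_X]; exact hx
    have hy' : y.IsHomogeneous 1 := by
      rw [← mem_homogeneousSubmodule, homogeneousSubmodule_one_eq_span_X]; exact hy
    obtain ⟨v, rfl⟩ := h1 hx'
    obtain ⟨w, rfl⟩ := h2 hy'
    exact ⟨v + w, by simp [lam, dt, cv]; ring⟩
  | smul a x hx h1 =>
    have hx' : x.IsHomogeneous 1 := by
      rw [← mem_homogeneousSubmodule, homogeneousSubmodule_one_eq_span_X]; exact hx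
    obtain ⟨v, rfl⟩ := h1 hx'
    exact ⟨a • v, by rw [lam_smul, smul_eq_C_mul]⟩

end PlaneCurve



namespace PlaneCurve
variable {F : Type*} [Field F] [Fintype F]

lemma q_ge_two : 2 ≤ Fintype.card F := Fintype.one_lt_card

lemma add_powq {S : Type*} [CommRing S] [Algebra F S] (a b : S) :
    (a + b) ^ Fintype.card F = a ^ Fintype.card F + b ^ Fintype.card F := by
  have := map_add (FiniteField.frobeniusAlgHom F S) a b
  simpa using this

lemma sub_powq {S : Type*} [CommRing S] [Algebra F S] (a b : S) :
    (a - b) ^ Fintype.card F = a ^ Fintype.card F - b ^ Fintype.card F := by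
  have := map_sub (FiniteField.frobeniusAlgHom F S) a b
  simpa using this

/-- raise the coordinates to the q-th power -/
def pq (F : Type*) [Field F] [Fintype F] {S : Type*} [CommRing S] (a : Fin 3 → S) : Fin 3 → S :=
  fun i => a i ^ Fintype.card F

lemma pq_crs {S : Type*} [CommRing S] [Algebra F S] (a b : Fin 3 → S) :
    pq F (crs a b) = crs (pq F a) (pq F b) := by
  funext i
  fin_cases i <;> simp [pq, sub_powq, mul_pow]

lemma dt_powq {S : Type*} [CommRing S] [Algebra F S] (a b : Fin 3 → S) :
    (dt a b) ^ Fintype.card F = dt (pq F a) (pq F b) := by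
  simp [dt, pq, add_powq, mul_pow]

lemma pq_cv (v : Fin 3 → F) : pq F (cv v) = cv v := by
  funext i; simp [pq, cv, ← C_pow, FiniteField.pow_card]

lemma aeval_pq (E : MvPolynomial (Fin 3) F) :
    aeval (pq F (X : Fin 3 → MvPolynomial (Fin 3) F)) E = E ^ Fintype.card F := by
  have : (aeval (pq F (X : Fin 3 → MvPolynomial (Fin 3) F))) =
      FiniteField.frobeniusAlgHom F (MvPolynomial (Fin 3) F) := by
    apply MvPolynomial.algHom_ext
    intro i
    simp [pq]
  rw [this]; simp

/-- the vector `X × X^q` -/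
def Av (F : Type*) [Field F] [Fintype F] : Fin 3 → MvPolynomial (Fin 3) F := crs X (pq F X)

/-- substitution `X ↦ X × X^q` -/
def alp (F : Type*) [Field F] [Fintype F] : MvPolynomial (Fin 3) F →ₐ[F] MvPolynomial (Fin 3) F :=
  aeval (Av F)

/-- the Moore determinant -/
def Del (F : Type*) [Field F] [Fintype F] : MvPolynomial (Fin 3) F :=
  dt (pq F (pq F X)) (crs X (pq F X))

lemma alp_X (i : Fin 3) : alp F (X i) = Av F i := by simp [alp]

lemma alp_pq (a : Fin 3 → MvPolynomial (Fin 3) F) :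
    (fun i => alp F (pq F a i)) = pq F (fun i => alp F (a i)) := by
  funext i; simp [pq]

lemma alp_Av : (fun i => alp F (Av F i)) = fun i => Del F * pq F X i := by
  have h1 : (fun i => alp F (Av F i)) = crs (Av F) (pq F (Av F)) := by
    have := crs_map (alp F).toRingHom X (pq F X)
    simp only [AlgHom.toRingHom_eq_coe, RingHom.coe_coe] at this
    rw [Av, this, alp_pq]
    simp only [alp_X]
    rfl
  rw [h1, Av, pq_crs, Del]
  generalize (pq F (X : Fin 3 → MvPolynomial (Fin 3) F)) = Y
  generalize pq F Y = Z
  funext i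
  fin_cases i <;> simp [dt] <;> ring

lemma alp_alp {E : MvPolynomial (Fin 3) F} {e : ℕ} (hE : E.IsHomogeneous e) :
    alp F (alp F E) = Del F ^ e * E ^ Fintype.card F := by
  have h1 : alp F (alp F E) = aeval (fun i => alp F (Av F i)) E := by
    conv_lhs => rw [alp]
    rw [← AlgHom.comp_apply, comp_aeval]
    rfl
  rw [h1, alp_Av, aeval_smul hE, aeval_pq]

lemma alp_Del : alp F (Del F) = Del F ^ (Fintype.card F + 1) := by
  have h0 : Del F = dt (Av F) (pq F (pq F X)) := dt_comm _ _
  have h1 : alp F (Del F) = dt (fun i => alp F (Av F i)) (pq F (pq F (Av F))) := by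
    have := dt_map (alp F).toRingHom (Av F) (pq F (pq F X))
    simp only [AlgHom.toRingHom_eq_coe, RingHom.coe_coe] at this
    rw [h0, this, alp_pq, alp_pq]
    simp only [alp_X]
  rw [h1, alp_Av, pow_succ]
  conv_rhs => arg 1; rw [Del, dt_powq, ← Av]
  rw [Av, pq_crs, pq_crs]
  generalize (pq F (X : Fin 3 → MvPolynomial (Fin 3) F)) = Y
  generalize pq F Y = Z
  generalize pq F Z = W
  simp [dt]; ring

lemma Del_hom : (Del F).IsHomogeneous (Fintype.card F ^ 2 + Fintype.card F + 1) := by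
  set q := Fintype.card F
  have hX : ∀ i : Fin 3, (X i : MvPolynomial (Fin 3) F).IsHomogeneous 1 := isHomogeneous_X _
  have h1 : ∀ i, (pq F (X : Fin 3 → MvPolynomial (Fin 3) F) i).IsHomogeneous q := fun i => by
    have := (hX i).pow q
    rwa [one_mul] at this
  have h2 : ∀ i, (pq F (pq F (X : Fin 3 → MvPolynomial (Fin 3) F)) i).IsHomogeneous (q ^ 2) :=
    fun i => by
      have := (h1 i).pow q
      rwa [← sq] at this
  have h3 : ∀ i j k, (pq F (pq F (X : Fin 3 → MvPolynomial (Fin 3) F)) i *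
      (X j * pq F X k)).IsHomogeneous (q ^ 2 + q + 1) := fun i j k => by
    have := (h2 i).mul ((hX j).mul (h1 k))
    rwa [add_comm 1 q, ← add_assoc] at this
  simp only [Del, dt, crs_zero, crs_one, crs_two, mul_sub]
  exact (((h3 _ _ _).sub (h3 _ _ _)).add ((h3 _ _ _).sub (h3 _ _ _))).add
    ((h3 _ _ _).sub (h3 _ _ _))

lemma Av_hom (i : Fin 3) : (Av F i).IsHomogeneous (Fintype.card F + 1) := by
  have hX : ∀ i : Fin 3, (X i : MvPolynomial (Fin 3) F).IsHomogeneous 1 := isHomogeneous_X _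
  have h1 : ∀ i, (pq F (X : Fin 3 → MvPolynomial (Fin 3) F) i).IsHomogeneous (Fintype.card F) :=
    fun i => by
      have := (hX i).pow (Fintype.card F)
      rwa [one_mul] at this
  have h3 : ∀ j k, (X j * pq F X k : MvPolynomial (Fin 3) F).IsHomogeneous
      (Fintype.card F + 1) := fun j k => by
    rw [add_comm]; exact (hX j).mul (h1 k)
  have h4 : ∀ j k, (pq F X j * X k : MvPolynomial (Fin 3) F).IsHomogeneous
      (Fintype.card F + 1) := fun j k => (h1 j).mul (hX k)
  fin_cases i
  · exact (h3 _ _).sub (h3 _ _)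
  · exact (h3 _ _).sub (h3 _ _)
  · exact (h3 _ _).sub (h3 _ _)

lemma alp_hom {E : MvPolynomial (Fin 3) F} {e : ℕ} (hE : E.IsHomogeneous e) :
    (alp F E).IsHomogeneous ((Fintype.card F + 1) * e) :=
  hE.aeval _ Av_hom

lemma Del_ne_zero : Del F ≠ 0 := by
  intro h
  set q := Fintype.card F with hq
  have hq2 : 2 ≤ q := q_ge_two
  have h1 := congrArg (aeval (![1, Polynomial.X, Polynomial.X ^ (q ^ 2)] : Fin 3 → Polynomial F)) h
  simp only [Del, dt, pq, crs_zero, crs_one, crs_two, map_add, map_mul, map_sub, map_pow, aeval_X,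
    map_zero, ← hq] at h1
  simp only [Matrix.cons_val_zero, Matrix.cons_val_one, Matrix.cons_val, one_pow, one_mul,
    ← pow_mul, mul_sub, ← pow_add, mul_one, ← pow_succ, ← pow_succ'] at h1
  have h2 := congrArg (fun P => Polynomial.coeff P (q ^ 4 + q)) h1
  simp only [Polynomial.coeff_add, Polynomial.coeff_sub, Polynomial.coeff_X_pow,
    Polynomial.coeff_zero] at h2
  have a1 : q ^ 4 ≥ 2 * q ^ 3 := by nlinarith [pow_pos (show 0 < q by omega) 3]
  have a2 : q ^ 3 ≥ 2 * q ^ 2 := by nlinarith [pow_pos (show 0 < q by omega) 2]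
  have a3 : q ^ 2 ≥ 2 * q := by nlinarith
  ring_nf at h2
  split_ifs at h2 <;> first | omega | simp_all

lemma alp_eq_zero {E : MvPolynomial (Fin 3) F} {e : ℕ} (hE : E.IsHomogeneous e)
    (h : alp F E = 0) : E = 0 := by
  have := alp_alp hE
  rw [h, map_zero] at this
  rcases mul_eq_zero.1 this.symm with h | h
  · exact absurd h (pow_ne_zero _ Del_ne_zero)
  · exact eq_zero_of_pow_eq_zero h

lemma lam_powq (v : Fin 3 → F) : lam v ^ Fintype.card F = dt (cv v) (pq F X) := by
  rw [lam, dt_powq, pq_cv]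

lemma lam_dvd_Del {v : Fin 3 → F} (hv : v ≠ 0) : lam v ∣ Del F := by
  obtain ⟨b, hb⟩ := exists_dt_eq_one v hv
  have hq2 : 2 ≤ Fintype.card F := q_ge_two
  have h1 := lam_powq v
  have h2 : (lam v ^ Fintype.card F) ^ Fintype.card F = dt (cv v) (pq F (pq F X)) := by
    rw [lam_powq, dt_powq, pq_cv]
  have d1 : lam v ∣ dt (cv v) (pq F X) := h1 ▸ dvd_pow_self _ (by omega)
  have d2 : lam v ∣ dt (cv v) (pq F (pq F X)) :=
    h2 ▸ dvd_pow (dvd_pow_self _ (by omega)) (by omega)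
  have hb' : dt (cv b) (cv v) = 1 := by
    rw [← C_1, ← hb, dt_map (C : F →+* MvPolynomial (Fin 3) F)]; rfl
  have key : Del F = lam v * dt (cv b) (crs (pq F X) (pq F (pq F X))) +
      dt (cv v) (pq F X) * dt (cv b) (crs (pq F (pq F X)) X) +
      dt (cv v) (pq F (pq F X)) * dt (cv b) (crs X (pq F X)) := by
    rw [← one_mul (Del F), ← hb', Del, lam]
    generalize (pq F (X : Fin 3 → MvPolynomial (Fin 3) F)) = Y
    generalize pq F Y = Z
    simp [dt]; ring
  rw [key]
  exact dvd_add (dvd_add (dvd_mul_right _ _) (d1.mul_right _)) (d2.mul_right _)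

/-- restriction to the line `ℓ` -/
def kap (l : Fin 3 → F) : MvPolynomial (Fin 3) F →ₐ[F] MvPolynomial (Fin 3) F :=
  aeval (crs X (cv l))

lemma psi_alp (p : Fin 3 → F) {E : MvPolynomial (Fin 3) F} {e : ℕ} (hE : E.IsHomogeneous e) :
    ∃ P, psi p (alp F E) = Polynomial.X ^ e * P ∧ P.coeff 0 = kap p E := by
  have hq2 : 2 ≤ Fintype.card F := q_ge_two
  obtain ⟨r, hr⟩ : ∃ r, Fintype.card F = r + 2 := ⟨_, (Nat.sub_add_cancel hq2).symm⟩
  let cp : Fin 3 → Polynomial (MvPolynomial (Fin 3) F) := fun i => Polynomial.C (C (p i))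
  let cx : Fin 3 → Polynomial (MvPolynomial (Fin 3) F) := fun i => Polynomial.C (X i)
  let T : Polynomial (MvPolynomial (Fin 3) F) := Polynomial.X
  let U : Fin 3 → Polynomial (MvPolynomial (Fin 3) F) :=
    fun i => crs cx cp i + T ^ (r + 1) * crs cp (pq F cx) i + T ^ (r + 2) * crs cx (pq F cx) i
  have hA : (fun i => psi p (Av F i)) = fun i => T * U i := by
    have h1 : (fun i => psi p (X i)) = fun i => cp i + T * cx i := by
      funext i; simp [psi, cp, cx, T]
    have h2 : (fun i => psi p (pq F X i)) = fun i => cp i + T ^ (r + 2) * pq F cx i := by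
      funext i
      have := congrFun h1 i
      simp only [pq, map_pow, this, add_powq, mul_pow]
      have : cp i ^ Fintype.card F = cp i := by
        simp [cp, ← Polynomial.C_pow, ← C_pow, FiniteField.pow_card]
      rw [this, hr]
    have := crs_map (psi p).toRingHom X (pq F X)
    simp only [AlgHom.toRingHom_eq_coe, RingHom.coe_coe] at this
    rw [Av, this, h1, h2]
    simp only [U]
    generalize pq F cx = Y
    funext i
    fin_cases i <;> simp <;> ring
  have h3 : psi p (alp F E) = aeval (fun i => psi p (Av F i)) E := by
    rw [alp, ← AlgHom.comp_apply, comp_aeval]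
  refine ⟨aeval U E, ?_, ?_⟩
  · rw [h3, hA, aeval_smul hE]
  · rw [← Polynomial.constantCoeff_apply, kap]
    have : (Polynomial.constantCoeff).comp (aeval U : _ →ₐ[F] _).toRingHom =
       (aeval (crs X (cv p)) : MvPolynomial (Fin 3) F →ₐ[F] _).toRingHom := by
      apply MvPolynomial.ringHom_ext
      · intro a; simp [Polynomial.algebraMap_apply, MvPolynomial.algebraMap_eq]
      · intro i
        simp [U, T]
        fin_cases i <;> simp [cx, cp, cv]
    exact RingHom.congr_fun this E

lemma lam_pow_dvd_alp {l : Fin 3 → F} (hl : l ≠ 0) {E : MvPolynomial (Fin 3) F} {e : ℕ}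
    (hE : E.IsHomogeneous e) {j : ℕ} (hj : ∀ k < j, (psi l E).coeff k = 0) :
    lam l ^ j ∣ alp F E := by
  obtain ⟨b, hb⟩ := exists_dt_eq_one l hl
  have hb0 : b ≠ 0 := by rintro rfl; simp [dt] at hb
  have hq2 : 2 ≤ Fintype.card F := q_ge_two
  obtain ⟨r, hr⟩ : ∃ r, Fintype.card F = r + 1 := ⟨_, (Nat.sub_add_cancel (by omega)).symm⟩
  have hb' : dt (cv b) (cv l) = 1 := by
    rw [← C_1, ← hb, dt_map (C : F →+* MvPolynomial (Fin 3) F)]; rfl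
  have hρ : dt (cv b) (Av F) ≠ 0 := by
    have : dt (cv b) (Av F) = alp F (lam b) := by
      simp [lam, dt, cv, alp_X, alp]
    rw [this]
    exact fun h => lam_ne_zero hb0 (alp_eq_zero (lam_hom b) h)
  let V : Fin 3 → MvPolynomial (Fin 3) F :=
    crs (cv b) (fun i => pq F X i - lam l ^ r * X i)
  have h := taylor_dvd l hE (dt (cv b) (Av F)) (lam l) hρ V j (fun k hk => by simp [hj k hk])
  convert h using 1
  rw [alp]
  congr 2
  funext i
  have h4 : (lam l) * lam l ^ r = dt (cv l) (pq F X) := by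
    rw [← pow_succ', ← hr, lam_powq]
  have h5 : Av F i = Av F i * dt (cv b) (cv l) := by rw [hb', mul_one]
  have h6 : (algebraMap F (MvPolynomial (Fin 3) F)) (l i) = cv l i := rfl
  rw [h5, h6]
  simp only [V, Av]
  generalize (pq F (X : Fin 3 → MvPolynomial (Fin 3) F)) = Y at *
  have h7 : lam l * crs (cv b) (fun i => Y i - lam l ^ r * X i) i =
      lam l * crs (cv b) Y i - (lam l * lam l ^ r) * crs (cv b) X i := by
    fin_cases i <;> simp <;> ring
  rw [h7, h4, lam]
  fin_cases i <;> simp [dt] <;> ring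

end PlaneCurve



namespace PlaneCurve
variable {F : Type*} [Field F] [Fintype F]

/-- The projective plane. -/
abbrev PP (F : Type*) [Field F] := Projectivization F (Fin 3 → F)

/-- incidence of a point and a line -/
def inc (p l : PP F) : Prop := dt p.rep l.rep = 0

instance : Finite (PP F) := inferInstance
instance : Fintype (PP F) := Fintype.ofFinite _

lemma inc_comm (p l : PP F) : inc p l ↔ inc l p := by
  unfold inc; rw [dt_comm]

open Configuration in
lemma mem_iff_inc (p l : PP F) : p ∈ l ↔ inc p l := by
  rw [ofField.mem_iff]
  conv_lhs => rw [← p.mk_rep, ← l.mk_rep]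
  rw [Projectivization.orthogonal_mk, inc, dt, dotProduct, Fin.sum_univ_three]

lemma card_PP : Fintype.card (PP F) = Fintype.card F ^ 2 + Fintype.card F + 1 := by
  rw [← Nat.card_eq_fintype_card, Projectivization.card_of_finrank F (Fin 3 → F) (n := 3) (by simp)]
  simp [Finset.sum_range_succ]; ring

open Classical in
lemma card_lines_through (p : PP F) :
    (Finset.univ.filter (fun l : PP F => inc p l)).card = Fintype.card F + 1 := by
  have h1 := Configuration.ProjectivePlane.card_points (PP F) (PP F)
  have h2 := Configuration.ProjectivePlane.lineCount_eq (P := PP F) (PP F) p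
  rw [card_PP] at h1
  have h3 : Configuration.ProjectivePlane.order (PP F) (PP F) = Fintype.card F := by
    by_contra h
    rcases lt_or_gt_of_ne h with h | h <;> nlinarith
  rw [h3, Configuration.lineCount, Nat.card_eq_fintype_card, Fintype.card_subtype] at h2
  rw [← h2]
  congr 1
  ext l
  simp [mem_iff_inc]

open Classical in
lemma card_lines_through_two {p p' : PP F} (h : p ≠ p') :
    (Finset.univ.filter (fun l : PP F => inc p l ∧ inc p' l)).card = 1 := by
  obtain ⟨l, hl, hu⟩ := Configuration.HasLines.existsUnique_line (PP F) (PP F) p p' h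
  rw [Finset.card_eq_one]
  refine ⟨l, ?_⟩
  ext m
  simp only [Finset.mem_filter, Finset.mem_univ, true_and, Finset.mem_singleton]
  constructor
  · rintro ⟨h1, h2⟩
    exact hu m ⟨(mem_iff_inc _ _).2 h1, (mem_iff_inc _ _).2 h2⟩
  · rintro rfl
    exact ⟨(mem_iff_inc _ _).1 hl.1, (mem_iff_inc _ _).1 hl.2⟩

lemma exists_line_through_not {p p' : PP F} (h : p ≠ p') : ∃ l : PP F, inc p' l ∧ ¬ inc p l := by
  classical
  by_contra hcon
  push Not at hcon
  have h1 := card_lines_through p'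
  have h2 := card_lines_through_two h
  have : (Finset.univ.filter (fun l : PP F => inc p' l)) =
    (Finset.univ.filter (fun l : PP F => inc p l ∧ inc p' l)) := by
    ext l; simp only [Finset.mem_filter, Finset.mem_univ, true_and]
    exact ⟨fun hl => ⟨hcon l hl, hl⟩, fun hl => hl.2⟩
  rw [this, h2] at h1
  have : 2 ≤ Fintype.card F := q_ge_two
  omega

open Classical in
/-- number of points of `S` on the line `l` -/
def cnt (S : Finset (PP F)) (l : PP F) : ℕ := (S.filter (fun p => inc p l)).card

open Classical in
lemma sum_cnt_mul (S : Finset (PP F)) (g : PP F → ℤ) :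
    ∑ l : PP F, (cnt S l : ℤ) * g l =
      ∑ p ∈ S, ∑ l ∈ Finset.univ.filter (fun l : PP F => inc p l), g l := by
  simp_rw [Finset.sum_filter]
  rw [Finset.sum_comm]
  refine Finset.sum_congr rfl fun l _ => ?_
  rw [← Finset.sum_filter, Finset.sum_const, cnt, nsmul_eq_mul]

open Classical in
lemma sum_cnt_through (S : Finset (PP F)) {p : PP F} (hp : p ∈ S) :
    ∑ l ∈ Finset.univ.filter (fun l : PP F => inc p l), (cnt S l : ℤ) =
      Fintype.card F + S.card := by
  have h1 : ∀ l, (cnt S l : ℤ) = ∑ p' ∈ S, if inc p' l then 1 else 0 := by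
    intro l; rw [cnt]; simp
  simp_rw [h1]
  rw [Finset.sum_comm]
  have h2 : ∀ p' ∈ S, (∑ l ∈ Finset.univ.filter (fun l : PP F => inc p l),
      if inc p' l then (1 : ℤ) else 0) = if p' = p then (Fintype.card F : ℤ) + 1 else 1 := by
    intro p' _
    rw [← Finset.sum_filter, Finset.filter_filter]
    simp only [Finset.sum_const, nsmul_eq_mul, mul_one]
    split_ifs with h
    · subst h
      simp only [and_self]
      rw [card_lines_through]; simp
    · rw [card_lines_through_two (fun h' => h h'.symm)]; simp
  rw [Finset.sum_congr rfl h2]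
  have h3 : ∀ p', (if p' = p then (Fintype.card F : ℤ) + 1 else 1) =
    (if p' = p then (Fintype.card F : ℤ) else 0) + 1 := by intro p'; split_ifs <;> ring
  simp_rw [h3, Finset.sum_add_distrib, Finset.sum_ite_eq', if_pos hp]
  simp

lemma sum_cnt (S : Finset (PP F)) :
    ∑ l : PP F, (cnt S l : ℤ) = S.card * (Fintype.card F + 1) := by
  classical
  have := sum_cnt_mul S (fun _ => 1)
  simp only [mul_one] at this
  rw [this]
  simp_rw [Finset.sum_const, card_lines_through]
  simp

lemma sum_cnt_sq (S : Finset (PP F)) :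
    ∑ l : PP F, (cnt S l : ℤ) ^ 2 = S.card * (Fintype.card F + S.card) := by
  classical
  have := sum_cnt_mul S (fun l => cnt S l)
  simp_rw [sq, this]
  rw [Finset.sum_congr rfl (fun p hp => sum_cnt_through S hp)]
  simp

lemma lam_rep_rel {p p' : PP F} (h : p ≠ p') : ¬ lam p.rep ∣ lam p'.rep := by
  intro hd
  obtain ⟨c, hc, h2⟩ := lam_dvd_lam p'.rep_nonzero hd
  apply h
  rw [← p.mk_rep, ← p'.mk_rep, Projectivization.mk_eq_mk_iff']
  exact ⟨c⁻¹, by rw [h2, smul_smul, inv_mul_cancel₀ hc, one_smul]⟩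

lemma isRelPrime_of_prime {a b : MvPolynomial (Fin 3) F} (ha : Prime a) (h : ¬ a ∣ b) :
    IsRelPrime a b := ha.irreducible.isRelPrime_iff_not_dvd.2 h

lemma prod_lam_dvd (S : Finset (PP F)) {g : MvPolynomial (Fin 3) F}
    (h : ∀ p ∈ S, lam p.rep ∣ g) : ∏ p ∈ S, lam p.rep ∣ g := by
  apply Finset.prod_dvd_of_isRelPrime _ h
  intro a _ b _ hab
  exact isRelPrime_of_prime (lam_prime a.rep_nonzero) (lam_rep_rel hab)

lemma prod_lam_hom (S : Finset (PP F)) : (∏ p ∈ S, lam p.rep).IsHomogeneous S.card := by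
  have := IsHomogeneous.prod S (fun p : PP F => lam p.rep) (fun _ => 1) (fun p _ => lam_hom p.rep)
  simpa using this

lemma prod_lam_pow_dvd (S : Finset (PP F)) {g : MvPolynomial (Fin 3) F} (n : PP F → ℕ)
    (h : ∀ p ∈ S, lam p.rep ^ n p ∣ g) : ∏ p ∈ S, lam p.rep ^ n p ∣ g := by
  apply Finset.prod_dvd_of_isRelPrime _ h
  intro a _ b _ hab
  exact (isRelPrime_of_prime (lam_prime a.rep_nonzero) (lam_rep_rel hab)).pow

lemma prod_lam_pow_hom (S : Finset (PP F)) (n : PP F → ℕ) :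
    (∏ p ∈ S, lam p.rep ^ n p).IsHomogeneous (∑ p ∈ S, n p) := by
  refine IsHomogeneous.prod S (fun p : PP F => lam p.rep ^ n p) n (fun p _ => ?_)
  have := (lam_hom p.rep).pow (n p)
  rwa [one_mul] at this

lemma prime_dvd_prod_lam (S : Finset (PP F)) {g : MvPolynomial (Fin 3) F} (hg : Prime g)
    (h : g ∣ ∏ p ∈ S, lam p.rep) : ∃ p ∈ S, Associated g (lam p.rep) := by
  obtain ⟨p, hp, h⟩ := (hg.dvd_finset_prod_iff _).1 h
  exact ⟨p, hp, hg.associated_of_dvd (lam_prime p.rep_nonzero) h⟩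

lemma prime_dvd_Del {g : MvPolynomial (Fin 3) F} (hg : Prime g)
    (h : g ∣ Del F) : ∃ p : PP F, Associated g (lam p.rep) := by
  have h1 : ∏ p : PP F, lam p.rep ∣ Del F :=
    prod_lam_dvd _ (fun p _ => lam_dvd_Del p.rep_nonzero)
  have h2 := prod_lam_hom (Finset.univ : Finset (PP F))
  rw [Finset.card_univ, card_PP] at h2
  have h3 := dvd_of_same_deg Del_hom Del_ne_zero h2 h1
  obtain ⟨p, _, hp⟩ := prime_dvd_prod_lam _ hg (h.trans h3.symm.dvd)
  exact ⟨p, hp⟩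

end PlaneCurve

namespace PlaneCurve
variable {F : Type*} [Field F]
lemma finrank_hom (n : ℕ) : 2 * Module.finrank F (homogeneousSubmodule (Fin 3) F n) = (n + 1) * (n + 2) := by
  have h1 : Module.finrank F (homogeneousSubmodule (Fin 3) F n) =
    ((Finset.univ : Finset (Fin 3)).finsuppAntidiag n).card := by
    rw [homogeneousSubmodule_eq_finsupp_supported]
    have e := AddMonoidAlgebra.supportedEquivFinsupp (S := F) (R := F) {d : Fin 3 →₀ ℕ | d.degree = n}
    have hs : {d : Fin 3 →₀ ℕ | d.degree = n} = (((Finset.univ : Finset (Fin 3)).finsuppAntidiag n : Finset (Fin 3 →₀ ℕ)) : Set (Fin 3 →₀ ℕ)) := by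
      ext d
      simp [Finset.mem_finsuppAntidiag, Finsupp.degree_eq_sum]
    have e2 := LinearEquiv.finrank_eq e
    rw [hs] at e2 ⊢
    refine Eq.trans e2 ?_
    rw [Module.finrank_finsupp_self]
    simp
  rw [h1, Finset.card_finsuppAntidiag_nat_eq_choose]
  simp
  rw [add_comm 2 n, Nat.choose_symm_add, Nat.choose_two_right]
  have h2 : 2 ∣ (n + 2) * (n + 2 - 1) := (Nat.even_mul_pred_self (n+2)).two_dvd
  rw [Nat.mul_div_cancel' h2]
  simp; ring

lemma psi_coeff_hom (p : Fin 3 → F) (E : MvPolynomial (Fin 3) F) (k : ℕ) :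
    ((psi p E).coeff k).IsHomogeneous k := by
  induction E using MvPolynomial.induction_on generalizing k with
  | C a =>
    have : psi p (C a) = Polynomial.C (C a) := by
      simp [psi, Polynomial.algebraMap_apply, MvPolynomial.algebraMap_eq]
    rw [this, Polynomial.coeff_C]
    split_ifs with h
    · subst h; exact isHomogeneous_C _ _
    · exact isHomogeneous_zero _ _ _
  | add a b ha hb => rw [map_add, Polynomial.coeff_add]; exact (ha k).add (hb k)
  | mul_X a i ha =>
    have : psi p (a * X i) = psi p a * Polynomial.C (C (p i)) +
        psi p a * Polynomial.C (X i) * Polynomial.X := by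
      rw [map_mul]
      have : psi p (X i) = Polynomial.C (C (p i)) + Polynomial.X * Polynomial.C (X i) := by simp [psi]
      rw [this]; ring
    rw [this, Polynomial.coeff_add, Polynomial.coeff_mul_C]
    refine IsHomogeneous.add ?_ ?_
    · have := (ha k).mul (isHomogeneous_C (Fin 3) (p i)); simpa using this
    · cases k with
      | zero => simp [isHomogeneous_zero]
      | succ k =>
        rw [Polynomial.coeff_mul_X, Polynomial.coeff_mul_C]
        exact (ha k).mul (isHomogeneous_X _ _)

lemma psi_lam (p v : Fin 3 → F) : psi p (lam v) = Polynomial.C (C (dt v p)) +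
    Polynomial.X * Polynomial.C (lam v) := by
  simp [psi, lam, dt, cv, Polynomial.algebraMap_apply, MvPolynomial.algebraMap_eq]; ring

lemma psi_coeff_zero (p : Fin 3 → F) (E : MvPolynomial (Fin 3) F) :
    (psi p E).coeff 0 = C (eval p E) := by
  have := psi_subst p (0 : Fin 3 → MvPolynomial (Fin 3) F) 0 E
  have h := psi_coeff_hom p E 0
  have h2 := totalDegree_eq_zero_iff_eq_C.1 ((totalDegree_zero_iff_isHomogeneous _).2 h)
  rw [Polynomial.eval₂_at_zero, h2] at this
  rw [h2]
  simp [MvPolynomial.algebraMap_eq] at this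
  rw [this]
  exact MvPolynomial.aeval_algebraMap_apply _ _ _


lemma local_indep (p : Fin 3 → F) {f : MvPolynomial (Fin 3) F} (hf0 : (psi p f).coeff 0 = 0)
    (hf1 : (psi p f).coeff 1 ≠ 0) (β x0 : Fin 3 → F) (hβ : dt β p = 0)
    (hx : eval x0 ((psi p f).coeff 1) = 0) (hβx : dt β x0 ≠ 0) (w : ℕ → MvPolynomial (Fin 3) F)
    (c : ℕ → F) (m : ℕ) (hw : ∀ i < m, eval p (w i) ≠ 0)
    (G : MvPolynomial (Fin 3) F)
    (h : Polynomial.X ^ m ∣ psi p (∑ i ∈ Finset.range m, C (c i) * (w i * lam β ^ i) + f * G)) :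
    ∀ i < m, c i = 0 := by
  intro i
  induction i using Nat.strong_induction_on with
  | _ i ih =>
  intro him
  rw [Polynomial.X_pow_dvd_iff] at h
  have hC : ∀ a : F, psi p (C a) = Polynomial.C (C a) := fun a => by
    simp [psi, Polynomial.algebraMap_apply, MvPolynomial.algebraMap_eq]
  have hβ' : psi p (lam β) = Polynomial.X * Polynomial.C (lam β) := by
    rw [psi_lam, hβ]; simp
  -- coefficients of the first sum
  have key : ∀ k ≤ i, (psi p (∑ i ∈ Finset.range m, C (c i) * (w i * lam β ^ i))).coeff k =
      if k = i then C (c i * eval p (w i)) * lam β ^ i else 0 := by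
    intro k hk
    rw [map_sum, Polynomial.finsetSum_coeff]
    have hterm : ∀ j ∈ Finset.range m, (psi p (C (c j) * (w j * lam β ^ j))).coeff k =
        if j = i then (if k = i then C (c i * eval p (w i)) * lam β ^ i else 0) else 0 := by
      intro j hj
      rcases lt_trichotomy j i with hji | rfl | hji
      · rw [if_neg (by omega), ih j hji (by omega)]; simp
      · rw [if_pos rfl, map_mul, map_mul, map_pow, hC, hβ', mul_pow]
        have : Polynomial.C (C (c j)) * (psi p (w j) * (Polynomial.X ^ j *
          Polynomial.C (lam β) ^ j)) = Polynomial.C (C (c j)) * (psi p (w j) *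
          Polynomial.C (lam β ^ j) * (Polynomial.X ^ j)) := by rw [map_pow]; ring
        rw [this, Polynomial.coeff_C_mul, Polynomial.coeff_mul_X_pow']
        split_ifs with h1 h2 h2
        · subst h2; rw [Nat.sub_self, Polynomial.coeff_mul_C, psi_coeff_zero, C_mul]; ring
        · omega
        · omega
        · simp
      · rw [if_neg (by omega), map_mul, map_mul, map_pow, hC, hβ', mul_pow]
        have : Polynomial.C (C (c j)) * (psi p (w j) * (Polynomial.X ^ j *
          Polynomial.C (lam β) ^ j)) = Polynomial.C (C (c j)) * (psi p (w j) *
          Polynomial.C (lam β ^ j) * (Polynomial.X ^ j)) := by rw [map_pow]; ring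
        rw [this, Polynomial.coeff_C_mul, Polynomial.coeff_mul_X_pow', if_neg (by omega), mul_zero]
    rw [Finset.sum_congr rfl hterm, Finset.sum_ite_eq', if_pos (Finset.mem_range.2 him)]
  have hsum : ∀ k ≤ i, (if k = i then C (c i * eval p (w i)) * lam β ^ i else 0) +
      (psi p f * psi p G).coeff k = 0 := by
    intro k hk
    rw [← key k hk, ← map_mul, ← Polynomial.coeff_add, ← map_add]
    exact h k (by omega)
  obtain ⟨Q, hQ⟩ := Polynomial.X_dvd_iff.2 hf0
  have hQ0 : Q.coeff 0 = (psi p f).coeff 1 := by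
    rw [hQ, Polynomial.coeff_X_mul]
  have hfin : c i * eval p (w i) * dt β x0 ^ i = 0 → c i = 0 := by
    intro h0
    rcases mul_eq_zero.1 h0 with h0 | h0
    · exact (mul_eq_zero.1 h0).resolve_right (hw i him)
    · exact absurd h0 (pow_ne_zero _ hβx)
  apply hfin
  cases i with
  | zero =>
    have := hsum 0 le_rfl
    rw [hQ, mul_assoc, Polynomial.coeff_X_mul_zero, if_pos rfl, add_zero] at this
    have := congrArg (eval x0) this
    simpa [eval_lam] using this
  | succ i =>
    have h1 : Polynomial.X ^ i ∣ Q * psi p G := by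
      rw [Polynomial.X_pow_dvd_iff]
      intro k hk
      have := hsum (k + 1) (by omega)
      rw [hQ, mul_assoc, Polynomial.coeff_X_mul, if_neg (by omega), zero_add] at this
      exact this
    have h2 : Polynomial.X ^ i ∣ psi p G := by
      refine Prime.pow_dvd_of_dvd_mul_left Polynomial.prime_X i ?_ h1
      rw [Polynomial.X_dvd_iff, hQ0]
      exact hf1
    obtain ⟨B, hB⟩ := h2
    have := hsum (i + 1) le_rfl
    rw [hQ, mul_assoc, Polynomial.coeff_X_mul, if_pos rfl, hB, mul_left_comm,
      Polynomial.coeff_X_pow_mul', if_pos le_rfl, Nat.sub_self, Polynomial.mul_coeff_zero, hQ0] at this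
    have := congrArg (eval x0) this
    simp only [map_add, map_mul, map_pow, eval_C, eval_lam, hx, zero_mul, add_zero, map_zero] at this
    exact this

/-- multiplication by a homogeneous polynomial -/
def mulH (f : MvPolynomial (Fin 3) F) (m n : ℕ)
    (h : ∀ x ∈ homogeneousSubmodule (Fin 3) F m, f * x ∈ homogeneousSubmodule (Fin 3) F n) :
    homogeneousSubmodule (Fin 3) F m →ₗ[F] homogeneousSubmodule (Fin 3) F n :=
  (LinearMap.mulLeft F f).restrict h

/-- dimension count behind Bezout's theorem -/
lemma bezout_dim {f h : MvPolynomial (Fin 3) F} {d e : ℕ} (hf : f.IsHomogeneous d) (hfp : Prime f)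
    (hh : h.IsHomogeneous e) (hfh : ¬ f ∣ h) {I : Type*} [Fintype I] (n : ℕ)
    (b : I → MvPolynomial (Fin 3) F) (hb : ∀ i, (b i).IsHomogeneous (n + d + e))
    (hind : ∀ (c : I → F) (g k : MvPolynomial (Fin 3) F),
      ∑ i, C (c i) * b i + f * g + h * k = 0 → c = 0) :
    Fintype.card I ≤ d * e := by
  have fin : ∀ n, Module.Finite F (homogeneousSubmodule (Fin 3) F n) := fun n =>
    Module.Finite.iff_fg.2 (homogeneousSubmodule_fg _ _ n)
  let V := fun n => homogeneousSubmodule (Fin 3) F n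
  let b' : I → V (n + d + e) := fun i => ⟨b i, hb i⟩
  let B : (I → F) →ₗ[F] V (n + d + e) := Fintype.linearCombination F b'
  let Lf : V (n + e) →ₗ[F] V (n + d + e) := mulH f (n + e) (n + d + e) (fun x hx => by
    have := hf.mul hx
    rwa [show d + (n + e) = n + d + e by ring] at this)
  let Lh : V (n + d) →ₗ[F] V (n + d + e) := mulH h (n + d) (n + d + e) (fun x hx => by
    have := hh.mul hx
    rwa [show e + (n + d) = n + d + e by ring] at this)
  let Kf : V n →ₗ[F] V (n + d) := mulH f n (n + d) (fun x hx => by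
    have := hf.mul hx
    rwa [add_comm d n] at this)
  let Kh : V n →ₗ[F] V (n + e) := mulH (-h) n (n + e) (fun x hx => by
    have := hh.neg.mul hx
    rwa [add_comm e n] at this)
  let Φ : ((I → F) × V (n + e) × V (n + d)) →ₗ[F] V (n + d + e) := B.coprod (Lf.coprod Lh)
  let J : V n →ₗ[F] ((I → F) × V (n + e) × V (n + d)) := LinearMap.prod 0 (Kh.prod Kf)
  have hker : LinearMap.ker Φ ≤ LinearMap.range J := by
    rintro ⟨c, g, k⟩ hx
    rw [LinearMap.mem_ker] at hx
    have h1 : ∑ i, C (c i) * b i + f * g.1 + h * k.1 = 0 := by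
      have := congrArg Subtype.val hx
      simp only [Φ, LinearMap.coprod_apply, B, Fintype.linearCombination_apply, Lf, Lh, mulH] at this
      simp [b', smul_eq_C_mul, Submodule.coe_add] at this
      rw [← this, add_assoc]; rfl
    have hc := hind c g.1 k.1 h1
    subst hc
    simp only [Pi.zero_apply, C_0, zero_mul, Finset.sum_const_zero, zero_add] at h1
    have h2 : f ∣ h * k.1 := ⟨-g.1, by linear_combination h1⟩
    obtain ⟨k', hk'⟩ := (hfp.dvd_or_dvd h2).resolve_left hfh
    have hg : g.1 = -h * k' := by
      apply mul_left_cancel₀ hfp.ne_zero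
      rw [hk'] at h1
      linear_combination h1
    have hk'h : k'.IsHomogeneous n := by
      by_cases hk0 : k' = 0
      · rw [hk0]; exact isHomogeneous_zero _ _ _
      · refine cofactor_hom (f := k.1) (d := n + d) k.2 ?_ hf hk' (by ring)
        rw [hk']; exact mul_ne_zero hfp.ne_zero hk0
    refine ⟨⟨k', hk'h⟩, ?_⟩
    refine Prod.ext rfl (Prod.ext (Subtype.ext ?_) (Subtype.ext ?_))
    · exact hg.symm
    · exact hk'.symm
  have h1 := LinearMap.finrank_range_add_finrank_ker Φ
  have h2 := Submodule.finrank_mono hker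
  have h3 := LinearMap.finrank_range_le J
  have h4 := Submodule.finrank_le (LinearMap.range Φ)
  rw [Module.finrank_prod, Module.finrank_prod, Module.finrank_fintype_fun_eq_card] at h1
  have e1 := finrank_hom (F := F) n
  have e2 := finrank_hom (F := F) (n + e)
  have e3 := finrank_hom (F := F) (n + d)
  have e4 := finrank_hom (F := F) (n + d + e)
  simp only [V] at *
  nlinarith

end PlaneCurve

namespace PlaneCurve
variable {F : Type*} [Field F] [Fintype F]

lemma exists_PP_rep {v : Fin 3 → F} (hv : v ≠ 0) :
    ∃ (p : PP F) (c : F), c ≠ 0 ∧ p.rep = c • v := by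
  refine ⟨Projectivization.mk F v hv, ?_⟩
  obtain ⟨a, ha⟩ := Projectivization.exists_smul_eq_mk_rep F v hv
  exact ⟨a, a.ne_zero, by rw [← ha]; rfl⟩

lemma dt_smul_left {S : Type*} [CommRing S] (c : S) (a b : Fin 3 → S) :
    dt (c • a) b = c * dt a b := by simp [dt]; ring

lemma exists_beta (p : PP F) {T : MvPolynomial (Fin 3) F} (hT : T.IsHomogeneous 1) (hT0 : T ≠ 0) :
    ∃ β x0 : Fin 3 → F, dt β p.rep = 0 ∧ eval x0 T = 0 ∧ dt β x0 ≠ 0 := by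
  classical
  obtain ⟨τ, rfl⟩ := hom_one_eq_lam hT
  have hτ : τ ≠ 0 := by rintro rfl; exact hT0 lam_zero
  obtain ⟨t, c, hc, ht⟩ := exists_PP_rep hτ
  have h1 := card_lines_through p
  have h2 : 2 ≤ Fintype.card F := q_ge_two
  obtain ⟨l, hl, hlt⟩ := Finset.exists_mem_ne (by rw [h1]; omega) t
  simp only [Finset.mem_filter, Finset.mem_univ, true_and] at hl
  obtain ⟨m, hm1, hm2⟩ := exists_line_through_not hlt
  refine ⟨l.rep, m.rep, (inc_comm _ _).1 hl, ?_, hm2⟩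
  rw [eval_lam]
  unfold inc at hm1
  rw [ht, dt_smul_left] at hm1
  exact (mul_eq_zero.1 hm1).resolve_left hc

lemma bezout {f h : MvPolynomial (Fin 3) F} {d e : ℕ} (hf : f.IsHomogeneous d) (hfp : Prime f)
    (hh : h.IsHomogeneous e) (hfh : ¬ f ∣ h) (S : Finset (PP F)) (m : PP F → ℕ)
    (hS : ∀ p ∈ S, (psi p.rep f).coeff 0 = 0 ∧ (psi p.rep f).coeff 1 ≠ 0)
    (hm : ∀ p ∈ S, ∃ k, Polynomial.X ^ m p ∣ psi p.rep (h - f * k)) :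
    ∑ p ∈ S, m p ≤ d * e := by
  classical
  set M := ∑ p ∈ S, m p with hM
  have hL : ∀ p p' : PP F, ∃ l : PP F, p ≠ p' → inc p' l ∧ ¬ inc p l := fun p p' => by
    by_cases h : p = p'
    · exact ⟨p, fun h' => absurd h h'⟩
    · obtain ⟨l, hl⟩ := exists_line_through_not h
      exact ⟨l, fun _ => hl⟩
  choose L hL using hL
  have hα : ∀ p : PP F, ∃ a : Fin 3 → F, dt a p.rep = 1 := fun p =>
    exists_dt_eq_one _ p.rep_nonzero
  choose a ha using hα
  have hβ : ∀ p : S, ∃ β x0 : Fin 3 → F, dt β p.1.rep = 0 ∧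
      eval x0 ((psi p.1.rep f).coeff 1) = 0 ∧ dt β x0 ≠ 0 := fun p =>
    exists_beta p.1 (psi_coeff_hom _ _ _) (hS p.1 p.2).2
  choose β x0 hβ1 hβ2 hβ3 using hβ
  let u : PP F → MvPolynomial (Fin 3) F := fun p => ∏ p' ∈ S.erase p, lam (L p p').rep ^ m p'
  let w : PP F → ℕ → MvPolynomial (Fin 3) F := fun p i =>
    u p * lam (a p) ^ (M + d + e - (M - m p) - i)
  let b : (Σ p : S, Fin (m p)) → MvPolynomial (Fin 3) F := fun x =>
    w x.1 x.2 * lam (β x.1) ^ (x.2 : ℕ)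
  have hmM : ∀ p ∈ S, ∑ p' ∈ S.erase p, m p' + m p = M := fun p hp =>
    Finset.sum_erase_add S m hp
  have hb : ∀ x, (b x).IsHomogeneous (M + d + e) := by
    rintro ⟨⟨p, hp⟩, i⟩
    have h1 : (u p).IsHomogeneous (∑ p' ∈ S.erase p, m p') := by
      refine IsHomogeneous.prod _ _ _ (fun p' _ => ?_)
      have := (lam_hom (L p p').rep).pow (m p')
      rwa [one_mul] at this
    have h2 := (lam_hom (a p)).pow (M + d + e - (M - m p) - i)
    have h3 := (lam_hom (β ⟨p, hp⟩)).pow (i : ℕ)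
    have h4 := (h1.mul h2).mul h3
    have h5 := hmM p hp
    have h6 : (i : ℕ) < m p := i.2
    have : ∑ p' ∈ S.erase p, m p' + 1 * (M + d + e - (M - m p) - i) + 1 * (i : ℕ) = M + d + e := by
      omega
    rwa [this] at h4
  have hcard : Fintype.card (Σ p : S, Fin (m p)) = M := by
    rw [Fintype.card_sigma]
    simp only [Fintype.card_fin]
    rw [Finset.sum_coe_sort S m]
  rw [← hcard]
  refine bezout_dim hf hfp hh hfh M b hb ?_
  intro c g k hsum
  funext ⟨⟨p, hp⟩, ⟨i, hi⟩⟩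
  obtain ⟨kp, hkp⟩ := hm p hp
  let c' : ℕ → F := fun i => if h : i < m p then c ⟨⟨p, hp⟩, ⟨i, h⟩⟩ else 0
  have main := local_indep p.rep (hS p hp).1 (hS p hp).2 (β ⟨p, hp⟩) (x0 ⟨p, hp⟩) (hβ1 ⟨p, hp⟩)
    (hβ2 ⟨p, hp⟩) (hβ3 ⟨p, hp⟩) (w p) c' (m p) ?_ (g + kp * k) ?_ i hi
  · simpa [c', hi] using main
  · intro i _
    simp only [w, u, map_mul, map_prod, map_pow, eval_lam, ha, one_pow, mul_one]
    refine Finset.prod_ne_zero_iff.2 fun p' hp' => pow_ne_zero _ ?_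
    have := (hL p p' (Finset.ne_of_mem_erase hp').symm).2
    rwa [inc_comm] at this
  · have e1 : ∑ i ∈ Finset.range (m p), C (c' i) * (w p i * lam (β ⟨p, hp⟩) ^ i) =
        ∑ i : Fin (m p), C (c ⟨⟨p, hp⟩, i⟩) * b ⟨⟨p, hp⟩, i⟩ := by
      rw [Finset.sum_range]
      refine Finset.sum_congr rfl fun i _ => ?_
      simp [c', b]
    rw [Fintype.sum_sigma, ← Finset.add_sum_erase _ _ (Finset.mem_univ (⟨p, hp⟩ : S))] at hsum
    have e2 : ∑ i ∈ Finset.range (m p), C (c' i) * (w p i * lam (β ⟨p, hp⟩) ^ i) + f * (g + kp * k)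
        = -(∑ x ∈ Finset.univ.erase (⟨p, hp⟩ : S), ∑ i : Fin (m x), C (c ⟨x, i⟩) * b ⟨x, i⟩) -
          (h - f * kp) * k := by
      rw [e1]; linear_combination hsum
    rw [e2, map_sub, map_neg, map_mul]
    have hneg : ∀ x y z : Polynomial (MvPolynomial (Fin 3) F), x ∣ y → x ∣ z → x ∣ -y - z := by
      rintro x y z ⟨s, rfl⟩ ⟨t, rfl⟩
      exact ⟨-s - t, by ring⟩
    refine hneg _ _ _ ?_ (hkp.mul_right _)
    rw [map_sum]
    refine Finset.dvd_sum fun x hx => ?_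
    rw [map_sum]
    refine Finset.dvd_sum fun i _ => ?_
    have hxp : x.1 ≠ p := fun h => Finset.ne_of_mem_erase hx (Subtype.ext h)
    have hdv : lam (L x.1 p).rep ^ m p ∣ C (c ⟨x, i⟩) * b ⟨x, i⟩ := by
      refine Dvd.dvd.mul_left ?_ _
      refine Dvd.dvd.mul_right (Dvd.dvd.mul_right ?_ _) _
      exact Finset.dvd_prod_of_mem (fun p' => lam (L x.1 p').rep ^ m p')
        (Finset.mem_erase.2 ⟨hxp.symm, hp⟩)
    refine Dvd.dvd.trans ?_ (map_dvd (psi p.rep) hdv)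
    rw [map_pow]
    refine pow_dvd_pow_of_dvd ?_ _
    rw [psi_lam]
    have : dt (L x.1 p).rep p.rep = 0 := (inc_comm _ _).1 (hL x.1 p hxp).1
    rw [this]; simp

end PlaneCurve

namespace PlaneCurve
variable {F : Type*} [Field F] [Fintype F]

lemma kap_hom (l : Fin 3 → F) {E : MvPolynomial (Fin 3) F} {e : ℕ} (hE : E.IsHomogeneous e) :
    (kap l E).IsHomogeneous e := by
  have h : ∀ i, (crs X (cv l) i : MvPolynomial (Fin 3) F).IsHomogeneous 1 := by
    have h3 : ∀ (j k : Fin 3), (X j * cv l k : MvPolynomial (Fin 3) F).IsHomogeneous 1 := fun j k =>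
      (isHomogeneous_X F j).mul (isHomogeneous_C _ (l k))
    intro i
    fin_cases i
    · exact (h3 _ _).sub (h3 _ _)
    · exact (h3 _ _).sub (h3 _ _)
    · exact (h3 _ _).sub (h3 _ _)
  have := hE.aeval _ h
  rwa [one_mul] at this

lemma aeval_congr_dvd {S : Type*} [CommRing S] [Algebra F S] (m : S) (V W : Fin 3 → S)
    (h : ∀ i, m ∣ V i - W i) (E : MvPolynomial (Fin 3) F) : m ∣ aeval V E - aeval W E := by
  have : ((Ideal.Quotient.mkₐ F (Ideal.span {m})).comp (aeval V : MvPolynomial (Fin 3) F →ₐ[F] S)) =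
      (Ideal.Quotient.mkₐ F (Ideal.span {m})).comp (aeval W) := by
    apply MvPolynomial.algHom_ext
    intro i
    simp only [AlgHom.comp_apply, aeval_X, Ideal.Quotient.mkₐ_eq_mk]
    rw [Ideal.Quotient.eq, Ideal.mem_span_singleton]
    exact h i
  have h2 := AlgHom.congr_fun this E
  simp only [AlgHom.comp_apply, Ideal.Quotient.mkₐ_eq_mk] at h2
  rwa [Ideal.Quotient.eq, Ideal.mem_span_singleton] at h2

lemma dt_cv (a b : Fin 3 → F) : dt (cv a) (cv b) = C (dt a b) := by simp [dt, cv]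

lemma crs_cv (a b : Fin 3 → F) : crs (cv a) (cv b) = cv (crs a b) := by
  funext i
  fin_cases i <;> simp [cv]

lemma lam_dvd_of_kap {l : Fin 3 → F} (hl : l ≠ 0) {E : MvPolynomial (Fin 3) F}
    (h : kap l E = 0) : lam l ∣ E := by
  obtain ⟨b, hb⟩ := exists_dt_eq_one l hl
  have hb' : dt (cv b) (cv l) = 1 := by rw [dt_cv, hb, C_1]
  have h1 : aeval (crs (crs (cv b) X) (cv l)) E = 0 := by
    have := congrArg (aeval (crs (cv b) X) : MvPolynomial (Fin 3) F →ₐ[F] _) h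
    rw [map_zero, kap, ← AlgHom.comp_apply, comp_aeval] at this
    rw [← this]
    congr 2
    funext i
    fin_cases i <;> simp [cv, MvPolynomial.algebraMap_eq]
  have h2 := aeval_congr_dvd (lam l) X (crs (crs (cv b) X) (cv l)) (fun i => ?_) E
  · rwa [h1, sub_zero, aeval_X_left_apply] at h2
  · refine ⟨cv b i, ?_⟩
    have : (X i : MvPolynomial (Fin 3) F) = X i * dt (cv b) (cv l) := by rw [hb', mul_one]
    rw [this, lam]
    fin_cases i <;> simp [dt] <;> ring

lemma kap_order {l v : Fin 3 → F} (hl : l ≠ 0) (hvl : dt v l = 0) {c : Fin 3 → F}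
    (hc : dt c v = 1)
    {E : MvPolynomial (Fin 3) F} {e : ℕ} (hE : E.IsHomogeneous e) (j : ℕ)
    (hj : ∀ k < j, eval (crs c l) ((psi v E).coeff k) = 0) : lam v ^ j ∣ kap l E := by
  have hc' : dt (cv c) (cv v) = 1 := by rw [dt_cv, hc, C_1]
  have hvl' : dt (cv v) (cv l) = 0 := by rw [dt_cv, hvl, C_0]
  have hρ : lam (crs l c) ≠ 0 := by
    apply lam_ne_zero
    intro h0
    apply hl
    funext i
    have h5 : l i * dt c v - c i * dt v l = 0 := by
      have : l i * dt c v - c i * dt v l = - crs (crs l c) v i := by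
        fin_cases i <;> simp [dt] <;> ring
      rw [this, h0]
      fin_cases i <;> simp
    rw [hc, hvl] at h5
    simpa using h5
  have h := taylor_dvd v hE (lam (crs l c)) (lam v) hρ (cv (crs c l)) j (fun k hk => by
    have h1 : (aeval (cv (crs c l)) : MvPolynomial (Fin 3) F →ₐ[F] MvPolynomial (Fin 3) F)
      ((psi v E).coeff k) = C (eval (crs c l) ((psi v E).coeff k)) := by
      have : (aeval (cv (crs c l)) : MvPolynomial (Fin 3) F →ₐ[F] MvPolynomial (Fin 3) F).toRingHom
        = C.comp (eval (crs c l)) := by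
        apply MvPolynomial.ringHom_ext
        · intro r; simp [MvPolynomial.algebraMap_eq]
        · intro i; simp [cv]
      exact RingHom.congr_fun this _
    rw [h1, hj k hk, C_0])
  convert h using 1
  rw [kap]
  congr 2
  funext i
  have h5 : (crs X (cv l) : Fin 3 → MvPolynomial (Fin 3) F) i =
    crs X (cv l) i * dt (cv c) (cv v) + crs (cv c) X i * dt (cv v) (cv l) := by
      rw [hc', hvl', mul_one, mul_zero, add_zero]
  have h6 : (algebraMap F (MvPolynomial (Fin 3) F)) (v i) = cv v i := rfl
  rw [h5, h6, lam, lam, ← crs_cv, ← crs_cv]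
  fin_cases i <;> simp [dt] <;> ring

lemma lam_dvd_kap {l v : Fin 3 → F} (hl : l ≠ 0) (hv : v ≠ 0) (hvl : dt v l = 0)
    {E : MvPolynomial (Fin 3) F} {e : ℕ} (hE : E.IsHomogeneous e) (h0 : eval v E = 0) :
    lam v ∣ kap l E := by
  obtain ⟨c, hc⟩ := exists_dt_eq_one v hv
  have := kap_order hl hvl hc hE 1 (fun k hk => by
    obtain rfl : k = 0 := by omega
    rw [psi_coeff_zero, h0]; simp)
  rwa [pow_one] at this

lemma lam_sq_dvd_kap {l v : Fin 3 → F} (hl : l ≠ 0) (hv : v ≠ 0) (hvl : dt v l = 0)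
    {E : MvPolynomial (Fin 3) F} {e : ℕ} (hE : E.IsHomogeneous e) (h0 : eval v E = 0) (s : F)
    (hT : (psi v E).coeff 1 = lam (s • l)) :
    lam v ^ 2 ∣ kap l E := by
  obtain ⟨c, hc⟩ := exists_dt_eq_one v hv
  refine kap_order hl hvl hc hE 2 (fun k hk => ?_)
  obtain rfl | rfl : k = 0 ∨ k = 1 := by omega
  · rw [psi_coeff_zero, h0]; simp
  · rw [hT, eval_lam]; simp [dt]; ring

lemma eval_zero_of_dvd_kap {l v : Fin 3 → F} (hl : l ≠ 0) (hvl : dt v l = 0)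
    {E : MvPolynomial (Fin 3) F} (h : lam v ∣ kap l E) : eval v E = 0 := by
  obtain ⟨b, hb⟩ := exists_dt_eq_one l hl
  have h1 := map_dvd (eval (crs b v)) h
  have h2 : eval (crs b v) (lam v) = 0 := by rw [eval_lam]; simp [dt]; ring
  rw [h2, zero_dvd_iff] at h1
  rw [← h1]
  have : (eval (crs b v)).comp (kap l).toRingHom = eval v := by
    apply MvPolynomial.ringHom_ext
    · intro r; simp [kap]
    · intro i
      have h3 : v i = v i * dt b l - b i * dt v l := by rw [hb, hvl]; ring
      rw [eval_X, h3]
      fin_cases i <;> simp [kap, cv, dt] <;> ring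
  exact (RingHom.congr_fun this E).symm

lemma euler_tangent (v : Fin 3 → F) {E : MvPolynomial (Fin 3) F} {e : ℕ} (hE : E.IsHomogeneous e)
    (h0 : eval v E = 0) : eval v ((psi v E).coeff 1) = 0 := by
  have h1 := psi_subst v (fun i => Polynomial.C (v i)) (Polynomial.X : Polynomial F) E
  have h2 : (aeval (fun i => Polynomial.C (v i)) : MvPolynomial (Fin 3) F →ₐ[F] Polynomial F).toRingHom
      = Polynomial.C.comp (eval v) := by
    apply MvPolynomial.ringHom_ext
    · intro r; simp
    · intro i; simp
  have h3 : (fun i => algebraMap F (Polynomial F) (v i) + Polynomial.X * Polynomial.C (v i)) =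
    fun i => (1 + Polynomial.X) * Polynomial.C (v i) := by
    funext i; simp; ring
  rw [h3, aeval_smul hE] at h1
  have h4 : (aeval (fun i => Polynomial.C (v i)) : MvPolynomial (Fin 3) F →ₐ[F] Polynomial F) E = 0 := by
    have := RingHom.congr_fun h2 E
    simp only [RingHom.comp_apply, h0, map_zero] at this
    exact this
  rw [h4, mul_zero, h2, ← Polynomial.eval₂_map, Polynomial.eval₂_C_X] at h1
  have := congrArg (fun P => Polynomial.coeff P 1) h1
  simpa using this

lemma lam_pow_dvd_kap_of_alp {l v : Fin 3 → F} (hv : v ≠ 0) (hvl : dt v l = 0)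
    {E : MvPolynomial (Fin 3) F} {e : ℕ} (hE : E.IsHomogeneous e) {j : ℕ}
    (h : lam v ^ j ∣ alp F E) : lam v ^ j ∣ kap l E := by
  obtain ⟨P, hP1, hP2⟩ := psi_alp l hE
  have h1 := map_dvd (psi l) h
  have h2 : psi l (lam v ^ j) = Polynomial.X ^ j * Polynomial.C (lam v ^ j) := by
    rw [map_pow, psi_lam, hvl, C_0, Polynomial.C_0, zero_add, mul_pow, ← Polynomial.C_pow]
  rw [h2, hP1] at h1
  have h3 : Polynomial.C (lam v ^ j) ∣ P * Polynomial.X ^ e :=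
    (Dvd.intro_left _ rfl).trans (h1.trans (by rw [mul_comm]))
  rw [Polynomial.C_dvd_iff_dvd_coeff] at h3
  have h4 := h3 e
  rw [Polynomial.coeff_mul_X_pow', if_pos le_rfl, Nat.sub_self, hP2] at h4
  exact h4

end PlaneCurve

namespace PlaneCurve
variable {F : Type*} [Field F] [Fintype F]

/-- a hypothetical irreducible curve with too many points -/
structure Bad (f : MvPolynomial (Fin 3) F) (d : ℕ) (S : Finset (PP F)) : Prop where
  hf : f.IsHomogeneous d
  hfp : Prime f
  hd2 : 2 ≤ d
  hdq : d ≤ Fintype.card F + 1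
  hS : ∀ p, p ∈ S ↔ eval p.rep f = 0
  hN : d * (Fintype.card F + 1) + 2 ≤ S.card + d + Fintype.card F

namespace Bad
variable {f : MvPolynomial (Fin 3) F} {d : ℕ} {S : Finset (PP F)}

lemma f_ne (B : Bad f d S) : f ≠ 0 := B.hfp.ne_zero

lemma lines (B : Bad f d S) (l : PP F) : ¬ lam l.rep ∣ f := by
  intro h
  have h1 := (lam_prime l.rep_nonzero).associated_of_dvd B.hfp h
  have := le_of_hom_dvd (lam_hom l.rep) (lam_ne_zero l.rep_nonzero) B.hf h1.symm.dvd
  have := B.hd2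
  omega

lemma kap_ne (B : Bad f d S) (l : PP F) : kap l.rep f ≠ 0 :=
  fun h => B.lines l (lam_dvd_of_kap l.rep_nonzero h)

lemma lam_dvd_kap' (B : Bad f d S) {p l : PP F} (hp : p ∈ S) (h : inc p l) :
    lam p.rep ∣ kap l.rep f :=
  lam_dvd_kap l.rep_nonzero p.rep_nonzero h B.hf ((B.hS p).1 hp)

lemma cnt_le (B : Bad f d S) (l : PP F) : cnt S l ≤ d := by
  classical
  have h1 : ∏ p ∈ S.filter (fun p => inc p l), lam p.rep ∣ kap l.rep f :=
    prod_lam_dvd _ (fun p hp => by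
      rw [Finset.mem_filter] at hp
      exact B.lam_dvd_kap' hp.1 hp.2)
  have := le_of_hom_dvd (kap_hom l.rep B.hf) (B.kap_ne l) (prod_lam_hom _) h1
  rw [cnt]; convert this

lemma cnt_lt (B : Bad f d S) {p l : PP F} (hp : p ∈ S) (hpl : inc p l)
    (h : lam p.rep ^ 2 ∣ kap l.rep f) : cnt S l + 1 ≤ d := by
  classical
  have h1 : ∏ p' ∈ S.filter (fun p => inc p l), lam p'.rep ^ (if p' = p then 2 else 1) ∣
      kap l.rep f :=
    prod_lam_pow_dvd _ _ (fun p' hp' => by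
      rw [Finset.mem_filter] at hp'
      split_ifs with h2
      · rw [h2]; exact h
      · rw [pow_one]; exact B.lam_dvd_kap' hp'.1 hp'.2)
  have h2 := le_of_hom_dvd (kap_hom l.rep B.hf) (B.kap_ne l) (prod_lam_pow_hom _ _) h1
  have h3 : ∀ x, (if x = p then 2 else 1) = 1 + (if x = p then 1 else 0) := by
    intro x; split_ifs <;> rfl
  simp_rw [h3] at h2
  rw [Finset.sum_add_distrib, Finset.sum_ite_eq', if_pos (by simp [hp, hpl])] at h2
  simp only [Finset.sum_const, smul_eq_mul, mul_one] at h2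
  rw [cnt]; convert h2

open Classical in
lemma sum_def (S : Finset (PP F)) (d : ℕ) {p : PP F} (hp : p ∈ S) :
    ∑ l ∈ Finset.univ.filter (fun l : PP F => inc p l), ((d : ℤ) - cnt S l) =
      d * (Fintype.card F + 1) - Fintype.card F - S.card := by
  rw [Finset.sum_sub_distrib, sum_cnt_through S hp, Finset.sum_const, card_lines_through]
  simp; ring

lemma nonempty (B : Bad f d S) : 0 < S.card := by
  have := B.hN
  have := B.hd2
  nlinarith [q_ge_two (F := F)]

lemma exists_full (B : Bad f d S) {p : PP F} (hp : p ∈ S) : ∃ l, inc p l ∧ cnt S l = d := by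
  classical
  by_contra hcon
  push Not at hcon
  have h1 := sum_def S d hp
  have h2 : ∑ l ∈ Finset.univ.filter (fun l : PP F => inc p l), (1 : ℤ) ≤
    ∑ l ∈ Finset.univ.filter (fun l : PP F => inc p l), ((d : ℤ) - cnt S l) := by
    refine Finset.sum_le_sum fun l hl => ?_
    have := hcon l (by simpa using hl)
    have := B.cnt_le l
    omega
  rw [h1, Finset.sum_const, card_lines_through] at h2
  have := B.hN
  have := B.hdq
  simp at h2
  zify at *
  linarith

lemma not_sq_alp (B : Bad f d S) {p : PP F} (hp : p ∈ S) : ¬ lam p.rep ^ 2 ∣ alp F f := by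
  intro h
  obtain ⟨l, hl, hc⟩ := B.exists_full hp
  have := B.cnt_lt hp hl (lam_pow_dvd_kap_of_alp p.rep_nonzero hl B.hf h)
  omega

lemma smooth (B : Bad f d S) {p : PP F} (hp : p ∈ S) : (psi p.rep f).coeff 1 ≠ 0 := by
  intro h
  obtain ⟨l, hl, hc⟩ := B.exists_full hp
  have := B.cnt_lt hp hl (lam_sq_dvd_kap l.rep_nonzero p.rep_nonzero hl B.hf ((B.hS p).1 hp) 0
    (by rw [h, zero_smul, lam_zero]))
  omega

/-- the tangent line at a point of `S` -/
lemma exists_tangent (B : Bad f d S) {p : PP F} (hp : p ∈ S) :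
    ∃ l, inc p l ∧ lam p.rep ^ 2 ∣ kap l.rep f := by
  obtain ⟨τ, hτ⟩ := hom_one_eq_lam (psi_coeff_hom p.rep f 1)
  have hτ0 : τ ≠ 0 := by rintro rfl; exact B.smooth hp (by rw [hτ, lam_zero])
  obtain ⟨l, c, hc, hl⟩ := exists_PP_rep hτ0
  have h0 := (B.hS p).1 hp
  have h1 := euler_tangent p.rep B.hf h0
  rw [hτ, eval_lam] at h1
  have h2 : inc p l := by
    rw [inc_comm]; unfold inc; rw [hl, dt_smul_left, h1, mul_zero]
  refine ⟨l, h2, lam_sq_dvd_kap l.rep_nonzero p.rep_nonzero h2 B.hf h0 c⁻¹ ?_⟩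
  rw [hτ, hl, smul_smul, inv_mul_cancel₀ hc, one_smul]

lemma cnt_ge (B : Bad f d S) {l : PP F} (h : 1 ≤ cnt S l) :
    (d : ℤ) - cnt S l ≤ d * (Fintype.card F + 1) - Fintype.card F - S.card := by
  classical
  rw [cnt, Nat.succ_le_iff, Finset.card_pos] at h
  obtain ⟨p, hp⟩ := h
  rw [Finset.mem_filter] at hp
  rw [← sum_def S d hp.1]
  refine Finset.single_le_sum (f := fun l => (d : ℤ) - cnt S l) (fun l _ => ?_) (by simp [hp.2])
  have := B.cnt_le l
  omega

lemma D_nonneg (B : Bad f d S) : S.card + Fintype.card F ≤ d * (Fintype.card F + 1) := by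
  classical
  obtain ⟨p, hp⟩ := Finset.card_pos.1 B.nonempty
  have h1 := sum_def S d hp
  have h2 : 0 ≤ ∑ l ∈ Finset.univ.filter (fun l : PP F => inc p l), ((d : ℤ) - cnt S l) :=
    Finset.sum_nonneg fun l _ => by
      have := B.cnt_le l
      omega
  rw [h1] at h2
  zify
  linarith

lemma exists_inc (p : PP F) : ∃ l : PP F, inc p l := by
  classical
  have h := card_lines_through p
  have : 0 < (Finset.univ.filter (fun l : PP F => inc p l)).card := by omega
  obtain ⟨l, hl⟩ := Finset.card_pos.1 this
  exact ⟨l, by simpa using hl⟩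

lemma factor (B : Bad f d S) : ∃ G, alp F f = (∏ p ∈ S, lam p.rep) * G ∧
    G.IsHomogeneous (d * (Fintype.card F + 1) - S.card) ∧ ∀ l : PP F, ¬ lam l.rep ∣ G := by
  classical
  have h0 : alp F f ≠ 0 := fun h => B.f_ne (alp_eq_zero B.hf h)
  have h1 : ∏ p ∈ S, lam p.rep ∣ alp F f := prod_lam_dvd S fun p hp => by
    have := lam_pow_dvd_alp p.rep_nonzero B.hf (j := 1) (fun k hk => by
      obtain rfl : k = 0 := by omega
      rw [psi_coeff_zero, (B.hS p).1 hp, C_0])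
    rwa [pow_one] at this
  obtain ⟨G, hG⟩ := h1
  refine ⟨G, hG, ?_, ?_⟩
  · refine cofactor_hom (alp_hom B.hf) h0 (prod_lam_hom S) hG ?_
    have := B.D_nonneg
    rw [mul_comm]; omega
  · intro l hl
    by_cases hlS : l ∈ S
    · apply B.not_sq_alp hlS
      rw [sq, hG]
      exact mul_dvd_mul (Finset.dvd_prod_of_mem (fun p : PP F => lam p.rep) hlS) hl
    · apply hlS
      rw [B.hS]
      obtain ⟨m, hm⟩ := exists_inc l
      have h3 : lam l.rep ^ 1 ∣ kap m.rep f :=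
        lam_pow_dvd_kap_of_alp l.rep_nonzero hm B.hf (by rw [pow_one, hG]; exact hl.mul_left _)
      rw [pow_one] at h3
      exact eval_zero_of_dvd_kap m.rep_nonzero hm h3

end Bad
end PlaneCurve

namespace PlaneCurve
variable {F : Type*} [Field F] [Fintype F]

lemma not_dvd_Del {E : MvPolynomial (Fin 3) F} (hE : Prime E) (h : ∀ l : PP F, ¬ lam l.rep ∣ E) :
    ¬ E ∣ Del F := by
  intro hd
  obtain ⟨p, hp⟩ := prime_dvd_Del hE hd
  exact h p hp.symm.dvd

lemma pow_eq_of_prime {R : Type*} [CommRing R] [IsDomain R] {p x y : R} (hp : Prime p) {a b : ℕ}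
    (hx : ¬ p ∣ x) (hy : ¬ p ∣ y) (h : p ^ a * x = p ^ b * y) : a = b := by
  have key : ∀ {a b : ℕ} {x y : R}, ¬ p ∣ x → p ^ a * x = p ^ b * y → ¬ a < b := by
    intro a b x y hx h hab
    obtain ⟨k, rfl⟩ := Nat.exists_eq_add_of_lt hab
    rw [add_assoc, pow_add, mul_assoc] at h
    have := mul_left_cancel₀ (pow_ne_zero a hp.ne_zero) h
    exact hx ⟨p ^ k * y, by rw [this]; ring⟩
  have h1 := key hx h
  have h2 := key hy h.symm
  omega

/-- structure of the dual curve -/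
structure Dual (f : MvPolynomial (Fin 3) F) (d : ℕ) (S : Finset (PP F))
    (E : MvPolynomial (Fin 3) F) (δ r : ℕ) (c : F) : Prop where
  bad : Bad f d S
  hE : E.IsHomogeneous δ
  hEp : Prime E
  hEl : ∀ l : PP F, ¬ lam l.rep ∣ E
  hr : 1 ≤ r
  hdeg : r * δ + S.card = d * (Fintype.card F + 1)
  hc : c ≠ 0
  hfac : alp F f = C c * (∏ p ∈ S, lam p.rep) * E ^ r
  hrq : r ∣ Fintype.card F
  hkey : ∀ g : MvPolynomial (Fin 3) F, ∀ e, g.IsHomogeneous e → f ∣ alp F g → E ∣ g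

lemma Bad.exists_dual {f : MvPolynomial (Fin 3) F} {d : ℕ} {S : Finset (PP F)} (B : Bad f d S) :
    ∃ E δ r c, Dual f d S E δ r c := by
  classical
  obtain ⟨G, hG, hGh, hGl⟩ := B.factor
  have hD := B.D_nonneg
  have hq := q_ge_two (F := F)
  have hG0 : G ≠ 0 := by
    rintro rfl
    rw [mul_zero] at hG
    exact B.f_ne (alp_eq_zero B.hf hG)
  have hGu : ¬ IsUnit G := fun hu => by
    have := isUnit_hom hGh hu
    omega
  obtain ⟨E, hEi, hEG⟩ := WfDvdMonoid.exists_irreducible_factor hGu hG0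
  have hEp : Prime E := UniqueFactorizationMonoid.irreducible_iff_prime.1 hEi
  obtain ⟨δ, -, hE⟩ := hom_of_dvd hGh hG0 hEG
  have hEl : ∀ l : PP F, ¬ lam l.rep ∣ E := fun l h => hGl l (h.trans hEG)
  have hED := not_dvd_Del hEp hEl
  have hfD := not_dvd_Del B.hfp B.lines
  have hEf : E ∣ alp F f := hG ▸ hEG.mul_left _
  have haa := alp_alp B.hf
  have hfE : f ∣ alp F E := by
    by_contra hcon
    have h1 : alp F E ∣ Del F ^ d * f ^ Fintype.card F := haa ▸ map_dvd (alp F) hEf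
    have h2 : IsRelPrime (alp F E) (f ^ Fintype.card F) :=
      ((isRelPrime_of_prime B.hfp hcon).symm).pow_right
    have h3 := h2.dvd_of_dvd_mul_right h1
    have h4 := map_dvd (alp F) h3
    rw [alp_alp hE, map_pow, alp_Del, ← pow_mul] at h4
    have h5 : E ∣ E ^ Fintype.card F := dvd_pow_self _ (by omega)
    exact hED (hEp.dvd_of_dvd_pow ((h5.mul_left _).trans h4))
  have hGrel : IsRelPrime G (Del F ^ δ) := by
    apply IsRelPrime.pow_right
    refine WfDvdMonoid.isRelPrime_of_no_irreducible_factors (by tauto) (fun z hz hzG hzD => ?_)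
    obtain ⟨p, hp⟩ := prime_dvd_Del (UniqueFactorizationMonoid.irreducible_iff_prime.1 hz) hzD
    exact hGl p (hp.symm.dvd.trans hzG)
  have hGE : G ∣ E ^ Fintype.card F := by
    have h1 := map_dvd (alp F) hfE
    rw [alp_alp hE] at h1
    have h2 : G ∣ Del F ^ δ * E ^ Fintype.card F := (Dvd.intro_left _ hG.symm).trans h1
    exact hGrel.dvd_of_dvd_mul_left h2
  obtain ⟨r, hr, hass⟩ := (dvd_prime_pow hEp _).1 hGE
  have hr1 : 1 ≤ r := by
    by_contra h
    obtain rfl : r = 0 := by omega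
    rw [pow_zero, associated_one_iff_isUnit] at hass
    exact hGu hass
  obtain ⟨u, hu⟩ := hass.symm
  obtain ⟨c, hc1, hc2⟩ := (MvPolynomial.isUnit_iff_eq_C_of_isReduced).1 u.isUnit
  have hfac : alp F f = C c * (∏ p ∈ S, lam p.rep) * E ^ r := by
    rw [hG, ← hu, hc2]; ring
  have hEr : (E ^ r).IsHomogeneous (δ * r) := hE.pow r
  have hdeg1 := le_of_hom_dvd hGh hG0 hEr hass.symm.dvd
  have hdeg2 := le_of_hom_dvd hEr (pow_ne_zero _ hEp.ne_zero) hGh hass.dvd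
  refine ⟨E, δ, r, c, B, hE, hEp, hEl, hr1, ?_, hc1.ne_zero, hfac, ?_, ?_⟩
  · rw [mul_comm r]; omega
  · have hE0 : alp F E ≠ 0 := fun h => hEp.ne_zero (alp_eq_zero hE h)
    obtain ⟨n, H, hH, hEH⟩ := (FiniteMultiplicity.of_prime_left B.hfp hE0).exists_eq_pow_mul_and_not_dvd
      |> fun ⟨H, h1, h2⟩ => (⟨_, H, h2, h1⟩ : ∃ n H, ¬ f ∣ H ∧ alp F E = f ^ n * H)
    have h1 := congrArg (alp F) hfac
    rw [haa, map_mul, map_mul, map_prod, map_pow, hEH] at h1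
    have h2 : f ^ (n * r) * (alp F (C c) * (∏ p ∈ S, alp F (lam p.rep)) * H ^ r) =
        f ^ Fintype.card F * Del F ^ d := by
      rw [mul_comm (f ^ Fintype.card F), h1]; ring
    have h3 := pow_eq_of_prime B.hfp ?_ ?_ h2
    · exact ⟨n, by rw [← h3, mul_comm]⟩
    · intro h
      rcases B.hfp.dvd_or_dvd h with h | h
      · rcases B.hfp.dvd_or_dvd h with h | h
        · apply B.hfp.not_isUnit
          refine isUnit_of_dvd_unit h ?_
          exact (hc1.map (C : F →+* MvPolynomial (Fin 3) F)).map (alp F)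
        · obtain ⟨p, hp, h⟩ := (B.hfp.dvd_finsetProd_iff _).1 h
          have h4 := h.trans (map_dvd (alp F) (lam_dvd_Del p.rep_nonzero))
          rw [alp_Del] at h4
          exact hfD (B.hfp.dvd_of_dvd_pow h4)
      · exact hH (B.hfp.dvd_of_dvd_pow h)
    · exact fun h => hfD (B.hfp.dvd_of_dvd_pow h)
  · intro g e hg hfg
    have h1 := hEf.trans (map_dvd (alp F) hfg)
    rw [alp_alp hg] at h1
    rcases hEp.dvd_or_dvd h1 with h | h
    · exact absurd (hEp.dvd_of_dvd_pow h) hED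
    · exact hEp.dvd_of_dvd_pow h

end PlaneCurve

namespace PlaneCurve
variable {F : Type*} [Field F] [Fintype F]

lemma psi_lam_factor (p l : PP F) [Decidable (inc p l)] : ∃ Q : Polynomial (MvPolynomial (Fin 3) F),
    psi l.rep (lam p.rep) = Polynomial.X ^ (if inc p l then 1 else 0) * Q ∧
    Q.coeff 0 = if inc p l then lam p.rep else C (dt p.rep l.rep) := by
  rw [psi_lam]
  split_ifs with h
  · refine ⟨Polynomial.C (lam p.rep), ?_, by simp⟩
    unfold inc at h
    rw [h, C_0, Polynomial.C_0, zero_add, pow_one]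
  · refine ⟨_, by rw [pow_zero, one_mul], ?_⟩
    simp

lemma Dual.line {f : MvPolynomial (Fin 3) F} {d : ℕ} {S : Finset (PP F)}
    {E : MvPolynomial (Fin 3) F} {δ r : ℕ} {c : F} (U : Dual f d S E δ r c) (l : PP F) :
    ∃ j : ℕ, cnt S l + r * j = d ∧ (∀ k < j, (psi l.rep E).coeff k = 0) ∧
      ∀ S' ⊆ S, (∀ p ∈ S', inc p l ∧ lam p.rep ^ 2 ∣ kap l.rep f) → S'.card ≤ j := by
  classical
  have hE0 : psi l.rep E ≠ 0 := fun h => U.hEp.ne_zero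
    (psi_injective l.rep (by rw [h, map_zero]))
  set j := (psi l.rep E).natTrailingDegree with hj
  have hjk : ∀ k < j, (psi l.rep E).coeff k = 0 := fun k hk =>
    Polynomial.coeff_eq_zero_of_lt_natTrailingDegree hk
  obtain ⟨Q, hQ⟩ : Polynomial.X ^ j ∣ psi l.rep E := Polynomial.X_pow_dvd_iff.2 hjk
  have hQc : Q.coeff 0 = (psi l.rep E).coeff j := by
    rw [hQ, mul_comm, Polynomial.coeff_mul_X_pow', if_pos le_rfl, Nat.sub_self]
  have hQ0 : Q.coeff 0 ≠ 0 := by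
    rw [hQc]
    exact Polynomial.trailingCoeff_nonzero_iff_nonzero.2 hE0
  have hQh : (Q.coeff 0).IsHomogeneous j := hQc ▸ psi_coeff_hom _ _ _
  choose R hR1 hR2 using fun p => psi_lam_factor p l
  obtain ⟨P, hP1, hP2⟩ := psi_alp l.rep U.bad.hf
  have h1 := congrArg (psi l.rep) U.hfac
  have hcc : psi l.rep (C c) = Polynomial.C (C c) := (psi l.rep).commutes c
  rw [hP1, map_mul, map_mul, map_prod, map_pow, hQ, hcc] at h1
  simp_rw [hR1] at h1
  rw [Finset.prod_mul_distrib, Finset.prod_pow_eq_pow_sum] at h1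
  have hsum : (∑ p ∈ S, if inc p l then 1 else 0) = cnt S l := by
    rw [cnt, Finset.card_filter]
  rw [hsum] at h1
  have h2 : Polynomial.X ^ d * P = Polynomial.X ^ (cnt S l + r * j) *
      (Polynomial.C (C c) * (∏ p ∈ S, R p) * Q ^ r) := by
    rw [h1]; ring
  have h0 : (Polynomial.C (C c) * (∏ p ∈ S, R p) * Q ^ r).coeff 0 =
      C c * (∏ p ∈ S, if inc p l then lam p.rep else C (dt p.rep l.rep)) * Q.coeff 0 ^ r := by
    simp only [← Polynomial.constantCoeff_apply, map_mul, map_pow, map_prod]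
    simp only [Polynomial.constantCoeff_apply, hR2, Polynomial.coeff_C_zero]
  have hne : ∀ p ∈ S, (if inc p l then lam p.rep else C (dt p.rep l.rep)) ≠ 0 := by
    intro p _
    split_ifs with h
    · exact lam_ne_zero p.rep_nonzero
    · intro h'; exact h (C_injective _ _ (by rw [h', C_0]))
  have hcC : (C c : MvPolynomial (Fin 3) F) ≠ 0 := by
    rw [Ne, C_eq_zero]; exact U.hc
  have hdeg : d = cnt S l + r * j := by
    refine pow_eq_of_prime Polynomial.prime_X ?_ ?_ h2
    · rw [Polynomial.X_dvd_iff, hP2]; exact U.bad.kap_ne l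
    · rw [Polynomial.X_dvd_iff, h0]
      exact mul_ne_zero (mul_ne_zero hcC (Finset.prod_ne_zero_iff.2 hne)) (pow_ne_zero _ hQ0)
  refine ⟨j, hdeg.symm, hjk, fun S' hS' hT => ?_⟩
  rw [← hdeg] at h2
  have h3 := mul_left_cancel₀ (pow_ne_zero d Polynomial.X_ne_zero) h2
  have h4 : kap l.rep f =
      C c * (∏ p ∈ S, if inc p l then lam p.rep else C (dt p.rep l.rep)) * Q.coeff 0 ^ r := by
    rw [← hP2, h3, h0]
  have h5 : ∏ p ∈ S', lam p.rep ∣ Q.coeff 0 := by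
    refine prod_lam_dvd _ fun p hp => ?_
    obtain ⟨hpl, hpk⟩ := hT p hp
    have hpr := lam_prime p.rep_nonzero
    have hconst : ∀ a : F, a ≠ 0 → ¬ lam p.rep ∣ C a := fun a ha h =>
      hpr.not_isUnit (isUnit_of_dvd_unit h ((isUnit_iff_ne_zero.2 ha).map C))
    rw [h4, ← Finset.mul_prod_erase S _ (hS' hp), if_pos hpl, sq] at hpk
    have h6 : lam p.rep ∣ C c * (∏ x ∈ S.erase p, if inc x l then lam x.rep else C (dt x.rep l.rep))
        * Q.coeff 0 ^ r := by
      refine (mul_dvd_mul_iff_left hpr.ne_zero).1 (hpk.trans (dvd_of_eq ?_))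
      ring
    rcases hpr.dvd_or_dvd h6 with h | h
    · rcases hpr.dvd_or_dvd h with h | h
      · exact absurd h (hconst _ U.hc)
      · obtain ⟨x, hx, hx2⟩ := (hpr.dvd_finsetProd_iff _).1 h
        split_ifs at hx2 with hxl
        · exact absurd hx2 (lam_rep_rel (Finset.ne_of_mem_erase hx).symm)
        · exact absurd hx2 (hconst _ hxl)
    · exact hpr.dvd_of_dvd_pow h
  exact le_of_hom_dvd hQh hQ0 (prod_lam_hom _) h5

open Classical in
lemma Dual.tangent_count {f : MvPolynomial (Fin 3) F} {d : ℕ} {S : Finset (PP F)}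
    {E : MvPolynomial (Fin 3) F} {δ r : ℕ} {c : F} (U : Dual f d S E δ r c) :
    (r : ℤ) * S.card ≤ ∑ l ∈ Finset.univ.filter (fun l : PP F => 1 ≤ cnt S l),
      ((d : ℤ) - cnt S l) := by
  choose j hj1 hj2 hj3 using U.line
  have hT : ∀ p : PP F, ∃ l, p ∈ S → inc p l ∧ lam p.rep ^ 2 ∣ kap l.rep f := fun p => by
    by_cases h : p ∈ S
    · obtain ⟨l, hl⟩ := U.bad.exists_tangent h
      exact ⟨l, fun _ => hl⟩
    · exact ⟨p, fun h' => absurd h' h⟩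
  choose T hT using hT
  have h1 : S.card = ∑ l ∈ Finset.univ.filter (fun l : PP F => 1 ≤ cnt S l),
      (S.filter (fun p => T p = l)).card := by
    refine Finset.card_eq_sum_card_fiberwise fun p hp => ?_
    have hp : p ∈ S := hp
    simp only [Finset.coe_filter, Finset.mem_univ, true_and, Set.mem_ofPred_eq]
    rw [cnt, Nat.succ_le_iff, Finset.card_pos]
    exact ⟨p, by simp [hp, (hT p hp).1]⟩
  rw [h1]
  push_cast
  rw [Finset.mul_sum]
  refine Finset.sum_le_sum fun l _ => ?_
  have h2 := hj3 l (S.filter (fun p => T p = l)) (Finset.filter_subset _ _) (fun p hp => by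
    rw [Finset.mem_filter] at hp
    rw [← hp.2]; exact hT p hp.1)
  have h3 := hj1 l
  have : (d : ℤ) - cnt S l = r * j l := by rw [← h3]; push_cast; ring
  rw [this]
  gcongr

lemma sum_w (S : Finset (PP F)) (d : ℕ) : ∑ l : PP F, ((d : ℤ) - cnt S l) =
    d * (Fintype.card F ^ 2 + Fintype.card F + 1) - S.card * (Fintype.card F + 1) := by
  rw [Finset.sum_sub_distrib, sum_cnt, Finset.sum_const, Finset.card_univ, card_PP]
  simp; ring

lemma sum_cnt_w (S : Finset (PP F)) (d : ℕ) : ∑ l : PP F, (cnt S l : ℤ) * ((d : ℤ) - cnt S l) =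
    S.card * (d * (Fintype.card F + 1) - Fintype.card F - S.card) := by
  classical
  rw [sum_cnt_mul S (fun l => (d : ℤ) - cnt S l)]
  rw [Finset.sum_congr rfl (fun p hp => Bad.sum_def S d hp)]
  simp; ring

open Classical in
lemma Dual.ineqI {f : MvPolynomial (Fin 3) F} {d : ℕ} {S : Finset (PP F)}
    {E : MvPolynomial (Fin 3) F} {δ r : ℕ} {c : F} (U : Dual f d S E δ r c) :
    (r : ℤ) * S.card + d * (Finset.univ.filter (fun l : PP F => cnt S l = 0)).card ≤
     d * (Fintype.card F ^ 2 + Fintype.card F + 1) - S.card * (Fintype.card F + 1) := by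
  have h1 := U.tangent_count
  have h2 := sum_w S d
  rw [← Finset.sum_filter_add_sum_filter_not _ (fun l => 1 ≤ cnt S l)] at h2
  have h3 : ∑ l ∈ Finset.univ.filter (fun l : PP F => ¬ 1 ≤ cnt S l), ((d : ℤ) - cnt S l) =
      d * (Finset.univ.filter (fun l : PP F => cnt S l = 0)).card := by
    have : Finset.univ.filter (fun l : PP F => ¬ 1 ≤ cnt S l) =
        Finset.univ.filter (fun l : PP F => cnt S l = 0) := by
      ext l; simp
    rw [this]
    rw [Finset.sum_congr rfl (g := fun _ => (d : ℤ)) (fun l hl => by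
      rw [Finset.mem_filter] at hl; rw [hl.2]; simp)]
    simp; ring
  rw [h3] at h2
  linarith

lemma Dual.ineqC {f : MvPolynomial (Fin 3) F} {d : ℕ} {S : Finset (PP F)}
    {E : MvPolynomial (Fin 3) F} {δ r : ℕ} {c : F} (U : Dual f d S E δ r c) :
    (r : ℤ) * (d - (d * (Fintype.card F + 1) - Fintype.card F - S.card)) ≤
     d * (Fintype.card F + 1) - Fintype.card F - S.card := by
  classical
  set D : ℤ := d * (Fintype.card F + 1) - Fintype.card F - S.card with hD
  have h1 := U.tangent_count
  have h2 := sum_cnt_w S d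
  rw [← hD] at h2
  have hN : (0 : ℤ) < S.card := by exact_mod_cast U.bad.nonempty
  have hB := U.bad.hN
  have hdD : 0 ≤ (d : ℤ) - D := by rw [hD]; zify at hB; linarith
  have h3 : ∑ l ∈ Finset.univ.filter (fun l : PP F => 1 ≤ cnt S l), (d - D) * ((d : ℤ) - cnt S l)
      ≤ ∑ l : PP F, (cnt S l : ℤ) * ((d : ℤ) - cnt S l) := by
    refine (Finset.sum_le_sum (g := fun l => (cnt S l : ℤ) * ((d : ℤ) - cnt S l)) fun l hl => ?_).trans
      (Finset.sum_le_sum_of_subset_of_nonneg (Finset.filter_subset _ _) fun l _ _ => ?_)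
    · rw [Finset.mem_filter] at hl
      have h4 := U.bad.cnt_ge hl.2
      have h5 := U.bad.cnt_le l
      have : (0 : ℤ) ≤ d - cnt S l := by omega
      gcongr
      linarith
    · have h5 := U.bad.cnt_le l
      have : (0 : ℤ) ≤ d - cnt S l := by omega
      positivity
  rw [← Finset.mul_sum, h2] at h3
  have h4 := (mul_le_mul_of_nonneg_left h1 hdD).trans h3
  have h5 : (S.card : ℤ) * (r * (d - D)) ≤ S.card * D := by linarith
  exact le_of_mul_le_mul_left h5 hN

end PlaneCurve

namespace PlaneCurve
variable {F : Type*} [Field F] [Fintype F]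

lemma psi_pderiv (p : Fin 3 → F) (i : Fin 3) (E : MvPolynomial (Fin 3) F) :
    ∀ k, (psi p (pderiv i E)).coeff k = pderiv i ((psi p E).coeff (k + 1)) := by
  have hC : ∀ a : F, psi p (C a) = Polynomial.C (C a) := (psi p).commutes
  induction E using MvPolynomial.induction_on with
  | C a => intro k; simp [hC]
  | add f g hf hg => intro k; simp [hf, hg]
  | mul_X f n hf =>
    intro k
    have hX : psi p (X n) = Polynomial.C (C (p n)) + Polynomial.X * Polynomial.C (X n) := by
      simp [psi]
    have e0 : ∀ g : Polynomial (MvPolynomial (Fin 3) F),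
        (g * (Polynomial.C (C (p n)) + Polynomial.X * Polynomial.C (X n))).coeff 0 =
          g.coeff 0 * C (p n) := by
      intro g; simp [Polynomial.mul_coeff_zero]
    have e1 : ∀ (g : Polynomial (MvPolynomial (Fin 3) F)) (k : ℕ),
        (g * (Polynomial.C (C (p n)) + Polynomial.X * Polynomial.C (X n))).coeff (k + 1) =
          g.coeff (k + 1) * C (p n) + g.coeff k * X n := by
      intro g k
      rw [mul_add, Polynomial.coeff_add, Polynomial.coeff_mul_C, ← mul_assoc,
        Polynomial.coeff_mul_C, Polynomial.coeff_mul_X]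
    have e2 : psi p (pderiv i (f * X n)) =
        psi p f * Polynomial.C (pderiv i (X n)) + psi p (pderiv i f) * psi p (X n) := by
      rw [pderiv_mul, map_add, map_mul, map_mul, add_comm]
      congr 2
      by_cases h : i = n
      · subst h; simp
      · rw [pderiv_X_of_ne (Ne.symm h)]; simp
    rw [e2, map_mul, hX, Polynomial.coeff_add, Polynomial.coeff_mul_C, e1]
    cases k with
    | zero =>
      rw [e0, hf, map_add, pderiv_mul, pderiv_mul, pderiv_C, psi_coeff_zero, pderiv_C]
      ring
    | succ k =>
      rw [e1, hf, hf, map_add, pderiv_mul, pderiv_mul, pderiv_C]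
      ring

lemma exists_pderiv_ne {E : MvPolynomial (Fin 3) F} (hE : Prime E) : ∃ i, pderiv i E ≠ 0 := by
  classical
  by_contra hcon
  push Not at hcon
  obtain ⟨p, hp⟩ := CharP.exists F
  have hpp : p.Prime := (CharP.char_is_prime_or_zero F p).resolve_right
    (CharP.char_ne_zero_of_finite F p)
  have : Fact p.Prime := ⟨hpp⟩
  have h1 : ∀ m ∈ E.support, ∀ i, p ∣ m i := by
    intro m hm i
    by_cases hmi : m i = 0
    · rw [hmi]; exact dvd_zero _
    have h2 := congrArg (coeff (m - Finsupp.single i 1)) (hcon i)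
    rw [coeff_pderiv, coeff_zero] at h2
    have h3 : m - Finsupp.single i 1 + Finsupp.single i 1 = m := by
      apply tsub_add_cancel_of_le
      rw [Finsupp.single_le_iff]; omega
    rw [h3] at h2
    have h4 := (mul_eq_zero.1 h2).resolve_left (mem_support_iff.1 hm)
    have h5 : ((m i : ℕ) : F) = 0 := by
      rw [← h4]
      have : (m - Finsupp.single i 1 : Fin 3 →₀ ℕ) i + 1 = m i := by
        simp; omega
      exact_mod_cast congrArg (Nat.cast (R := F)) this.symm
    exact (CharP.cast_eq_zero_iff F p _).1 h5
  have hroot : ∀ a : F, ∃ b, b ^ p = a := fun a =>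
    (frobeniusEquiv F p).surjective a
  choose rt hrt using hroot
  have h2 : E = (∑ m ∈ E.support, monomial (m.mapRange (· / p) (by simp)) (rt (coeff m E))) ^ p := by
    rw [sum_pow_char]
    conv_lhs => rw [E.as_sum]
    refine Finset.sum_congr rfl fun m hm => ?_
    have h4 : m = p • m.mapRange (· / p) (by simp) := by
      refine Finsupp.ext fun i => ?_
      simp [Nat.mul_div_cancel' (h1 m hm i)]
    rw [monomial_pow, hrt, ← h4]
  have h3 := hE.irreducible
  rw [h2] at h3
  exact not_irreducible_pow hpp.ne_one h3

lemma psi_prod_factor (n : PP F → ℕ) (p : PP F) [DecidablePred (inc p)] :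
    ∃ R : Polynomial (MvPolynomial (Fin 3) F),
    psi p.rep (∏ l : PP F, lam l.rep ^ n l) =
      Polynomial.X ^ (∑ l ∈ Finset.univ.filter (inc p), n l) * R ∧ R.coeff 0 ≠ 0 := by
  classical
  choose R hR1 hR2 using fun l => psi_lam_factor l p
  refine ⟨∏ l : PP F, R l ^ n l, ?_, ?_⟩
  · rw [map_prod, Finset.sum_filter, ← Finset.prod_pow_eq_pow_sum, ← Finset.prod_mul_distrib]
    refine Finset.prod_congr rfl fun l _ => ?_
    rw [map_pow, hR1, mul_pow, ← pow_mul]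
    simp only [inc_comm l p]
    split_ifs <;> simp
  · rw [← Polynomial.constantCoeff_apply, map_prod]
    refine Finset.prod_ne_zero_iff.2 fun l _ => ?_
    rw [map_pow]
    refine pow_ne_zero _ ?_
    rw [Polynomial.constantCoeff_apply, hR2]
    split_ifs with h
    · exact lam_ne_zero l.rep_nonzero
    · intro h'; exact h (C_injective _ _ (by rw [h', C_0]))

lemma Dual.ineqP {f : MvPolynomial (Fin 3) F} {d : ℕ} {S : Finset (PP F)}
    {E : MvPolynomial (Fin 3) F} {δ r : ℕ} {c : F} (U : Dual f d S E δ r c) :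
    (d : ℤ) * (Fintype.card F + 1 + r - d) ≤ (r + 1) * (d * (Fintype.card F + 1) - S.card) := by
  classical
  set q := Fintype.card F with hq
  choose j hj1 hj2 hj3 using U.line
  obtain ⟨i, hi⟩ := exists_pderiv_ne U.hEp
  have hδ : 1 ≤ δ := by
    by_contra h
    obtain rfl : δ = 0 := by omega
    exact U.hEp.not_isUnit (hom_zero_isUnit U.hE U.hEp.ne_zero)
  set g := pderiv i E with hg
  have hgh : g.IsHomogeneous (δ - 1) := U.hE.pderiv
  have hfg : ¬ f ∣ alp F g := fun h => by
    have h1 := U.hkey g _ hgh h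
    have := le_of_hom_dvd hgh hi U.hE h1
    omega
  have hag0 : alp F g ≠ 0 := fun h => hi (alp_eq_zero hgh h)
  have hdv : ∏ l : PP F, lam l.rep ^ (j l - 1) ∣ alp F g := by
    refine prod_lam_pow_dvd _ _ fun l _ => ?_
    refine lam_pow_dvd_alp l.rep_nonzero hgh fun k hk => ?_
    rw [hg, psi_pderiv, hj2 l (k + 1) (by omega), map_zero]
  obtain ⟨G, hG⟩ := hdv
  have hle := le_of_hom_dvd (alp_hom hgh) hag0 (prod_lam_pow_hom _ _) (Dvd.intro _ hG.symm)
  have hGh := cofactor_hom (alp_hom hgh) hag0 (prod_lam_pow_hom _ _) hG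
    (Nat.add_sub_cancel' hle).symm
  have hfG : ¬ f ∣ G := fun h => hfg (hG ▸ h.mul_left _)
  have hbz := bezout U.bad.hf U.bad.hfp hGh hfG S
    (fun p => (δ - 1) - ∑ l ∈ Finset.univ.filter (inc p), (j l - 1)) (fun p hp => by
      refine ⟨?_, U.bad.smooth hp⟩
      rw [psi_coeff_zero, (U.bad.hS p).1 hp, C_0]) (fun p hp => by
      refine ⟨0, ?_⟩
      rw [mul_zero, sub_zero]
      obtain ⟨P, hP1, -⟩ := psi_alp p.rep hgh
      obtain ⟨R, hR1, hR2⟩ := psi_prod_factor (fun l => j l - 1) p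
      have h1 := congrArg (psi p.rep) hG
      rw [hP1, map_mul, hR1] at h1
      set s := ∑ l ∈ Finset.univ.filter (inc p), (j l - 1)
      have h2 : Polynomial.X ^ (δ - 1) ∣ Polynomial.X ^ s * (R * psi p.rep G) :=
        ⟨P, by rw [h1]; ring⟩
      have h3 : Polynomial.X ^ (δ - 1 - s) ∣ R * psi p.rep G := by
        by_cases hs : s ≤ δ - 1
        · have h4 : δ - 1 = s + (δ - 1 - s) := by omega
          rw [h4, pow_add] at h2
          exact (mul_dvd_mul_iff_left (pow_ne_zero _ Polynomial.X_ne_zero)).1 h2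
        · have : δ - 1 - s = 0 := by omega
          rw [this, pow_zero]; exact one_dvd _
      exact Polynomial.prime_X.pow_dvd_of_dvd_mul_left _ (by
        rwa [Polynomial.X_dvd_iff]) h3)
  have hbz' : ∑ p ∈ S, ((δ : ℤ) - 1 - ∑ l ∈ Finset.univ.filter (inc p), ((j l - 1 : ℕ) : ℤ)) ≤
      d * ((q + 1) * (δ - 1) - ∑ l : PP F, ((j l - 1 : ℕ) : ℤ)) := by
    have h1 : ∑ p ∈ S, ((δ : ℤ) - 1 - ∑ l ∈ Finset.univ.filter (inc p), ((j l - 1 : ℕ) : ℤ)) ≤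
      ((∑ p ∈ S, ((δ - 1) - ∑ l ∈ Finset.univ.filter (inc p), (j l - 1)) : ℕ) : ℤ) := by
      rw [Nat.cast_sum]
      refine Finset.sum_le_sum fun p _ => ?_
      rw [← Nat.cast_sum]
      omega
    refine h1.trans ((Nat.cast_le (α := ℤ)).2 hbz |>.trans (le_of_eq ?_))
    rw [Nat.cast_mul, Nat.cast_sub hle, Nat.cast_sum]
    push_cast [hδ]
    rfl
  rw [Finset.sum_sub_distrib, ← sum_cnt_mul S (fun l => ((j l - 1 : ℕ) : ℤ))] at hbz'
  simp only [Finset.sum_const, nsmul_eq_mul] at hbz'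
  have hw : ∀ l, (d : ℤ) - cnt S l = r * j l := fun l => by rw [← hj1 l]; push_cast; ring
  have h1 : ∑ l : PP F, ((d : ℤ) - cnt S l) * ((j l - 1 : ℕ) : ℤ) ≤
      (δ - 1) * (d * (q + 1) - S.card) := by
    simp_rw [sub_mul]
    rw [Finset.sum_sub_distrib, ← Finset.mul_sum]
    linarith
  have h2 : ∀ l, (r : ℤ) * (((d : ℤ) - cnt S l) * ((j l - 1 : ℕ) : ℤ)) =
      (d - r) * ((d : ℤ) - cnt S l) - (cnt S l : ℤ) * ((d : ℤ) - cnt S l) := by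
    intro l
    have e : (r : ℤ) * (((d : ℤ) - cnt S l) * ((j l - 1 : ℕ) : ℤ)) =
      ((d : ℤ) - cnt S l) * (((d : ℤ) - cnt S l) - r) := by
      rw [hw]
      rcases Nat.eq_zero_or_pos (j l) with h | h
      · rw [h]; simp
      · push_cast [h]; ring
    rw [e]; ring
  have h3 := mul_le_mul_of_nonneg_left h1 (Int.natCast_nonneg r)
  rw [Finset.mul_sum, Finset.sum_congr rfl (fun l _ => h2 l), Finset.sum_sub_distrib,
    ← Finset.mul_sum, sum_w, sum_cnt_w] at h3
  have hdeg : (r : ℤ) * δ + S.card = d * (q + 1) := by exact_mod_cast U.hdeg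
  have hqpos : (0 : ℤ) < q := by have := q_ge_two (F := F); omega
  have h4 : (q : ℤ) * (d * (q + 1 + r - d)) ≤ q * ((r + 1) * (d * (q + 1) - S.card)) := by
    have e : (S.card : ℤ) = d * (q + 1) - r * δ := by linarith
    rw [← hq, e] at h3
    rw [e]
    linarith
  exact le_of_mul_le_mul_left h4 hqpos

end PlaneCurve

namespace PlaneCurve
variable {F : Type*} [Field F] [Fintype F]

lemma pderiv_aeval_chain (A : Fin 3 → MvPolynomial (Fin 3) F) (k : Fin 3)
    (f : MvPolynomial (Fin 3) F) :
    pderiv k (aeval A f) = ∑ i, aeval A (pderiv i f) * pderiv k (A i) := by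
  induction f using MvPolynomial.induction_on with
  | C a => simp [MvPolynomial.algebraMap_eq]
  | add f g hf hg =>
    rw [map_add, map_add, hf, hg, ← Finset.sum_add_distrib]
    refine Finset.sum_congr rfl fun i _ => ?_
    rw [map_add, map_add, add_mul]
  | mul_X f n hf =>
    have h1 : ∀ i, aeval A (pderiv i (f * X n)) * pderiv k (A i) =
        aeval A (pderiv i f) * pderiv k (A i) * A n +
          (if n = i then aeval A f * pderiv k (A i) else 0) := by
      intro i
      rw [pderiv_mul, map_add, map_mul, map_mul, aeval_X]
      split_ifs with h
      · subst h; simp; ring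
      · rw [pderiv_X_of_ne h]; simp; ring
    rw [Finset.sum_congr rfl fun i _ => h1 i, Finset.sum_add_distrib, ← Finset.sum_mul, ← hf,
      map_mul, aeval_X, pderiv_mul, Finset.sum_ite_eq, if_pos (Finset.mem_univ _)]

lemma crs_Av : crs (Av F) (pq F (Av F)) = fun i => Del F * pq F X i := by
  rw [← alp_Av]
  have := crs_map (alp F).toRingHom X (pq F X)
  simp only [AlgHom.toRingHom_eq_coe, RingHom.coe_coe] at this
  rw [Av, this, alp_pq]
  simp_rw [alp_X]
  rfl

lemma pderiv_powq (k : Fin 3) (g : MvPolynomial (Fin 3) F) :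
    pderiv k (g ^ Fintype.card F) = 0 := by
  rw [pderiv_pow]
  have : ((Fintype.card F : ℕ) : MvPolynomial (Fin 3) F) = 0 := by
    rw [← map_natCast (C : F →+* MvPolynomial (Fin 3) F), FiniteField.cast_card_eq_zero, C_0]
  rw [this]; simp

/-- the Stöhr–Voloch polynomial -/
def svp (f : MvPolynomial (Fin 3) F) : MvPolynomial (Fin 3) F :=
  dt (fun i => pderiv i f) (pq F X)

lemma svp_hom {f : MvPolynomial (Fin 3) F} {d : ℕ} (hf : f.IsHomogeneous d) :
    (svp f).IsHomogeneous (d - 1 + Fintype.card F) := by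
  have h : ∀ i, (pderiv i f * pq F X i).IsHomogeneous (d - 1 + Fintype.card F) := fun i => by
    have := (isHomogeneous_X F i).pow (Fintype.card F)
    rw [one_mul] at this
    exact hf.pderiv.mul this
  exact ((h 0).add (h 1)).add (h 2)

lemma Dual.not_dvd_svp {f : MvPolynomial (Fin 3) F} {d : ℕ} {S : Finset (PP F)}
    {E : MvPolynomial (Fin 3) F} {δ : ℕ} {c : F} (U : Dual f d S E δ 1 c) : ¬ f ∣ svp f := by
  intro hdvd
  have hEf : E ∣ alp F f := by rw [U.hfac, pow_one]; exact Dvd.intro_left _ rfl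
  let u : Fin 3 → MvPolynomial (Fin 3) F := fun i => alp F (pderiv i f)
  have h1 : E ∣ dt u (pq F (Av F)) := by
    have h := hEf.trans (map_dvd (alp F) hdvd)
    have e := dt_map (alp F).toRingHom (fun i => pderiv i f) (pq F X)
    simp only [AlgHom.toRingHom_eq_coe, RingHom.coe_coe] at e
    rw [svp, e, alp_pq] at h
    simp_rw [alp_X] at h
    exact h
  have h2 : E ∣ dt u (Av F) := by
    have h := U.bad.hf.sum_X_mul_pderiv
    rw [Fin.sum_univ_three] at h
    have h3 := congrArg (alp F) h
    simp only [map_add, map_mul, alp_X, map_nsmul] at h3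
    have h4 : dt u (Av F) = d • alp F f := by rw [← h3]; simp [dt, u]; ring
    rw [h4, nsmul_eq_mul]
    exact hEf.mul_left _
  have hED := not_dvd_Del U.hEp U.hEl
  have h3 : ∀ i, E ∣ crs u (pq F X) i := by
    intro i
    have e1 : crs u (crs (Av F) (pq F (Av F))) i =
        Av F i * dt u (pq F (Av F)) - pq F (Av F) i * dt u (Av F) := by
      generalize pq F (Av F) = W
      generalize Av F = V
      fin_cases i <;> simp [dt] <;> ring
    have e2 : crs u (crs (Av F) (pq F (Av F))) i = Del F * crs u (pq F X) i := by
      rw [crs_Av]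
      fin_cases i <;> simp <;> ring
    have h4 : E ∣ Del F * crs u (pq F X) i := by
      rw [← e2, e1]
      exact dvd_sub (h1.mul_left _) (h2.mul_left _)
    exact (U.hEp.dvd_or_dvd h4).resolve_left hED
  have h4 : ∀ k, E ∣ pderiv k (alp F f) := by
    intro k
    have e : pderiv k (alp F f) = - crs u (pq F X) k := by
      rw [alp, pderiv_aeval_chain, Fin.sum_univ_three]
      have hY : ∀ k i, pderiv k (pq F (X : Fin 3 → MvPolynomial (Fin 3) F) i) = 0 :=
        fun k i => pderiv_powq k _
      have hu : ∀ i, aeval (Av F) (pderiv i f) = u i := fun i => rfl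
      rw [hu, hu, hu]
      generalize u = u
      simp only [Av]
      generalize (pq F (X : Fin 3 → MvPolynomial (Fin 3) F)) = Y at *
      fin_cases k <;> simp [hY, pderiv_mul, pderiv_X, Pi.single_apply] <;> ring
    obtain ⟨s, hs⟩ := h3 k
    exact ⟨-s, by rw [e, hs]; ring⟩
  obtain ⟨k, hk⟩ := exists_pderiv_ne U.hEp
  have h5 := h4 k
  rw [U.hfac, pow_one, pderiv_mul] at h5
  have h6 : E ∣ C c * (∏ p ∈ S, lam p.rep) * pderiv k E :=
    (dvd_add_right (Dvd.intro_left _ rfl)).1 h5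
  have h7 : E ∣ pderiv k E := by
    refine (U.hEp.dvd_or_dvd h6).resolve_left fun h => ?_
    rcases U.hEp.dvd_or_dvd h with h | h
    · exact U.hEp.not_isUnit (isUnit_of_dvd_unit h ((isUnit_iff_ne_zero.2 U.hc).map C))
    · obtain ⟨p, _, hp⟩ := prime_dvd_prod_lam S U.hEp h
      exact U.hEl p hp.symm.dvd
  have hδ : 1 ≤ δ := by
    by_contra h
    obtain rfl : δ = 0 := by omega
    exact U.hEp.not_isUnit (hom_zero_isUnit U.hE U.hEp.ne_zero)
  have := le_of_hom_dvd (U.hE.pderiv (i := k)) hk U.hE h7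
  omega

lemma Dual.ineqSV {f : MvPolynomial (Fin 3) F} {d : ℕ} {S : Finset (PP F)}
    {E : MvPolynomial (Fin 3) F} {δ : ℕ} {c : F} (U : Dual f d S E δ 1 c) :
    S.card * 2 ≤ d * (d - 1 + Fintype.card F) := by
  have h := bezout U.bad.hf U.bad.hfp (svp_hom U.bad.hf) U.not_dvd_svp S (fun _ => 2)
    (fun p hp => by
      refine ⟨?_, U.bad.smooth hp⟩
      rw [psi_coeff_zero, (U.bad.hS p).1 hp, C_0]) (fun p hp => by
      refine ⟨(d : MvPolynomial (Fin 3) F) - 1, ?_⟩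
      have hq := q_ge_two (F := F)
      obtain ⟨r, hr⟩ : ∃ r, Fintype.card F = r + 2 := ⟨_, (Nat.sub_add_cancel hq).symm⟩
      have h := U.bad.hf.sum_X_mul_pderiv
      rw [Fin.sum_univ_three, nsmul_eq_mul] at h
      have e1 : svp f - f * ((d : MvPolynomial (Fin 3) F) - 1) =
          ∑ i, pderiv i f * (X i ^ Fintype.card F - X i) + f := by
        rw [Fin.sum_univ_three]
        simp only [svp, dt, pq]
        linear_combination h
      have e2 : ∀ i, psi p.rep (X i ^ Fintype.card F - X i) =
          Polynomial.X * (Polynomial.X * Polynomial.X ^ r * Polynomial.C (X i ^ Fintype.card F)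
            - Polynomial.C (X i)) := by
        intro i
        have hX : psi p.rep (X i) = Polynomial.C (C (p.rep i)) + Polynomial.X * Polynomial.C (X i) := by
          simp [psi]
        rw [map_sub, map_pow, hX, add_powq, ← Polynomial.C_pow, ← C_pow, FiniteField.pow_card,
          mul_pow, Polynomial.C_pow, hr]
        ring
      have e3 : psi p.rep (svp f - f * ((d : MvPolynomial (Fin 3) F) - 1)) =
          Polynomial.X * (∑ i, psi p.rep (pderiv i f) * (Polynomial.X * Polynomial.X ^ r *
            Polynomial.C (X i ^ Fintype.card F) - Polynomial.C (X i))) + psi p.rep f := by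
        rw [e1, map_add, map_sum, Finset.mul_sum]
        congr 1
        refine Finset.sum_congr rfl fun i _ => ?_
        rw [map_mul, e2]; ring
      rw [e3, Polynomial.X_pow_dvd_iff]
      intro k hk
      obtain rfl | rfl : k = 0 ∨ k = 1 := by omega
      · rw [Polynomial.coeff_add, psi_coeff_zero, (U.bad.hS p).1 hp, C_0]
        simp
      · rw [Polynomial.coeff_add, Polynomial.coeff_X_mul]
        have hT := (psi_coeff_hom p.rep f 1).sum_X_mul_pderiv
        rw [one_nsmul] at hT
        rw [← Polynomial.constantCoeff_apply, map_sum]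
        conv_lhs => rw [← hT]
        rw [← Finset.sum_add_distrib]
        refine Finset.sum_eq_zero fun i _ => ?_
        rw [map_mul, Polynomial.constantCoeff_apply, Polynomial.constantCoeff_apply, psi_pderiv,
          zero_add]
        simp [Polynomial.mul_coeff_zero]
        ring)
  simpa using h

end PlaneCurve

namespace PlaneCurve

lemma num_r2 {q n r d N : ℤ} (hq : q = n * r) (hr : 2 ≤ r) (hn : 1 ≤ n)
    (hN : d * (q + 1) + 2 ≤ N + d + q)
    (hI : r * N ≤ d * (q ^ 2 + q + 1) - N * (q + 1))
    (hC : r * (d - (d * (q + 1) - q - N)) ≤ d * (q + 1) - q - N)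
    (hP : d * (q + 1 + r - d) ≤ (r + 1) * (d * (q + 1) - N)) : False := by
  have hqn : n ≤ q := by rw [hq]; nlinarith
  have h1 : d * (q * r - 1) ≤ (q - 2) * (q + r + 1) := by
    nlinarith [mul_nonneg (by linarith : (0:ℤ) ≤ N + d + q - (d * (q + 1) + 2))
      (by linarith : (0:ℤ) ≤ q + 1 + r)]
  have hdn : d ≤ n := by
    by_contra h
    have h' : n + 1 ≤ d := by omega
    have h2 : 0 ≤ q * r - 1 := by nlinarith
    have h3 := mul_le_mul_of_nonneg_right h' h2
    have h4 : n * (q * r) = q * q := by rw [hq]; ring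
    nlinarith
  have hd : 2 * r + 2 ≤ d := by
    have h2 : r * 2 ≤ r * (d - (d * (q + 1) - q - N)) :=
      mul_le_mul_of_nonneg_left (by linarith) (by linarith)
    linarith
  have h5 : q * (d - r - 1) - d ^ 2 + 2 * r + 2 ≤ 0 := by
    nlinarith [mul_nonneg (by linarith : (0:ℤ) ≤ N + d + q - (d * (q + 1) + 2))
      (by linarith : (0:ℤ) ≤ r + 1)]
  have h6 := mul_nonneg (by linarith : (0:ℤ) ≤ d - (2 * r + 2)) (by linarith : (0:ℤ) ≤ n - d)
  have h7 : 0 ≤ n * (r - 1) - 2 * (r + 1) := by nlinarith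
  have h8 := mul_nonneg (by linarith : (0:ℤ) ≤ d - (2 * r + 2)) h7
  have h9 : 0 < n * r - 4 * r - 2 := by nlinarith
  have h10 := mul_pos (by linarith : (0:ℤ) < r + 1) h9
  rw [hq] at h5
  nlinarith

lemma num_r1 {q d N : ℤ} (hq : 2 ≤ q) (hd2 : 2 ≤ d) (hd : d ≤ q - 1)
    (hN : d * (q + 1) + 2 ≤ N + d + q)
    (hSV : N * 2 ≤ d * (d - 1 + q)) : False := by
  nlinarith [mul_nonneg (by linarith : (0:ℤ) ≤ d - 2) (by linarith : (0:ℤ) ≤ q - 1 - d)]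

variable {F : Type*} [Field F] [Fintype F]

open Classical in
lemma Bad.not_small {f : MvPolynomial (Fin 3) F} {d : ℕ} {S : Finset (PP F)} (B : Bad f d S) :
    Fintype.card F ≤ d ∧ ∀ l, d = Fintype.card F → cnt S l ≠ 0 := by
  obtain ⟨E, δ, r, c, U⟩ := B.exists_dual
  have hq2 := q_ge_two (F := F)
  have hI := U.ineqI
  have hC := U.ineqC
  have hP := U.ineqP
  have hN := B.hN
  have hd2 := B.hd2
  zify at hN hd2 hq2
  obtain ⟨n, hn⟩ := U.hrq
  have hr1 := U.hr
  have hn1 : 1 ≤ n := by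
    rcases Nat.eq_zero_or_pos n with h | h
    · subst h; simp at hn
    · exact h
  have hI' : (r : ℤ) * S.card ≤ d * ((Fintype.card F : ℤ) ^ 2 + Fintype.card F + 1)
      - S.card * (Fintype.card F + 1) := by
    have : (0 : ℤ) ≤ d * ((Finset.univ.filter (fun l => cnt S l = 0)).card : ℤ) := by positivity
    linarith
  rcases Nat.lt_or_ge r 2 with h | h
  · obtain rfl : r = 1 := by omega
    have hSV := U.ineqSV
    constructor
    · by_contra hlt
      have hlt' : (d : ℤ) ≤ Fintype.card F - 1 := by omega
      obtain ⟨e, rfl⟩ : ∃ e, d = e + 1 := ⟨d - 1, by omega⟩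
      simp only [Nat.add_sub_cancel] at hSV
      zify at hSV
      refine num_r1 hq2 hd2 hlt' hN ?_
      push_cast
      linarith
    · intro l hdq hl
      have h1 : (1 : ℤ) ≤ ((Finset.univ.filter (fun l => cnt S l = 0)).card : ℤ) := by
        have : 0 < (Finset.univ.filter (fun l => cnt S l = 0)).card :=
          Finset.card_pos.2 ⟨l, by simp [hl]⟩
        omega
      have h2 : (d : ℤ) * 1 ≤ d * ((Finset.univ.filter (fun l => cnt S l = 0)).card : ℤ) :=
        mul_le_mul_of_nonneg_left h1 (by linarith)
      have hdq' : (d : ℤ) = Fintype.card F := by exact_mod_cast hdq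
      rw [hdq'] at *
      push_cast at hI
      nlinarith
  · exfalso
    refine num_r2 (q := Fintype.card F) (n := n) (r := r) (d := d) (N := S.card) ?_ ?_ ?_
      hN hI' hC hP
    · rw [hn]; push_cast; ring
    · exact_mod_cast h
    · exact_mod_cast hn1

lemma Bad.card_eq {f : MvPolynomial (Fin 3) F} {d : ℕ} {S : Finset (PP F)} (B : Bad f d S) :
    S.card ≤ (d - 1) * Fintype.card F + 2 := by
  classical
  obtain ⟨E, δ, r, c, U⟩ := B.exists_dual
  have hq2 := q_ge_two (F := F)
  have hI := U.ineqI
  have hn := B.not_small.1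
  have hN := B.hN
  have hd2 := B.hd2
  have hdq := B.hdq
  have hr := U.hr
  by_contra hcon
  obtain ⟨e, rfl⟩ : ∃ e, d = e + 1 := ⟨d - 1, by omega⟩
  simp only [Nat.add_sub_cancel, not_le] at hcon
  have hI' : (S.card : ℤ) ≤ ((e + 1 : ℕ) : ℤ) * ((Fintype.card F : ℤ) ^ 2 + Fintype.card F + 1)
      - S.card * (Fintype.card F + 1) := by
    have : (0 : ℤ) ≤ ((e + 1 : ℕ) : ℤ) * ((Finset.univ.filter (fun l => cnt S l = 0)).card : ℤ) := by
      positivity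
    have h2 : (1 : ℤ) * S.card ≤ r * S.card := by gcongr; exact_mod_cast hr
    linarith
  zify at hcon hq2
  push_cast at hI'
  generalize (S.card : ℤ) = N at *
  obtain h | h : Fintype.card F = e + 1 ∨ Fintype.card F = e := by omega
  · rw [h] at hI' hcon hq2
    push_cast at *
    nlinarith
  · rw [h] at hI' hcon hq2
    nlinarith

/-- number of rational points -/
def Z (f : MvPolynomial (Fin 3) F) : Finset (PP F) := by
  classical exact Finset.univ.filter (fun p => eval p.rep f = 0)

@[simp] lemma mem_Z {f : MvPolynomial (Fin 3) F} {p : PP F} : p ∈ Z f ↔ eval p.rep f = 0 := by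
  classical
  simp [Z]

lemma prime_i {f : MvPolynomial (Fin 3) F} {d : ℕ} (hf : f.IsHomogeneous d) (hp : Prime f)
    (hd2 : 2 ≤ d) (hdq : d ≤ Fintype.card F + 1) :
    (Z f).card ≤ (d - 1) * Fintype.card F + 2 := by
  by_cases h : d * (Fintype.card F + 1) + 2 ≤ (Z f).card + d + Fintype.card F
  · exact Bad.card_eq ⟨hf, hp, hd2, hdq, fun p => mem_Z, h⟩
  · obtain ⟨e, rfl⟩ : ∃ e, d = e + 1 := ⟨d - 1, by omega⟩
    simp only [Nat.add_sub_cancel]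
    nlinarith

lemma prime_ii {f : MvPolynomial (Fin 3) F} {d : ℕ} (hf : f.IsHomogeneous d) (hp : Prime f)
    (hd2 : 2 ≤ d) (hdq : d < Fintype.card F) :
    (Z f).card ≤ (d - 1) * Fintype.card F + 1 := by
  by_cases h : d * (Fintype.card F + 1) + 2 ≤ (Z f).card + d + Fintype.card F
  · have := (Bad.not_small ⟨hf, hp, hd2, by omega, fun p => mem_Z, h⟩).1
    omega
  · obtain ⟨e, rfl⟩ : ∃ e, d = e + 1 := ⟨d - 1, by omega⟩
    simp only [Nat.add_sub_cancel]
    nlinarith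

lemma prime_iii {f : MvPolynomial (Fin 3) F} {d : ℕ} (hf : f.IsHomogeneous d) (hp : Prime f)
    (hdq : d = Fintype.card F) (l : PP F) (hl : cnt (Z f) l = 0) :
    (Z f).card ≤ (d - 1) * Fintype.card F + 1 := by
  have hq2 := q_ge_two (F := F)
  by_cases h : d * (Fintype.card F + 1) + 2 ≤ (Z f).card + d + Fintype.card F
  · exact absurd hl ((Bad.not_small ⟨hf, hp, by omega, by omega, fun p => mem_Z, h⟩).2 l hdq)
  · obtain ⟨e, rfl⟩ : ∃ e, d = e + 1 := ⟨d - 1, by omega⟩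
    simp only [Nat.add_sub_cancel]
    nlinarith

end PlaneCurve

namespace PlaneCurve
variable {F : Type*} [Field F] [Fintype F]

/-- no rational linear factor -/
def NL (g : MvPolynomial (Fin 3) F) : Prop := ∀ p : PP F, ¬ lam p.rep ∣ g

lemma NL.of_dvd {g h : MvPolynomial (Fin 3) F} (hg : NL g) (hd : h ∣ g) : NL h :=
  fun p hp => hg p (hp.trans hd)

lemma lam_dvd_rep {v : Fin 3 → F} (hv : v ≠ 0) : ∃ p : PP F, lam p.rep ∣ lam v ∧ lam v ∣ lam p.rep := by
  obtain ⟨p, c, hc, h⟩ := exists_PP_rep hv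
  have e : lam p.rep = C c * lam v := by rw [h, lam_smul]
  refine ⟨p, ⟨C c⁻¹, ?_⟩, ⟨C c, by rw [e, mul_comm]⟩⟩
  rw [e, mul_comm, ← mul_assoc, ← C_mul, inv_mul_cancel₀ hc, C_1, one_mul]

lemma NL.two_le {g : MvPolynomial (Fin 3) F} {m : ℕ} (hg : NL g) (h0 : g ≠ 0)
    (hm : g.IsHomogeneous m) (hu : ¬ IsUnit g) : 2 ≤ m := by
  by_contra h
  obtain rfl | rfl : m = 0 ∨ m = 1 := by omega
  · exact hu (hom_zero_isUnit hm h0)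
  · obtain ⟨v, rfl⟩ := hom_one_eq_lam hm
    obtain ⟨p, hp, _⟩ := lam_dvd_rep (v := v) (by rintro rfl; exact h0 lam_zero)
    exact hg p hp

lemma Z_mul [DecidableEq (PP F)] (f g : MvPolynomial (Fin 3) F) : Z (f * g) = Z f ∪ Z g := by
  ext p; simp

lemma split_hom {g : MvPolynomial (Fin 3) F} {m : ℕ} (hg : NL g) (h0 : g ≠ 0)
    (hm : g.IsHomogeneous m) (hu : ¬ IsUnit g) (hi : ¬ Irreducible g) :
    ∃ a b i j, g = a * b ∧ NL a ∧ NL b ∧ a ≠ 0 ∧ b ≠ 0 ∧ a.IsHomogeneous i ∧ b.IsHomogeneous j ∧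
      i + j = m ∧ 2 ≤ i ∧ 2 ≤ j := by
  rw [irreducible_iff] at hi
  push Not at hi
  obtain ⟨a, b, hab, ha, hb⟩ := hi hu
  obtain ⟨i, j, hij, hai, hbj⟩ := hom_of_mul hm h0 hab
  have ha0 : a ≠ 0 := by rintro rfl; exact h0 (by rw [hab, zero_mul])
  have hb0 : b ≠ 0 := by rintro rfl; exact h0 (by rw [hab, mul_zero])
  have na := hg.of_dvd ⟨b, hab⟩
  have nb := hg.of_dvd ⟨a, by rw [hab, mul_comm]⟩
  exact ⟨a, b, i, j, hab, na, nb, ha0, hb0, hai, hbj, hij, na.two_le ha0 hai ha,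
    nb.two_le hb0 hbj hb⟩

lemma not_unit_of_pos {g : MvPolynomial (Fin 3) F} {m : ℕ} (hm : g.IsHomogeneous m) (h : 0 < m) :
    ¬ IsUnit g := fun hu => by have := isUnit_hom hm hu; omega

lemma small_bound : ∀ (m : ℕ) (g : MvPolynomial (Fin 3) F), NL g → g ≠ 0 → g.IsHomogeneous m →
    0 < m → m < Fintype.card F → (Z g).card ≤ (m - 1) * Fintype.card F + 1 := by
  classical
  intro m
  induction m using Nat.strong_induction_on with
  | _ m ih =>
  intro g hg h0 hm hpos hlt
  have hu := not_unit_of_pos hm hpos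
  by_cases hi : Irreducible g
  · exact prime_ii hm (UniqueFactorizationMonoid.irreducible_iff_prime.1 hi)
      (hg.two_le h0 hm hu) hlt
  · obtain ⟨a, b, i, j, rfl, na, nb, ha0, hb0, hai, hbj, rfl, hi2, hj2⟩ := split_hom hg h0 hm hu hi
    have h1 := ih i (by omega) a na ha0 hai (by omega) (by omega)
    have h2 := ih j (by omega) b nb hb0 hbj (by omega) (by omega)
    have h3 := Finset.card_union_le (Z a) (Z b)
    rw [Z_mul]
    obtain ⟨i, rfl⟩ : ∃ e, i = e + 1 := ⟨i - 1, by omega⟩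
    obtain ⟨j, rfl⟩ : ∃ e, j = e + 1 := ⟨j - 1, by omega⟩
    have e : i + 1 + (j + 1) - 1 = i + j + 1 := by omega
    rw [e]
    simp only [Nat.add_sub_cancel] at h1 h2
    nlinarith

lemma red_bound {m : ℕ} {g : MvPolynomial (Fin 3) F} (hg : NL g) (h0 : g ≠ 0)
    (hm : g.IsHomogeneous m) (hpos : 0 < m) (hlt : m ≤ Fintype.card F + 1) (hi : ¬ Irreducible g) :
    (Z g).card + Fintype.card F ≤ (m - 1) * Fintype.card F + 2 := by
  classical
  have hu := not_unit_of_pos hm hpos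
  obtain ⟨a, b, i, j, rfl, na, nb, ha0, hb0, hai, hbj, rfl, hi2, hj2⟩ := split_hom hg h0 hm hu hi
  have h1 := small_bound i a na ha0 hai (by omega) (by omega)
  have h2 := small_bound j b nb hb0 hbj (by omega) (by omega)
  have h3 := Finset.card_union_le (Z a) (Z b)
  rw [Z_mul]
  obtain ⟨i, rfl⟩ : ∃ e, i = e + 1 := ⟨i - 1, by omega⟩
  obtain ⟨j, rfl⟩ : ∃ e, j = e + 1 := ⟨j - 1, by omega⟩
  have e : i + 1 + (j + 1) - 1 = i + j + 1 := by omega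
  rw [e]
  simp only [Nat.add_sub_cancel] at h1 h2
  nlinarith

lemma mem_Z_lam {l p : PP F} : p ∈ Z (lam l.rep) ↔ inc p l := by
  rw [mem_Z, eval_lam, inc, dt_comm]

lemma card_Z_lam (l : PP F) : (Z (lam l.rep)).card = Fintype.card F + 1 := by
  classical
  rw [← card_lines_through l]
  congr 1
  ext p
  rw [mem_Z_lam, inc_comm]
  simp

lemma meet (l l' : PP F) : ∃ p, p ∈ Z (lam l.rep) ∧ p ∈ Z (lam l'.rep) := by
  classical
  by_cases h : l = l'
  · subst h
    have : 0 < (Z (lam l.rep)).card := by rw [card_Z_lam]; omega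
    obtain ⟨p, hp⟩ := Finset.card_pos.1 this
    exact ⟨p, hp, hp⟩
  · have h1 := card_lines_through_two h
    obtain ⟨p, hp⟩ := Finset.card_pos.1 (by rw [h1]; omega)
    simp only [Finset.mem_filter, Finset.mem_univ, true_and] at hp
    exact ⟨p, mem_Z_lam.2 ((inc_comm _ _).1 hp.1), mem_Z_lam.2 ((inc_comm _ _).1 hp.2)⟩

lemma union_line [DecidableEq (PP F)] (l : PP F) (T : Finset (PP F)) {p : PP F}
    (hp : p ∈ Z (lam l.rep)) (hT : p ∈ T) :
    (Z (lam l.rep) ∪ T).card ≤ Fintype.card F + T.card := by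
  have h1 := Finset.card_union_add_card_inter (Z (lam l.rep)) T
  have h2 : 0 < (Z (lam l.rep) ∩ T).card := Finset.card_pos.2 ⟨p, Finset.mem_inter.2 ⟨hp, hT⟩⟩
  rw [card_Z_lam] at h1
  omega

/-- product of linear forms -/
def lp (s : List (PP F)) : MvPolynomial (Fin 3) F := (s.map fun p => lam p.rep).prod

lemma card_Z_lp (l : PP F) (t : List (PP F)) :
    (Z (lp (l :: t))).card ≤ (t.length + 1) * Fintype.card F + 1 := by
  classical
  induction t with
  | nil => simp [lp, card_Z_lam]
  | cons l' t ih =>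
    have e : lp (l :: l' :: t) = lam l'.rep * lp (l :: t) := by simp [lp]; ring
    obtain ⟨p, hp, hp'⟩ := meet l l'
    rw [e, Z_mul]
    have h := union_line l' (Z (lp (l :: t))) hp' (by
      have e2 : lp (l :: t) = lam l.rep * lp t := by simp [lp]
      rw [e2, Z_mul]; exact Finset.mem_union_left _ hp)
    rw [List.length_cons]
    nlinarith

lemma exists_lp : ∀ (d : ℕ) (f : MvPolynomial (Fin 3) F), f ≠ 0 → f.IsHomogeneous d →
    ∃ s g m, f = lp s * g ∧ NL g ∧ g ≠ 0 ∧ g.IsHomogeneous m ∧ s.length + m = d := by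
  intro d
  induction d with
  | zero =>
    intro f h0 hf
    refine ⟨[], f, 0, by simp [lp], ?_, h0, hf, rfl⟩
    intro p hp
    exact (lam_prime p.rep_nonzero).not_isUnit (isUnit_of_dvd_unit hp (hom_zero_isUnit hf h0))
  | succ d ih =>
    intro f h0 hf
    by_cases hn : NL f
    · exact ⟨[], f, d + 1, by simp [lp], hn, h0, hf, by simp⟩
    · unfold NL at hn
      push Not at hn
      obtain ⟨p, h, rfl⟩ := hn
      have hh := cofactor_hom hf h0 (lam_hom p.rep) rfl (by omega : d + 1 = 1 + d)
      obtain ⟨s, g, m, rfl, hg, hg0, hgm, rfl⟩ := ih h (right_ne_zero_of_mul h0) hh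
      exact ⟨p :: s, g, m, by simp [lp, mul_assoc], hg, hg0, hgm, by simp; omega⟩

theorem main_bound {d : ℕ} (hd : 0 < d) {f : MvPolynomial (Fin 3) F} (hf0 : f ≠ 0)
    (hfd : f.IsHomogeneous d)
    (hnl : ¬ ∃ g : Fin d → MvPolynomial (Fin 3) F, (∀ i, (g i).IsHomogeneous 1) ∧ f = ∏ i, g i) :
    (Z f).card ≤ (d - 1) * Fintype.card F + 2 := by
  classical
  have hq2 := q_ge_two (F := F)
  rcases Nat.lt_or_ge (Fintype.card F + 1) d with hbig | hsm
  · have h1 := Finset.card_le_univ (Z f)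
    rw [card_PP] at h1
    obtain ⟨e, rfl⟩ : ∃ e, d = e + 1 := ⟨d - 1, by omega⟩
    simp only [Nat.add_sub_cancel]
    nlinarith
  obtain ⟨s, g, m, rfl, hg, hg0, hgm, hlen⟩ := exists_lp d f hf0 hfd
  have hmpos : 0 < m := by
    by_contra hm
    obtain rfl : m = 0 := by omega
    cases s with
    | nil => simp at hlen; omega
    | cons p t =>
      apply hnl
      let L : List (MvPolynomial (Fin 3) F) := (g * lam p.rep) :: t.map fun p => lam p.rep
      have hL : ∀ x ∈ L, x.IsHomogeneous 1 := by
        intro x hx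
        rcases List.mem_cons.1 hx with rfl | hx
        · have := hgm.mul (lam_hom p.rep)
          rwa [zero_add] at this
        · obtain ⟨p', _, rfl⟩ := List.mem_map.1 hx
          exact lam_hom _
      have hd' : d = L.length := by simp [L]; simpa using hlen.symm
      have hprod : lp (p :: t) * g = L.prod := by simp [L, lp]; ring
      rw [hprod]
      clear_value L
      subst hd'
      exact ⟨fun i => L[i.1], fun i => hL _ (List.getElem_mem _), (Fin.prod_univ_getElem L).symm⟩
  have hu := not_unit_of_pos hgm hmpos
  have hm2 := hg.two_le hg0 hgm hu
  cases s with
  | nil =>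
    obtain rfl : m = d := by simpa using hlen
    have e : lp ([] : List (PP F)) * g = g := by simp [lp]
    rw [e]
    by_cases hi : Irreducible g
    · exact prime_i hgm (UniqueFactorizationMonoid.irreducible_iff_prime.1 hi) hm2 hsm
    · have := red_bound hg hg0 hgm hmpos hsm hi
      omega
  | cons p t =>
    simp only [List.length_cons] at hlen
    have hl := card_Z_lp p t
    have hun := Finset.card_union_le (Z (lp (p :: t))) (Z g)
    obtain ⟨n, rfl⟩ : ∃ n, m = n + 1 := ⟨m - 1, by omega⟩
    have ed : d - 1 = t.length + 1 + n := by omega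
    rw [ed, Z_mul]
    rcases Nat.lt_or_ge (n + 1) (Fintype.card F) with hlt | hge
    · have h1 := small_bound _ g hg hg0 hgm hmpos hlt
      simp only [Nat.add_sub_cancel] at h1
      nlinarith
    · have ht : t.length = 0 := by omega
      have hmq : n + 1 = Fintype.card F := by omega
      obtain rfl := List.length_eq_zero_iff.1 ht
      have e : lp [p] = lam p.rep := by simp [lp]
      rw [e] at hl hun ⊢
      rw [card_Z_lam] at hun
      simp only [List.length_nil]
      by_cases hi : Irreducible g
      · have hpr := UniqueFactorizationMonoid.irreducible_iff_prime.1 hi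
        by_cases hc : cnt (Z g) p = 0
        · have h1 := prime_iii hgm hpr hmq p hc
          simp only [Nat.add_sub_cancel] at h1
          nlinarith
        · have h1 := prime_i hgm hpr hm2 (by omega)
          simp only [Nat.add_sub_cancel] at h1
          obtain ⟨x, hx⟩ := Finset.card_pos.1 (Nat.pos_of_ne_zero hc)
          rw [Finset.mem_filter] at hx
          have h2 := union_line p (Z g) (mem_Z_lam.2 hx.2) hx.1
          nlinarith
      · have h1 := red_bound hg hg0 hgm hmpos (by omega) hi
        simp only [Nat.add_sub_cancel] at h1
        nlinarith

end PlaneCurve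

theorem stmt_1 (q : ℕ) (hq : IsPrimePow q)
    (F : Type) [Field F] [Fintype F] (hF : Fintype.card F = q)
    (d : ℕ) (hd : 0 < d)
    (f : MvPolynomial (Fin 3) F) (hf0 : f ≠ 0) (hfd : f.IsHomogeneous d)
    (hnotlines : ¬ ∃ g : Fin d → MvPolynomial (Fin 3) F,
        (∀ i, (g i).IsHomogeneous 1) ∧ f = ∏ i, g i) :
    {x : Projectivization F (Fin 3 → F) | MvPolynomial.eval x.rep f = 0}.ncard
      ≤ (d - 1) * q + 2 := by
  have h := PlaneCurve.main_bound hd hf0 hfd hnotlines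
  have e : {x : Projectivization F (Fin 3 → F) | MvPolynomial.eval x.rep f = 0} =
      ((PlaneCurve.Z f : Finset (PlaneCurve.PP F)) : Set (PlaneCurve.PP F)) := by
    ext p
    rw [Finset.mem_coe, PlaneCurve.mem_Z]
    rfl
  rw [e, Set.ncard_coe_finset, ← hF]
  exact h
end
end

section
/- Let q be a prime power, X ⊂ P³ an elliptic quadric over F_q with equation F = 0, and s an integer with s ≥ 2. Let G ∈ F_q[x,y,z,t] be a homogeneous polynomial of degree s not divisible by F, and assume the curve D = X ∩ V(G) is F_q-irreducible (so D is an F_q-irreducible curve linearly equivalent to sH on X). Then the number of F_q-rational points of D is at most q(2s - 2). -/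
open MvPolynomial

noncomputable section

attribute [local instance] MvPolynomial.gradedAlgebra

/-- `Fp` defines an elliptic quadric in `P³` over the finite field `F`: it is a nonzero
quadratic form, the quadric it defines is smooth (over the algebraic closure the gradient
vanishes at no nonzero point of the quadric), and the quadric contains no `F`-rational
projective line. -/
def IsEllipticQuadric (F : Type) [Field F] (Fp : MvPolynomial (Fin 4) F) : Prop :=
  Fp ≠ 0 ∧ Fp.IsHomogeneous 2 ∧
  (∀ v : Fin 4 → AlgebraicClosure F, v ≠ 0 → MvPolynomial.aeval v Fp = 0 →
      ∃ i, MvPolynomial.aeval v (MvPolynomial.pderiv i Fp) ≠ 0) ∧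
  ¬ ∃ u w : Fin 4 → F, LinearIndependent F ![u, w] ∧
      ∀ a b : F, MvPolynomial.eval (a • u + b • w) Fp = 0

namespace EQ

variable {F : Type} [Field F]

/-- Directional derivative of `G` at `P` along `v`. -/
def dd (G : MvPolynomial (Fin 4) F) (P v : Fin 4 → F) : F :=
  ∑ i, v i * eval P (pderiv i G)

lemma ev (f : Fin 4 → F) (G : MvPolynomial (Fin 4) F) : eval f G = aeval f G := by
  rw [← MvPolynomial.coe_aeval_eq_eval]; rfl

lemma chain (f : Fin 4 → Polynomial F) (G : MvPolynomial (Fin 4) F) :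
    Polynomial.derivative (aeval f G) =
      ∑ i, Polynomial.derivative (f i) * aeval f (pderiv i G) := by
  induction G using MvPolynomial.induction_on with
  | C a => simp
  | add p q hp hq => simp [hp, hq, mul_add, Finset.sum_add_distrib]
  | mul_X p n hp =>
    have h1 : ∀ i, Polynomial.derivative (f i) * aeval f (pderiv i (p * X n)) =
        (Polynomial.derivative (f i) * aeval f (pderiv i p)) * f n +
          if i = n then aeval f p * Polynomial.derivative (f n) else 0 := by
      intro i
      rw [pderiv_mul, map_add, map_mul, map_mul, aeval_X]
      split_ifs with h
      · subst h
        rw [pderiv_X_self, map_one]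
        ring
      · rw [pderiv_X_of_ne (Ne.symm h), map_zero]
        ring
    rw [Finset.sum_congr rfl (fun i _ => h1 i), Finset.sum_add_distrib, ← Finset.sum_mul, ← hp,
      map_mul, aeval_X, Polynomial.derivative_mul]
    simp

lemma eval_aeval (f : Fin 4 → Polynomial F) (G : MvPolynomial (Fin 4) F) (y : F) :
    Polynomial.eval y (aeval f G) = eval (fun i => (f i).eval y) G := by
  induction G using MvPolynomial.induction_on with
  | C a => simp
  | add p q hp hq => simp [hp, hq]
  | mul_X p n hp => simp [hp]

lemma dd_curve (f : Fin 4 → Polynomial F) (G : MvPolynomial (Fin 4) F) (y : F) :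
    (Polynomial.derivative (aeval f G)).eval y =
      dd G (fun i => (f i).eval y) (fun i => (Polynomial.derivative (f i)).eval y) := by
  rw [chain, Polynomial.eval_finsetSum]
  simp [dd, eval_aeval]

lemma dd_line (G : MvPolynomial (Fin 4) F) (P v : Fin 4 → F) :
    dd G P v = (Polynomial.derivative
      (aeval (fun i => Polynomial.C (P i) + Polynomial.X * Polynomial.C (v i)) G)).eval 0 := by
  rw [dd_curve]
  simp

lemma hom_aeval_smul {R : Type*} [CommRing R] [Algebra F R] {G : MvPolynomial (Fin 4) F} {s : ℕ}
    (hG : G.IsHomogeneous s) (r : R) (f : Fin 4 → R) :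
    aeval (fun i => r * f i) G = r ^ s * aeval f G := by
  rw [aeval_def, aeval_def, eval₂_eq, eval₂_eq, Finset.mul_sum]
  refine Finset.sum_congr rfl fun d hd => ?_
  have h1 : ∑ i ∈ d.support, d i = s := by
    have := hG (mem_support_iff.1 hd)
    rw [← this, Finsupp.weight_apply, Finsupp.sum]
    simp
  simp only [mul_pow, Finset.prod_mul_distrib]
  rw [Finset.prod_pow_eq_pow_sum, h1]
  ring

lemma hom_eval_smul {G : MvPolynomial (Fin 4) F} {s : ℕ}
    (hG : G.IsHomogeneous s) (r : F) (f : Fin 4 → F) :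
    eval (r • f) G = r ^ s * eval f G := by
  rw [ev, ev]
  exact hom_aeval_smul hG r f

lemma dd_self {G : MvPolynomial (Fin 4) F} {s : ℕ}
    (hG : G.IsHomogeneous s) (P : Fin 4 → F) (hP : eval P G = 0) : dd G P P = 0 := by
  rw [dd_line]
  have : (fun i => Polynomial.C (P i) + Polynomial.X * Polynomial.C (P i)) =
      fun i => (1 + Polynomial.X) * Polynomial.C (P i) := by ext1 i; ring
  rw [this, hom_aeval_smul hG]
  have h2 : aeval (fun i => Polynomial.C (P i)) G = Polynomial.C (eval P G) := by
    rw [ev]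
    exact MvPolynomial.aeval_algebraMap_apply (Polynomial F) P G
  rw [h2, hP]
  simp

lemma decomp {s : ℕ} {G : MvPolynomial (Fin 4) F} (hG : G.IsHomogeneous (s + 1)) :
    ∃ (c : F) (A B D : MvPolynomial (Fin 4) F), A.IsHomogeneous s ∧ B.IsHomogeneous s ∧
      D.IsHomogeneous s ∧ G = C c * X 3 ^ (s + 1) + X 0 * A + X 1 * B + X 2 * D := by
  have key : ∀ S : Finset (Fin 4 →₀ ℕ), S ⊆ G.support →
      ∃ (c : F) (A B D : MvPolynomial (Fin 4) F), A.IsHomogeneous s ∧ B.IsHomogeneous s ∧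
      D.IsHomogeneous s ∧ ∑ d ∈ S, monomial d (coeff d G) =
        C c * X 3 ^ (s + 1) + X 0 * A + X 1 * B + X 2 * D := by
    classical
    intro S
    induction S using Finset.induction_on with
    | empty =>
      intro _
      exact ⟨0, 0, 0, 0, isHomogeneous_zero _ _ _, isHomogeneous_zero _ _ _,
        isHomogeneous_zero _ _ _, by simp⟩
    | insert d S hd ih =>
      intro hS
      obtain ⟨c, A, B, D, hA, hB, hD, h⟩ := ih (fun x hx => hS (Finset.mem_insert_of_mem hx))
      have hdd : d.degree = s + 1 := by
        have := hG (mem_support_iff.1 (hS (Finset.mem_insert_self _ _)))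
        rwa [Finsupp.degree_eq_weight_one]
      rw [Finset.sum_insert hd, h]
      have hmon : ∀ i : Fin 4, d i ≠ 0 → ∃ M : MvPolynomial (Fin 4) F, M.IsHomogeneous s ∧
          monomial d (coeff d G) = X i * M := by
        intro i hi
        refine ⟨monomial (d - Finsupp.single i 1) (coeff d G), ?_, ?_⟩
        · apply isHomogeneous_monomial
          have h3 : d = (d - Finsupp.single i 1) + Finsupp.single i 1 := by
            ext j
            by_cases hj : i = j
            · subst hj; simp; omega
            · simp [hj]
          have := congrArg Finsupp.degree h3
          rw [map_add, Finsupp.degree_single, hdd] at this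
          omega
        · rw [X, monomial_mul, one_mul]
          congr 2
          apply Finsupp.ext
          intro j
          by_cases hj : i = j
          · subst hj; simp; omega
          · simp [hj]
      by_cases h0 : d 0 ≠ 0
      · obtain ⟨M, hM, e⟩ := hmon 0 h0
        exact ⟨c, A + M, B, D, hA.add hM, hB, hD, by rw [e]; ring⟩
      by_cases h1 : d 1 ≠ 0
      · obtain ⟨M, hM, e⟩ := hmon 1 h1
        exact ⟨c, A, B + M, D, hA, hB.add hM, hD, by rw [e]; ring⟩
      by_cases h2 : d 2 ≠ 0
      · obtain ⟨M, hM, e⟩ := hmon 2 h2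
        exact ⟨c, A, B, D + M, hA, hB, hD.add hM, by rw [e]; ring⟩
      push Not at h0 h1 h2
      refine ⟨c + coeff d G, A, B, D, hA, hB, hD, ?_⟩
      have h3 : d = Finsupp.single 3 (s + 1) := by
        have h4 : d 3 = s + 1 := by
          rw [Finsupp.degree_eq_sum, Fin.sum_univ_four] at hdd
          omega
        ext j
        fin_cases j <;> simp [h0, h1, h2, h4]
      have h5 : monomial d (coeff d G) = C (coeff d G) * X 3 ^ (s + 1) := by
        conv_lhs => rw [h3]
        rw [C_mul_X_pow_eq_monomial, ← h3]
      rw [h5, C_add]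
      ring
  obtain ⟨c, A, B, D, h⟩ := key G.support (Finset.Subset.refl _)
  rw [← MvPolynomial.as_sum] at h
  exact ⟨c, A, B, D, h⟩

/-- Linear substitution with new basis `e`. -/
def Phi (e : Fin 4 → Fin 4 → F) : MvPolynomial (Fin 4) F →ₐ[F] MvPolynomial (Fin 4) F :=
  aeval (fun i => ∑ j, C (e j i) * X j)

lemma aeval_Phi {R : Type*} [CommRing R] [Algebra F R] (e : Fin 4 → Fin 4 → F) (f : Fin 4 → R)
    (G : MvPolynomial (Fin 4) F) :
    aeval f (Phi e G) = aeval (fun i => ∑ j, algebraMap F R (e j i) * f j) G := by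
  rw [Phi, ← AlgHom.comp_apply]
  congr 1
  apply MvPolynomial.algHom_ext
  intro i
  simp

lemma eval_Phi (e : Fin 4 → Fin 4 → F) (f : Fin 4 → F) (G : MvPolynomial (Fin 4) F) :
    eval f (Phi e G) = eval (∑ j, f j • e j) G := by
  rw [ev, ev, aeval_Phi]
  congr 2
  ext1 i
  simp [mul_comm]

lemma Phi_hom (e : Fin 4 → Fin 4 → F) {G : MvPolynomial (Fin 4) F} {s : ℕ}
    (hG : G.IsHomogeneous s) : (Phi e G).IsHomogeneous s := by
  have := hG.aeval (n := 1) (fun i => ∑ j, C (e j i) * X j) (fun i =>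
    IsHomogeneous.sum _ _ _ fun j _ => isHomogeneous_C_mul_X _ _)
  simpa [Phi] using this

lemma Phi_mul {M N : Fin 4 → Fin 4 → F}
    (h3 : ∀ k i, ∑ j, M k j * N j i = (1 : Matrix (Fin 4) (Fin 4) F) k i)
    (G : MvPolynomial (Fin 4) F) : Phi M (Phi N G) = G := by
  conv_lhs => rw [Phi]
  rw [aeval_Phi]
  conv_rhs => rw [← MvPolynomial.aeval_X_left_apply G]
  congr 2
  ext1 i
  calc _ = ∑ k, C (∑ j, M k j * N j i) * X k := by
        simp only [Finset.mul_sum, map_sum, Finset.sum_mul, MvPolynomial.algebraMap_eq, C_mul]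
        rw [Finset.sum_comm]
        exact Finset.sum_congr rfl fun _ _ => Finset.sum_congr rfl fun _ _ => by ring
    _ = X i := by
        simp only [h3, Matrix.one_apply]
        simp

lemma Phi_inv {e : Fin 4 → Fin 4 → F} (he : LinearIndependent F e) :
    ∃ e' : Fin 4 → Fin 4 → F, (∀ G, Phi e' (Phi e G) = G) ∧ ∀ G, Phi e (Phi e' G) = G := by
  have h1 : IsUnit (Matrix.of e) := Matrix.linearIndependent_rows_iff_isUnit.1 he
  have h2 := (Matrix.isUnit_iff_isUnit_det _).1 h1
  have h3 := Matrix.nonsing_inv_mul _ h2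
  have h4 := Matrix.mul_nonsing_inv _ h2
  generalize (Matrix.of e)⁻¹ = M at h3 h4
  refine ⟨fun i j => M i j, fun G => Phi_mul (fun k i => ?_) G, fun G => Phi_mul (fun k i => ?_) G⟩
  · rw [← h3, Matrix.mul_apply]; rfl
  · rw [← h4, Matrix.mul_apply]; rfl

end EQ
namespace EQ

variable {F : Type} [Field F]

/-- The last coordinate vector. -/
def e3 : Fin 4 → F := ![0, 0, 0, 1]

lemma dd_decomp (s : ℕ) (c : F) (A B D : MvPolynomial (Fin 4) F) (v : Fin 4 → F) :
    dd (C c * X 3 ^ (s + 1) + X 0 * A + X 1 * B + X 2 * D) e3 v =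
      v 0 * eval e3 A + v 1 * eval e3 B + v 2 * eval e3 D + v 3 * (c * (s + 1)) := by
  simp [dd, Fin.sum_univ_four, e3]

lemma eval_decomp (s : ℕ) (c : F) (A B D : MvPolynomial (Fin 4) F) :
    eval e3 (C c * X 3 ^ (s + 1) + X 0 * A + X 1 * B + X 2 * D) = c := by
  simp [e3]

lemma hom_zero {A : MvPolynomial (Fin 4) F} (h : A.IsHomogeneous 0) : ∃ a : F, A = C a :=
  ⟨_, (totalDegree_eq_zero_iff_eq_C.1 ((totalDegree_zero_iff_isHomogeneous _).2 h))⟩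

/-- Parameters of a normalised quadric. -/
structure Par (F : Type) where
  l0 : F
  l1 : F
  l2 : F
  n0 : F
  n1 : F
  n2 : F

/-- The normalised quadric. -/
def Fst (p : Par F) : MvPolynomial (Fin 4) F :=
  X 0 * (X 3 + C p.l0 * X 0 + C p.l1 * X 1 + C p.l2 * X 2) +
    (C p.n0 * X 1 ^ 2 + C p.n1 * (X 1 * X 2) + C p.n2 * X 2 ^ 2)

lemma Fst_hom (p : Par F) : (Fst p).IsHomogeneous 2 := by
  have hX := fun i : Fin 4 => isHomogeneous_X F i
  unfold Fst
  refine IsHomogeneous.add ?_ ?_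
  · exact (hX 0).mul ((((hX 3).add ((hX 0).C_mul _)).add ((hX 1).C_mul _)).add ((hX 2).C_mul _))
  · exact ((((hX 1).pow 2).C_mul _).add (((hX 1).mul (hX 2)).C_mul _)).add (((hX 2).pow 2).C_mul _)

/-- The affine conics on the normalised quadric. -/
def crv (p : Par F) (c : F) : Fin 4 → Polynomial F :=
  ![-1, Polynomial.C c, Polynomial.X, Polynomial.C p.n2 * Polynomial.X ^ 2 +
    Polynomial.C (p.n1 * c - p.l2) * Polynomial.X +
    Polynomial.C (p.n0 * c ^ 2 + p.l0 - p.l1 * c)]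

lemma crv_Fst (p : Par F) (c : F) : aeval (crv p c) (Fst p) = 0 := by
  simp [Fst, crv, Polynomial.algebraMap_eq]
  ring

lemma normal {H : MvPolynomial (Fin 4) F} (hH : H.IsHomogeneous 2) (h0 : eval e3 H = 0)
    (h1 : dd H e3 ![1, 0, 0, 0] = 1) (h2 : dd H e3 ![0, 1, 0, 0] = 0)
    (h3 : dd H e3 ![0, 0, 1, 0] = 0) : ∃ p : Par F, H = Fst p := by
  obtain ⟨c, A, B, D, hA, hB, hD, rfl⟩ := decomp (s := 1) hH
  rw [eval_decomp] at h0
  rw [dd_decomp] at h1 h2 h3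
  obtain ⟨a, A0, A1, A2, hA0, hA1, hA2, rfl⟩ := decomp (s := 0) hA
  obtain ⟨b, B0, B1, B2, hB0, hB1, hB2, rfl⟩ := decomp (s := 0) hB
  obtain ⟨d, D0, D1, D2, hD0, hD1, hD2, rfl⟩ := decomp (s := 0) hD
  obtain ⟨a0, rfl⟩ := hom_zero hA0
  obtain ⟨a1, rfl⟩ := hom_zero hA1
  obtain ⟨a2, rfl⟩ := hom_zero hA2
  obtain ⟨b0, rfl⟩ := hom_zero hB0
  obtain ⟨b1, rfl⟩ := hom_zero hB1
  obtain ⟨b2, rfl⟩ := hom_zero hB2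
  obtain ⟨d0, rfl⟩ := hom_zero hD0
  obtain ⟨d1, rfl⟩ := hom_zero hD1
  obtain ⟨d2, rfl⟩ := hom_zero hD2
  rw [eval_decomp, eval_decomp, eval_decomp] at h1 h2 h3
  simp at h1 h2 h3
  subst h0 h1 h2 h3
  refine ⟨⟨a0, a1 + b0, a2 + d0, b1, b2 + d1, d2⟩, ?_⟩
  simp only [Fst, map_zero, map_one, C_add]
  ring

lemma deg_aux (f : Fin 4 → Polynomial F) (hf0 : (f 0).natDegree ≤ 1) (hf1 : (f 1).natDegree ≤ 1)
    (hf2 : (f 2).natDegree ≤ 1) (hf3 : (f 3).natDegree ≤ 2) :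
    ∀ (k : ℕ) (K : MvPolynomial (Fin 4) F), K.IsHomogeneous k →
      (aeval f K).natDegree ≤ 2 * k ∧
      (aeval f K).coeff (2 * k) = eval e3 K * ((f 3).coeff 2) ^ k := by
  intro k
  induction k with
  | zero =>
    intro K hK
    obtain ⟨a, rfl⟩ := hom_zero hK
    simp
  | succ k ih =>
    intro K hK
    obtain ⟨c, A, B, D, hA, hB, hD, rfl⟩ := decomp hK
    have hp : ((f 3) ^ (k + 1)).natDegree ≤ 2 * (k + 1) := by
      calc _ ≤ (k + 1) * (f 3).natDegree := Polynomial.natDegree_pow_le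
        _ ≤ (k + 1) * 2 := Nat.mul_le_mul_left _ hf3
        _ = _ := by ring
    have hq : ∀ (g : Polynomial F) (A : MvPolynomial (Fin 4) F), g.natDegree ≤ 1 →
        A.IsHomogeneous k → (g * aeval f A).natDegree ≤ 2 * k + 1 := by
      intro g A hg hA
      refine Polynomial.natDegree_mul_le.trans ?_
      have := (ih A hA).1
      omega
    have q0 := hq _ A hf0 hA
    have q1 := hq _ B hf1 hB
    have q2 := hq _ D hf2 hD
    rw [eval_decomp]
    simp only [map_add, map_mul, map_pow, aeval_X, aeval_C, Polynomial.algebraMap_eq]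
    constructor
    · refine Polynomial.natDegree_add_le_of_degree_le (Polynomial.natDegree_add_le_of_degree_le
        (Polynomial.natDegree_add_le_of_degree_le ?_ ?_) ?_) ?_
      · exact (Polynomial.natDegree_C_mul_le _ _).trans hp
      all_goals omega
    · rw [Polynomial.coeff_add, Polynomial.coeff_add, Polynomial.coeff_add,
        Polynomial.coeff_eq_zero_of_natDegree_lt (lt_of_le_of_lt q0 (by omega)),
        Polynomial.coeff_eq_zero_of_natDegree_lt (lt_of_le_of_lt q1 (by omega)),
        Polynomial.coeff_eq_zero_of_natDegree_lt (lt_of_le_of_lt q2 (by omega)),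
        Polynomial.coeff_C_mul, mul_comm 2 (k + 1), mul_comm (k+1) 2]
      have := Polynomial.coeff_pow_of_natDegree_le (m := k + 1) hf3
      rw [mul_comm] at this
      rw [mul_comm 2 (k+1), mul_comm (k+1) 2, this]
      ring

lemma crv_deg (p : Par F) (c : F) (k : ℕ) (K : MvPolynomial (Fin 4) F) (hK : K.IsHomogeneous k) :
    (aeval (crv p c) K).natDegree ≤ 2 * k ∧
      (aeval (crv p c) K).coeff (2 * k) = eval e3 K * p.n2 ^ k := by
  have := deg_aux (crv p c) ?_ ?_ ?_ ?_ k K hK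
  · convert this using 4
    simp only [crv, Matrix.cons_val, Polynomial.coeff_add, Polynomial.coeff_C_mul,
      Polynomial.coeff_X_pow, Polynomial.coeff_X, Polynomial.coeff_C]
    norm_num
  · simp [crv]
  · simp [crv]
  · simp [crv]
  · simp only [crv]
    exact Polynomial.natDegree_quadratic_le

lemma deg_main (p : Par F) (k : ℕ) (G : MvPolynomial (Fin 4) F) (hG : G.IsHomogeneous (k + 2))
    (h0 : eval e3 G = 0) (h1 : dd G e3 ![0, 0, 1, 0] = 0) :
    ∃ κ : F, ∀ c : F, (aeval (crv p c) G).natDegree ≤ 2 * (k + 1) ∧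
      (aeval (crv p c) G).coeff (2 * (k + 1)) =
        κ + c * (dd G e3 ![0, 1, 0, 0] * p.n2 ^ (k + 1)) := by
  obtain ⟨c₀, A, B, D, hA, hB, hD, rfl⟩ := decomp (s := k + 1) hG
  rw [eval_decomp] at h0
  rw [dd_decomp] at h1
  obtain ⟨d, D0, D1, D2, hD0, hD1, hD2, rfl⟩ := decomp (s := k) hD
  rw [eval_decomp] at h1
  subst h0
  have h2 : d = 0 := by simpa using h1
  subst h2
  refine ⟨- eval e3 A * p.n2 ^ (k + 1) + eval e3 D2 * p.n2 ^ k, fun c => ?_⟩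
  have e : aeval (crv p c) (C 0 * X 3 ^ (k + 1 + 1) + X 0 * A + X 1 * B +
      X 2 * (C 0 * X 3 ^ (k + 1) + X 0 * D0 + X 1 * D1 + X 2 * D2)) =
      - aeval (crv p c) A + Polynomial.C c * aeval (crv p c) B + Polynomial.X *
        (- aeval (crv p c) D0 + Polynomial.C c * aeval (crv p c) D1 +
          Polynomial.X * aeval (crv p c) D2) := by
    simp [crv]
  obtain ⟨a1, a2⟩ := crv_deg p c _ A hA
  obtain ⟨b1, b2⟩ := crv_deg p c _ B hB
  obtain ⟨c1, c2⟩ := crv_deg p c _ D0 hD0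
  obtain ⟨d1, d2⟩ := crv_deg p c _ D1 hD1
  obtain ⟨f1, f2⟩ := crv_deg p c _ D2 hD2
  rw [e, dd_decomp]
  have m1 : (- aeval (crv p c) D0 + Polynomial.C c * aeval (crv p c) D1).natDegree ≤ 2 * k := by
    refine Polynomial.natDegree_add_le_of_degree_le ?_ ?_
    · rwa [Polynomial.natDegree_neg]
    · exact (Polynomial.natDegree_C_mul_le _ _).trans d1
  have m2 : (Polynomial.X * aeval (crv p c) D2).natDegree ≤ 2 * k + 1 := by
    refine Polynomial.natDegree_mul_le.trans ?_
    have := Polynomial.natDegree_X_le (R := F)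
    omega
  constructor
  · refine Polynomial.natDegree_add_le_of_degree_le (Polynomial.natDegree_add_le_of_degree_le
      ?_ ?_) ?_
    · rwa [Polynomial.natDegree_neg]
    · exact (Polynomial.natDegree_C_mul_le _ _).trans b1
    · refine Polynomial.natDegree_mul_le.trans ?_
      have := Polynomial.natDegree_X_le (R := F)
      have := Polynomial.natDegree_add_le_of_degree_le (m1.trans (Nat.le_succ _)) m2
      omega
  · rw [Polynomial.coeff_add, Polynomial.coeff_add, Polynomial.coeff_neg, Polynomial.coeff_C_mul,
      a2, b2, show 2 * (k + 1) = (2 * k + 1) + 1 by ring, Polynomial.coeff_X_mul,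
      Polynomial.coeff_add, Polynomial.coeff_X_mul, f2,
      Polynomial.coeff_eq_zero_of_natDegree_lt (lt_of_le_of_lt m1 (by omega))]
    simp
    ring

lemma mem_span_X03 (A : MvPolynomial (Fin 4) F) (h : aeval (![0, 0, X 2, X 3] :
    Fin 4 → MvPolynomial (Fin 4) F) A = 0) : ∃ a b, A = a * X 1 + b * X 0 := by
  have h1 : Ideal.Quotient.mkₐ F (Ideal.span {(X 1 : MvPolynomial (Fin 4) F), X 0}) =
      (Ideal.Quotient.mkₐ F (Ideal.span {(X 1 : MvPolynomial (Fin 4) F), X 0})).comp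
        (aeval (![0, 0, X 2, X 3] : Fin 4 → MvPolynomial (Fin 4) F)) := by
    apply MvPolynomial.algHom_ext
    intro i
    have z0 : Ideal.Quotient.mk (Ideal.span {(X 1 : MvPolynomial (Fin 4) F), X 0}) (X 0) = 0 :=
      Ideal.Quotient.eq_zero_iff_mem.2 (Ideal.subset_span (by simp))
    have z1 : Ideal.Quotient.mk (Ideal.span {(X 1 : MvPolynomial (Fin 4) F), X 0}) (X 1) = 0 :=
      Ideal.Quotient.eq_zero_iff_mem.2 (Ideal.subset_span (by simp))
    fin_cases i <;> simp [z0, z1]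
  have h2 := DFunLike.congr_fun h1 A
  rw [AlgHom.comp_apply, h, map_zero] at h2
  have h3 := Ideal.Quotient.eq_zero_iff_mem.1 h2
  obtain ⟨a, b, hab⟩ := Ideal.mem_span_pair.1 h3
  exact ⟨a, b, hab.symm⟩

lemma cancel_X0 (p : Par F) (hn : p.n2 ≠ 0) (c : F) (G : MvPolynomial (Fin 4) F)
    (h : X 0 * G ∈ Ideal.span {Fst p, X 1 + C c * X 0}) :
    G ∈ Ideal.span {Fst p, X 1 + C c * X 0} := by
  obtain ⟨A, B, hAB⟩ := Ideal.mem_span_pair.1 h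
  have hA : aeval (![0, 0, X 2, X 3] : Fin 4 → MvPolynomial (Fin 4) F) A = 0 := by
    have := congrArg (aeval (![0, 0, X 2, X 3] : Fin 4 → MvPolynomial (Fin 4) F)) hAB
    simp [Fst] at this
    simpa [hn] using this
  obtain ⟨a, b, rfl⟩ := mem_span_X03 A hA
  have e : X 0 * (G - (b - C c * a) * Fst p) = (X 1 + C c * X 0) * (B + a * Fst p) := by
    linear_combination -hAB
  have hX : Prime (X 0 : MvPolynomial (Fin 4) F) := X_prime
  rcases hX.dvd_or_dvd (Dvd.intro _ e) with h1 | ⟨B', h1⟩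
  · exfalso
    obtain ⟨r, hr⟩ := h1
    have := congrArg (eval (![0, 1, 0, 0] : Fin 4 → F)) hr
    simp at this
  · rw [h1] at e
    have e2 : G - (b - C c * a) * Fst p = (X 1 + C c * X 0) * B' := by
      apply mul_left_cancel₀ hX.ne_zero
      linear_combination e
    exact Ideal.mem_span_pair.2 ⟨b - C c * a, B', by linear_combination -e2⟩

lemma divide (p : Par F) (hn : p.n2 ≠ 0) (c : F) {s : ℕ} (G : MvPolynomial (Fin 4) F)
    (hG : G.IsHomogeneous s) (h : aeval (crv p c) G = 0) :
    G ∈ Ideal.span {Fst p, X 1 + C c * X 0} := by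
  set I := Ideal.span {Fst p, X 1 + C c * X 0} with hI
  set R := MvPolynomial (Fin 4) F ⧸ I with hR
  let π : MvPolynomial (Fin 4) F →ₐ[F] R := Ideal.Quotient.mkₐ F I
  let S := Localization.Away (π (X 0))
  let ι : R →ₐ[F] S := IsScalarTower.toAlgHom F R S
  let θ : MvPolynomial (Fin 4) F →ₐ[F] S := ι.comp π
  have hu : IsUnit (θ (X 0)) := IsLocalization.Away.algebraMap_isUnit (π (X 0))
  obtain ⟨u, hu⟩ := hu.exists_right_inv
  have hF : θ (Fst p) = 0 := by
    have : π (Fst p) = 0 := Ideal.Quotient.eq_zero_iff_mem.2 (Ideal.subset_span (by simp))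
    rw [AlgHom.comp_apply, this, map_zero]
  have hL : θ (X 1 + C c * X 0) = 0 := by
    have : π (X 1 + C c * X 0) = 0 :=
      Ideal.Quotient.eq_zero_iff_mem.2 (Ideal.subset_span (by simp))
    rw [AlgHom.comp_apply, this, map_zero]
  have hC : ∀ a : F, θ (C a) = algebraMap F S a := fun a => θ.commutes a
  let ψ : Polynomial F →ₐ[F] S := Polynomial.aeval (- θ (X 2) * u)
  have h1 : θ = aeval (fun i => (- θ (X 0)) * ψ (crv p c i)) := by
    apply MvPolynomial.algHom_ext
    intro i
    rw [aeval_X]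
    simp only [Fst, map_add, map_mul, map_pow, hC] at hF hL
    have hψC : ∀ a : F, ψ (Polynomial.C a) = algebraMap F S a := fun a => ψ.commutes a
    have hψX : ψ Polynomial.X = - θ (X 2) * u := Polynomial.aeval_X _
    fin_cases i
    · simp [crv]
      ring
    · simp [crv, hψC]
      linear_combination hL
    · simp only [crv]
      simp only [Fin.reduceFinMk, Matrix.cons_val, hψX]
      linear_combination -θ (X 2) * hu
    · simp only [crv]
      simp only [Fin.reduceFinMk, Matrix.cons_val, map_add, map_mul, map_pow, hψX, hψC, map_sub]
      have h1 : θ (X 1) = - (algebraMap F S c * θ (X 0)) := by linear_combination hL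
      rw [h1] at hF
      generalize θ (X 0) = x0 at *
      generalize θ (X 2) = x2 at *
      generalize θ (X 3) = x3 at *
      generalize algebraMap F S c = c' at *
      generalize algebraMap F S p.n0 = n0 at *
      generalize algebraMap F S p.n1 = n1 at *
      generalize algebraMap F S p.n2 = n2 at *
      generalize algebraMap F S p.l0 = l0 at *
      generalize algebraMap F S p.l1 = l1 at *
      generalize algebraMap F S p.l2 = l2 at *
      linear_combination u * hF +
        (-(x3 + l0 * x0 - l1 * c' * x0) - n0 * c' ^ 2 * x0 + n2 * x2 ^ 2 * u) * hu
  have h2 : θ G = 0 := by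
    rw [h1, hom_aeval_smul hG]
    have : aeval (fun i => ψ (crv p c i)) G = ψ (aeval (crv p c) G) := by
      rw [← AlgHom.comp_apply, MvPolynomial.comp_aeval]
    rw [this, h, map_zero, mul_zero]
  have h3 : ∃ m : ℕ, π (X 0) ^ m * π G = 0 := by
    have : algebraMap R S (π G) = 0 := h2
    rw [IsLocalization.map_eq_zero_iff (Submonoid.powers (π (X 0)))] at this
    obtain ⟨⟨_, m, rfl⟩, hm⟩ := this
    exact ⟨m, hm⟩
  obtain ⟨m, hm⟩ := h3
  rw [← map_pow, ← map_mul] at hm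
  have h4 : X 0 ^ m * G ∈ I := Ideal.Quotient.eq_zero_iff_mem.1 hm
  clear hm
  induction m with
  | zero => simpa using h4
  | succ m ih =>
    apply ih
    apply cancel_X0 p hn c
    rw [← mul_assoc, ← pow_succ']
    exact h4

lemma hom_mul_comp {A L : MvPolynomial (Fin 4) F} {l s : ℕ} (hL : L.IsHomogeneous l) :
    homogeneousComponent (s + l) (A * L) = homogeneousComponent s A * L := by
  have := DirectSum.coe_decompose_mul_add_of_right_mem (homogeneousSubmodule (Fin 4) F)
    (a := A) (b := L) (i := s) (j := l) hL
  have key : ∀ (φ : MvPolynomial (Fin 4) F) (i : ℕ),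
      (DirectSum.decompose (homogeneousSubmodule (Fin 4) F) φ i : MvPolynomial (Fin 4) F) =
        homogeneousComponent i φ := fun φ i => decomposition.decompose'_apply φ i
  rwa [key, key] at this

lemma divide' (p : Par F) (hn : p.n2 ≠ 0) (c : F) {s : ℕ} (G : MvPolynomial (Fin 4) F)
    (hG : G.IsHomogeneous (s + 2)) (h : aeval (crv p c) G = 0) :
    ∃ A B : MvPolynomial (Fin 4) F, B.IsHomogeneous (s + 1) ∧
      G = A * Fst p + B * (X 1 + C c * X 0) := by
  obtain ⟨A, B, e⟩ := Ideal.mem_span_pair.1 (divide p hn c G hG h)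
  refine ⟨homogeneousComponent s A, homogeneousComponent (s + 1) B,
    homogeneousComponent_isHomogeneous _ _, ?_⟩
  have hL : (X 1 + C c * X 0 : MvPolynomial (Fin 4) F).IsHomogeneous 1 :=
    (isHomogeneous_X _ _).add ((isHomogeneous_X _ _).C_mul _)
  have e2 := congrArg (homogeneousComponent (s + 2)) e
  rw [map_add, hom_mul_comp (Fst_hom p), show s + 2 = (s + 1) + 1 by ring, hom_mul_comp hL,
    homogeneousComponent_eq_self hG] at e2
  exact e2.symm

end EQ
namespace EQ

variable {F : Type} [Field F]

/-- `dd` as a linear map. -/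
def ddL (G : MvPolynomial (Fin 4) F) (P : Fin 4 → F) : (Fin 4 → F) →ₗ[F] F where
  toFun v := dd G P v
  map_add' u v := by simp [dd, add_mul, Finset.sum_add_distrib]
  map_smul' r v := by simp [dd, Finset.mul_sum, mul_assoc]

lemma dd_Phi (e : Fin 4 → Fin 4 → F) (G : MvPolynomial (Fin 4) F) (w v : Fin 4 → F) :
    dd (Phi e G) w v = dd G (∑ j, w j • e j) (∑ j, v j • e j) := by
  rw [dd_line, dd_line, aeval_Phi]
  have : (fun i => ∑ j, algebraMap F (Polynomial F) (e j i) *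
      (Polynomial.C (w j) + Polynomial.X * Polynomial.C (v j))) =
      fun i => Polynomial.C ((∑ j, w j • e j) i) + Polynomial.X * Polynomial.C ((∑ j, v j • e j) i) := by
    ext1 i
    simp only [Polynomial.algebraMap_eq, Finset.sum_apply, Pi.smul_apply, smul_eq_mul, map_sum,
      Finset.mul_sum, ← Finset.sum_add_distrib, Polynomial.C_mul]
    exact Finset.sum_congr rfl fun j _ => by ring
  rw [this]

lemma exists_basis (φ γ : (Fin 4 → F) →ₗ[F] F) (P : Fin 4 → F) (hP : P ≠ 0) (hφ : φ ≠ 0)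
    (h1 : φ P = 0) (h2 : γ P = 0) :
    ∃ e : Fin 4 → Fin 4 → F, LinearIndependent F e ∧ e 3 = P ∧ φ (e 0) = 1 ∧ φ (e 1) = 0 ∧
      φ (e 2) = 0 ∧ γ (e 2) = 0 ∧ ((∃ v, φ v = 0 ∧ γ v ≠ 0) → γ (e 1) ≠ 0) := by
  obtain ⟨a, ha⟩ : ∃ a, φ a = 1 := by
    obtain ⟨v, hv⟩ : ∃ v, φ v ≠ 0 := by
      by_contra! h
      exact hφ (LinearMap.ext h)
    exact ⟨(φ v)⁻¹ • v, by simp [hv]⟩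
  have hV : Module.finrank F (Fin 4 → F) = 4 := by simp
  obtain ⟨e2, he2, he2'⟩ : ∃ e2, e2 ∈ LinearMap.ker (φ.prod γ) ∧ e2 ∉ Submodule.span F {P} := by
    by_contra! h
    have hle : LinearMap.ker (φ.prod γ) ≤ Submodule.span F {P} := h
    have := Submodule.finrank_mono hle
    have h3 := finrank_span_singleton (K := F) hP
    have h4 := (φ.prod γ).finrank_range_add_finrank_ker
    have h5 := Submodule.finrank_le (LinearMap.range (φ.prod γ))
    simp at h5
    omega
  have he2a : φ e2 = 0 ∧ γ e2 = 0 := by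
    simpa [LinearMap.mem_ker] using he2
  have hsp : Module.finrank F (Submodule.span F (Set.range ![e2, P])) ≤ 2 := by
    have := finrank_range_le_card (R := F) ![e2, P]
    simpa [Set.finrank] using this
  have hspγ : Submodule.span F (Set.range ![e2, P]) ≤ LinearMap.ker γ := by
    rw [Submodule.span_le]
    rintro _ ⟨i, rfl⟩
    fin_cases i <;> simp [he2a, h2]
  obtain ⟨e1, he1, he1', he1''⟩ : ∃ e1, φ e1 = 0 ∧
      e1 ∉ Submodule.span F (Set.range ![e2, P]) ∧
      ((∃ v, φ v = 0 ∧ γ v ≠ 0) → γ e1 ≠ 0) := by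
    by_cases hv : ∃ v, φ v = 0 ∧ γ v ≠ 0
    · obtain ⟨v, hv1, hv2⟩ := hv
      exact ⟨v, hv1, fun h => hv2 (hspγ h), fun _ => hv2⟩
    · obtain ⟨e1, h3, h4⟩ : ∃ e1, e1 ∈ LinearMap.ker φ ∧
          e1 ∉ Submodule.span F (Set.range ![e2, P]) := by
        by_contra! h
        have hle : LinearMap.ker φ ≤ Submodule.span F (Set.range ![e2, P]) := h
        have := Submodule.finrank_mono hle
        have h4 := φ.finrank_range_add_finrank_ker
        have h5 := Submodule.finrank_le (LinearMap.range φ)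
        simp at h5
        omega
      exact ⟨e1, h3, h4, fun h => absurd h hv⟩
  refine ⟨![a, e1, e2, P], ?_, rfl, ha, he1, he2a.1, he2a.2, he1''⟩
  refine linearIndependent_finCons.2 ⟨linearIndependent_finCons.2 ⟨linearIndependent_finCons.2
    ⟨?_, ?_⟩, he1'⟩, ?_⟩
  · exact LinearIndependent.of_subsingleton 0 (by simpa using hP)
  · simpa using he2'
  · intro h
    have h3 : Submodule.span F (Set.range ![e1, e2, P]) ≤ LinearMap.ker φ := by
      rw [Submodule.span_le]
      rintro _ ⟨i, rfl⟩
      fin_cases i <;> simp [he2a, h1, he1]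
    have := h3 h
    rw [LinearMap.mem_ker, ha] at this
    exact one_ne_zero this

/-- Normal form data of the quadric at a point `P`. -/
structure NF (Fp : MvPolynomial (Fin 4) F) (P : Fin 4 → F) (e : Fin 4 → Fin 4 → F)
    (p : Par F) : Prop where
  li : LinearIndependent F e
  e3 : e 3 = P
  hF : Phi e Fp = Fst p
  aniso : ∀ a b : F, p.n0 * a ^ 2 + p.n1 * (a * b) + p.n2 * b ^ 2 = 0 → a = 0 ∧ b = 0

lemma sum_e3 (e : Fin 4 → Fin 4 → F) : ∑ j, (EQ.e3 : Fin 4 → F) j • e j = e 3 := by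
  simp [Fin.sum_univ_four, EQ.e3]

lemma exists_NF {Fp : MvPolynomial (Fin 4) F} (hX : IsEllipticQuadric F Fp)
    {s : ℕ} {G : MvPolynomial (Fin 4) F} (hG : G.IsHomogeneous s) {P : Fin 4 → F} (hP : P ≠ 0)
    (h1 : eval P Fp = 0) (h2 : eval P G = 0) :
    ∃ e p, NF Fp P e p ∧ eval EQ.e3 (Phi e G) = 0 ∧ dd (Phi e G) EQ.e3 ![0, 0, 1, 0] = 0 ∧
      ((∃ v, dd Fp P v = 0 ∧ dd G P v ≠ 0) → dd (Phi e G) EQ.e3 ![0, 1, 0, 0] ≠ 0) := by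
  obtain ⟨_, hF2, hsm, hnl⟩ := hX
  have hφ : ddL Fp P ≠ 0 := by
    intro h
    obtain ⟨i, hi⟩ := hsm (algebraMap F (AlgebraicClosure F) ∘ P) (by
      intro h0
      apply hP
      ext j
      have := congrFun h0 j
      simpa using this) (by
      rw [MvPolynomial.aeval_algebraMap_apply, ← ev, h1, map_zero])
    apply hi
    rw [MvPolynomial.aeval_algebraMap_apply, ← ev]
    have h3 : dd Fp P (Pi.single i 1) = 0 := DFunLike.congr_fun h (Pi.single i 1)
    have h4 : dd Fp P (Pi.single i 1) = eval P (pderiv i Fp) := by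
      rw [dd, Finset.sum_eq_single i]
      · rw [Pi.single_eq_same, one_mul]
      · intro b _ hb
        rw [Pi.single_eq_of_ne hb, zero_mul]
      · intro h; exact absurd (Finset.mem_univ _) h
    rw [← h4, h3, map_zero]
  obtain ⟨e, hli, he3, g0, g1, g2, g3, g4⟩ := exists_basis (ddL Fp P) (ddL G P) P hP hφ
    (dd_self hF2 P h1) (dd_self hG P h2)
  change dd Fp P (e 0) = 1 at g0
  change dd Fp P (e 1) = 0 at g1
  change dd Fp P (e 2) = 0 at g2
  change dd G P (e 2) = 0 at g3
  change (∃ v, dd Fp P v = 0 ∧ dd G P v ≠ 0) → dd G P (e 1) ≠ 0 at g4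
  obtain ⟨p, hp⟩ := normal (Phi_hom e hF2) (by rw [eval_Phi, sum_e3, he3, h1])
    (by rw [dd_Phi, sum_e3, he3]; simpa [Fin.sum_univ_four] using g0)
    (by rw [dd_Phi, sum_e3, he3]; simpa [Fin.sum_univ_four] using g1)
    (by rw [dd_Phi, sum_e3, he3]; simpa [Fin.sum_univ_four] using g2)
  refine ⟨e, p, ⟨hli, he3, hp, ?_⟩, by rw [eval_Phi, sum_e3, he3, h2], ?_, ?_⟩
  · intro a b hab
    by_contra hne
    apply hnl
    refine ⟨e 3, a • e 1 + b • e 2, ?_, ?_⟩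
    · rw [LinearIndependent.pair_iff]
      intro x y hxy
      have := Fintype.linearIndependent_iff.1 hli ![0, y * a, y * b, x] (by
        rw [← hxy]
        simp [Fin.sum_univ_four, smul_smul]
        abel)
      have t1 := this 1
      have t2 := this 2
      have t3 := this 3
      simp at t1 t2 t3
      refine ⟨t3, ?_⟩
      by_contra hy
      exact hne ⟨by simpa [hy] using t1, by simpa [hy] using t2⟩
    · intro x y
      have : x • e 3 + y • (a • e 1 + b • e 2) = ∑ j, (![0, y * a, y * b, x] : Fin 4 → F) j • e j := by
        simp [Fin.sum_univ_four, smul_smul]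
        abel
      rw [this, ← eval_Phi, hp]
      simp [Fst]
      linear_combination y ^ 2 * hab
  · rw [dd_Phi, sum_e3, he3]; simpa [Fin.sum_univ_four] using g3
  · intro h
    rw [dd_Phi, sum_e3, he3]
    convert g4 h using 2
    simp [Fin.sum_univ_four]

/-- The point with parameters `(c, y)`. -/
def pt (e : Fin 4 → Fin 4 → F) (p : Par F) (c y : F) : Fin 4 → F :=
  ∑ j, (crv p c j).eval y • e j

lemma eval_pt (e : Fin 4 → Fin 4 → F) (p : Par F) (c y : F) (G : MvPolynomial (Fin 4) F) :
    eval (pt e p c y) G = (aeval (crv p c) (Phi e G)).eval y := by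
  rw [eval_aeval, eval_Phi, pt]

lemma pt_ne {e : Fin 4 → Fin 4 → F} (he : LinearIndependent F e) (p : Par F) (c y : F) :
    pt e p c y ≠ 0 := by
  intro h
  have := Fintype.linearIndependent_iff.1 he _ h 0
  simp [crv] at this

lemma cover {Fp : MvPolynomial (Fin 4) F} {P : Fin 4 → F} {e : Fin 4 → Fin 4 → F}
    {p : Par F} (h : NF Fp P e p) (w : Fin 4 → F) (hw : eval w Fp = 0) :
    (∃ r : F, w = r • P) ∨ ∃ c y r : F, w = r • pt e p c y := by
  obtain ⟨x, hx⟩ : ∃ x : Fin 4 → F, w = ∑ j, x j • e j := by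
    let b := basisOfLinearIndependentOfCardEqFinrank h.li (by simp)
    refine ⟨fun j => b.repr w j, ?_⟩
    have := b.sum_repr w
    simpa [b] using this.symm
  rw [hx, ← eval_Phi, h.hF] at hw
  simp [Fst] at hw
  by_cases h0 : x 0 = 0
  · left
    rw [h0] at hw
    obtain ⟨h1, h2⟩ := h.aniso (x 1) (x 2) (by linear_combination hw)
    refine ⟨x 3, ?_⟩
    rw [hx, Fin.sum_univ_four, h0, h1, h2, ← h.e3]
    simp
  · right
    refine ⟨- x 1 / x 0, - x 2 / x 0, - x 0, ?_⟩
    rw [hx, pt, Finset.smul_sum]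
    refine Finset.sum_congr rfl fun j _ => ?_
    rw [smul_smul]
    congr 1
    fin_cases j
    · simp [crv]
    · simp [crv]; field_simp
    · simp [crv]; field_simp
    · simp [crv]
      field_simp
      linear_combination hw

/-- The set of rational points. -/
def pts (Fp G : MvPolynomial (Fin 4) F) : Set (Projectivization F (Fin 4 → F)) :=
  {x | eval x.rep Fp = 0 ∧ eval x.rep G = 0}

section count
variable [Fintype F] [DecidableEq F]

/-- number of roots -/
def nr (f : Polynomial F) : ℕ := (Finset.univ.filter fun y => f.eval y = 0).card

lemma count {Fp : MvPolynomial (Fin 4) F} {P : Fin 4 → F} {e : Fin 4 → Fin 4 → F}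
    {p : Par F} (h : NF Fp P e p) (hP : P ≠ 0) {G : MvPolynomial (Fin 4) F} {s : ℕ}
    (hG : G.IsHomogeneous s) :
    (pts Fp G).ncard ≤ 1 + ∑ c : F, nr (aeval (crv p c) (Phi e G)) := by
  classical
  let T : Finset (Σ _ : F, F) := Finset.univ.sigma fun c =>
    Finset.univ.filter fun y => (aeval (crv p c) (Phi e G)).eval y = 0
  have hT : T.card = ∑ c : F, nr (aeval (crv p c) (Phi e G)) := Finset.card_sigma _ _
  let m : (Σ _ : F, F) → Projectivization F (Fin 4 → F) := fun z =>
    Projectivization.mk F (pt e p z.1 z.2) (pt_ne h.li p z.1 z.2)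
  have hsub : pts Fp G ⊆ ((insert (Projectivization.mk F P hP) (T.image m) :
      Finset (Projectivization F (Fin 4 → F))) : Set (Projectivization F (Fin 4 → F))) := by
    rintro x ⟨hx1, hx2⟩
    rw [Finset.coe_insert, Finset.coe_image]
    rcases cover h x.rep hx1 with ⟨r, hr⟩ | ⟨c, y, r, hr⟩
    · left
      rw [← x.mk_rep, Projectivization.mk_eq_mk_iff']
      exact ⟨r, hr.symm⟩
    · right
      have hr0 : r ≠ 0 := by
        rintro rfl
        exact x.rep_nonzero (by rw [hr, zero_smul])
      refine ⟨⟨c, y⟩, ?_, ?_⟩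
      · rw [hr, hom_eval_smul hG, eval_pt] at hx2
        simpa [T, hr0] using hx2
      · symm
        rw [← x.mk_rep, Projectivization.mk_eq_mk_iff']
        exact ⟨r, hr.symm⟩
  calc (pts Fp G).ncard ≤ _ := Set.ncard_le_ncard hsub (Finset.finite_toSet _)
    _ = _ := Set.ncard_coe_finset _
    _ ≤ (T.image m).card + 1 := Finset.card_insert_le _ _
    _ ≤ T.card + 1 := by gcongr; exact Finset.card_image_le
    _ = _ := by rw [hT, add_comm]

lemma nr_le {f : Polynomial F} (hf : f ≠ 0) : nr f ≤ f.natDegree := by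
  have : (Finset.univ.filter fun y => f.eval y = 0) ⊆ f.roots.toFinset := by
    intro y hy
    simpa [hf] using hy
  exact (Finset.card_le_card this).trans ((Multiset.toFinset_card_le _).trans f.card_roots')

lemma nr_lt {f : Polynomial F} (hf : f ≠ 0) (y : F) (h0 : f.eval y = 0)
    (h1 : (Polynomial.derivative f).eval y = 0) : nr f + 1 ≤ f.natDegree := by
  have h2 : 1 < f.rootMultiplicity y :=
    (Polynomial.one_lt_rootMultiplicity_iff_isRoot hf).2 ⟨h0, h1⟩
  rw [← Polynomial.count_roots] at h2
  have hy : y ∈ f.roots := Multiset.count_pos.1 (by omega)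
  have hsub : (Finset.univ.filter fun y => f.eval y = 0) ⊆ (f.roots.erase y).toFinset := by
    intro z hz
    have hz' : z ∈ f.roots := by simpa [hf] using hz
    rw [Multiset.mem_toFinset]
    by_cases hzy : z = y
    · subst hzy
      rw [← Multiset.count_pos, Multiset.count_erase_self]
      omega
    · exact (Multiset.mem_erase_of_ne hzy).2 hz'
  have h3 := (Finset.card_le_card hsub).trans (Multiset.toFinset_card_le _)
  have h4 := Multiset.card_erase_add_one hy
  have h5 := f.card_roots'
  unfold nr
  omega

lemma linear_count {Fp : MvPolynomial (Fin 4) F} (hX : IsEllipticQuadric F Fp)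
    {L : MvPolynomial (Fin 4) F} (hL : L.IsHomogeneous 1) (hL0 : L ≠ 0) :
    (pts Fp L).ncard ≤ Fintype.card F + 1 := by
  rcases (pts Fp L).eq_empty_or_nonempty with h | ⟨x, hx1, hx2⟩
  · rw [h]; simp
  obtain ⟨e, p, hNF, h1, h2, -⟩ := exists_NF hX hL x.rep_nonzero hx1 hx2
  have hc := count hNF x.rep_nonzero hL
  have hPL : Phi e L ≠ 0 := by
    obtain ⟨e', he', -⟩ := Phi_inv hNF.li
    intro h
    apply hL0
    rw [← he' L, h, map_zero]
  obtain ⟨c, A, B, D, hA, hB, hD, hE⟩ := decomp (s := 0) (Phi_hom e hL)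
  rw [hE, eval_decomp] at h1
  rw [hE, dd_decomp] at h2
  obtain ⟨a, rfl⟩ := hom_zero hA
  obtain ⟨b, rfl⟩ := hom_zero hB
  obtain ⟨d, rfl⟩ := hom_zero hD
  subst h1
  have hd : d = 0 := by simpa using h2
  subst hd
  have hev : ∀ c y, (aeval (crv p c) (Phi e L)).eval y = - a + c * b := by
    intro c y
    rw [hE]
    simp [crv]
  have hle : ∑ c : F, nr (aeval (crv p c) (Phi e L)) ≤ Fintype.card F := by
    by_cases hb : b = 0
    · have ha : a ≠ 0 := by
        rintro rfl
        apply hPL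
        rw [hE, hb]
        simp
      have : ∀ c : F, nr (aeval (crv p c) (Phi e L)) = 0 := by
        intro c
        simp [nr, hev, hb, ha]
      simp [this]
    · have : ∀ c : F, nr (aeval (crv p c) (Phi e L)) ≤ if c = a / b then Fintype.card F else 0 := by
        intro c
        split_ifs with hcc
        · exact Finset.card_le_univ _
        · have : - a + c * b ≠ 0 := by
            intro h
            apply hcc
            field_simp
            linear_combination h
          simp [nr, hev, this]
      refine (Finset.sum_le_sum fun c _ => this c).trans ?_
      simp
  omega

lemma sum_bound (f : F → ℕ) (n : ℕ) (hf : ∀ c, f c ≤ n) :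
    ∑ c, f c ≤ Fintype.card F * n := by
  refine (Finset.sum_le_sum fun c _ => hf c).trans ?_
  simp

lemma sum_bound' (f : F → ℕ) (n : ℕ) (hf : ∀ c, f c ≤ n) (c₀ : F) (hc : f c₀ < n) :
    1 + ∑ c, f c ≤ Fintype.card F * n := by
  have := Finset.sum_lt_sum (s := Finset.univ) (f := f) (g := fun _ => n) (fun c _ => hf c)
    ⟨c₀, Finset.mem_univ _, hc⟩
  simp at this
  omega

lemma step {Fp : MvPolynomial (Fin 4) F} (hX : IsEllipticQuadric F Fp)
    {k : ℕ} {G : MvPolynomial (Fin 4) F} (hG : G.IsHomogeneous (k + 2)) :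
    (∃ A B L : MvPolynomial (Fin 4) F, B.IsHomogeneous (k + 1) ∧ L.IsHomogeneous 1 ∧ L ≠ 0 ∧
      G = A * Fp + B * L) ∨ (pts Fp G).ncard ≤ Fintype.card F * (2 * (k + 1)) := by
  by_cases hdiv : (∃ A B L : MvPolynomial (Fin 4) F, B.IsHomogeneous (k + 1) ∧
      L.IsHomogeneous 1 ∧ L ≠ 0 ∧ G = A * Fp + B * L)
  · exact Or.inl hdiv
  right
  -- no conic through a rational point is contained in the curve
  have hne : ∀ (P : Fin 4 → F) (e : Fin 4 → Fin 4 → F) (p : Par F), NF Fp P e p →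
      ∀ c, aeval (crv p c) (Phi e G) ≠ 0 := by
    intro P e p h c hc
    apply hdiv
    have hn : p.n2 ≠ 0 := by
      intro h0
      have := h.aniso 0 1 (by simp [h0])
      exact one_ne_zero this.2
    obtain ⟨A, B, hB, hAB⟩ := divide' p hn c _ (Phi_hom e hG) hc
    obtain ⟨e', he', he2⟩ := Phi_inv h.li
    have hLh : (X 1 + C c * X 0 : MvPolynomial (Fin 4) F).IsHomogeneous 1 :=
      (isHomogeneous_X _ _).add ((isHomogeneous_X _ _).C_mul _)
    refine ⟨Phi e' A, Phi e' B, Phi e' (X 1 + C c * X 0), Phi_hom _ hB, Phi_hom _ hLh, ?_, ?_⟩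
    · intro h0
      -- the reverse substitution is injective as well
      have h1 := he2 (X 1 + C c * X 0)
      rw [h0, map_zero] at h1
      have h2 := congrArg (eval (![0, 1, 0, 0] : Fin 4 → F)) h1
      simp at h2
    · rw [← he' G, hAB, map_add, map_mul, map_mul, ← h.hF, he']
  by_cases hns : ∃ P : Fin 4 → F, P ≠ 0 ∧ eval P Fp = 0 ∧ eval P G = 0 ∧
      ∃ v, dd Fp P v = 0 ∧ dd G P v ≠ 0
  · obtain ⟨P, hP, h1, h2, hv⟩ := hns
    obtain ⟨e, p, hNF, g1, g2, g3⟩ := exists_NF hX hG hP h1 h2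
    have g3 := g3 hv
    obtain ⟨κ, hκ⟩ := deg_main p k _ (Phi_hom e hG) g1 g2
    have hn : p.n2 ≠ 0 := by
      intro h0
      have := hNF.aniso 0 1 (by simp [h0])
      exact one_ne_zero this.2
    refine (count hNF hP hG).trans (sum_bound' _ _
      (fun c => (nr_le (hne P e p hNF c)).trans (hκ c).1)
      (- κ / (dd (Phi e G) EQ.e3 ![0, 1, 0, 0] * p.n2 ^ (k + 1))) ?_)
    set c := - κ / (dd (Phi e G) EQ.e3 ![0, 1, 0, 0] * p.n2 ^ (k + 1)) with hc
    refine lt_of_le_of_lt (nr_le (hne P e p hNF c)) ?_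
    refine lt_of_le_of_ne (hκ c).1 fun hd => ?_
    have h3 := (hκ c).2
    rw [hc, div_mul_cancel₀ _ (mul_ne_zero g3 (pow_ne_zero _ hn)), add_neg_cancel, ← hc, ← hd] at h3
    exact hne P e p hNF c (Polynomial.leadingCoeff_eq_zero.1 h3)
  · push Not at hns
    rcases le_or_gt (pts Fp G).ncard 1 with h | h
    · refine h.trans ?_
      have := Fintype.card_pos (α := F)
      nlinarith
    · obtain ⟨x, hx, y, hy, hxy⟩ := Set.one_lt_ncard_iff_nontrivial.1 h
      obtain ⟨e, p, hNF, g1, g2, -⟩ := exists_NF hX hG x.rep_nonzero hx.1 hx.2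
      obtain ⟨κ, hκ⟩ := deg_main p k _ (Phi_hom e hG) g1 g2
      rcases cover hNF y.rep hy.1 with ⟨r, hr⟩ | ⟨c, t, r, hr⟩
      · exfalso
        apply hxy
        symm
        rw [← x.mk_rep, ← y.mk_rep, Projectivization.mk_eq_mk_iff']
        exact ⟨r, hr.symm⟩
      have hr0 : r ≠ 0 := by
        rintro rfl
        exact y.rep_nonzero (by rw [hr, zero_smul])
      have hG0 : eval (pt e p c t) G = 0 := by
        have := hy.2
        rw [hr, hom_eval_smul hG] at this
        simpa [hr0] using this
      have hF0 : eval (pt e p c t) Fp = 0 := by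
        have := hy.1
        rw [hr, hom_eval_smul hX.2.1] at this
        simpa [hr0] using this
      refine (count hNF x.rep_nonzero hG).trans (sum_bound' _ _
        (fun c => (nr_le (hne _ e p hNF c)).trans (hκ c).1) c ?_)
      refine lt_of_lt_of_le ?_ (hκ c).1
      refine nr_lt (hne _ e p hNF c) t ?_ ?_
      · rw [← eval_pt, hG0]
      · have hpt : (fun i => (∑ j, algebraMap F (Polynomial F) (e j i) * crv p c j).eval t) =
            pt e p c t := by
          ext1 i
          simp [pt, Polynomial.eval_finsetSum, mul_comm]
        rw [aeval_Phi, dd_curve, hpt]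
        apply hns _ (pt_ne hNF.li p c t) hF0 hG0
        rw [← hpt, ← dd_curve, ← aeval_Phi, hNF.hF, crv_Fst]
        simp

end count

open ProjectiveSpectrum in
lemma locus_eval {Fp G L : MvPolynomial (Fin 4) F} {a b d : ℕ} (hF : Fp.IsHomogeneous a)
    (hG : G.IsHomogeneous b) (hL : L.IsHomogeneous d)
    (h : zeroLocus (homogeneousSubmodule (Fin 4) F) {Fp, G} ⊆
      zeroLocus (homogeneousSubmodule (Fin 4) F) {L})
    (v : Fin 4 → F) (hv : v ≠ 0) (h1 : eval v Fp = 0) (h2 : eval v G = 0) : eval v L = 0 := by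
  let I : Ideal (MvPolynomial (Fin 4) F) := RingHom.ker (eval v)
  have hI : I.IsPrime := RingHom.ker_isPrime _
  let x : ProjectiveSpectrum (homogeneousSubmodule (Fin 4) F) :=
    ⟨I.homogeneousCore _, hI.homogeneousCore, by
      intro hle
      obtain ⟨i, hi⟩ := Function.ne_iff.1 hv
      have h3 : (X i : MvPolynomial (Fin 4) F) ∈
          HomogeneousIdeal.irrelevant (homogeneousSubmodule (Fin 4) F) :=
        HomogeneousIdeal.mem_irrelevant_of_mem _ one_pos (isHomogeneous_X F i)
      have h4 : (X i : MvPolynomial (Fin 4) F) ∈ I := Ideal.toIdeal_homogeneousCore_le _ I (hle h3)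
      have : eval v (X i : MvPolynomial (Fin 4) F) = 0 := h4
      rw [eval_X] at this
      exact hi this⟩
  have hx : x ∈ zeroLocus (homogeneousSubmodule (Fin 4) F) {Fp, G} := by
    rw [mem_zeroLocus]
    rintro f (rfl | rfl)
    · exact Ideal.mem_homogeneousCore_of_homogeneous_of_mem ⟨a, hF⟩ h1
    · exact Ideal.mem_homogeneousCore_of_homogeneous_of_mem ⟨b, hG⟩ h2
  have h5 : L ∈ I := Ideal.toIdeal_homogeneousCore_le _ I ((h hx) (Set.mem_singleton L))
  exact h5

open ProjectiveSpectrum in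
lemma main [Fintype F] {Fp : MvPolynomial (Fin 4) F} (hX : IsEllipticQuadric F Fp) (k : ℕ) :
    ∀ G : MvPolynomial (Fin 4) F, G.IsHomogeneous (k + 1) → ¬ Fp ∣ G →
      IsIrreducible (zeroLocus (homogeneousSubmodule (Fin 4) F) {Fp, G}) →
      (pts Fp G).ncard ≤ max (Fintype.card F + 1) (Fintype.card F * (2 * k)) := by
  classical
  induction k with
  | zero =>
    intro G hG hd _
    refine le_max_of_le_left (linear_count hX hG ?_)
    rintro rfl
    exact hd (dvd_zero _)
  | succ k ih =>
    intro G hG hd hirr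
    rcases step hX hG with ⟨A, B, L, hB, hL, hL0, e⟩ | h
    · have hfin : ∀ H, (pts Fp H).Finite := fun H => Set.toFinite _
      have hcov : zeroLocus (homogeneousSubmodule (Fin 4) F) {Fp, G} ⊆
          zeroLocus (homogeneousSubmodule (Fin 4) F) {B} ∪
          zeroLocus (homogeneousSubmodule (Fin 4) F) {L} := by
        intro x hx
        rw [← zeroLocus_singleton_mul, mem_zeroLocus, Set.singleton_subset_iff]
        have h1 : Fp ∈ x.asHomogeneousIdeal.toIdeal := hx (by simp)
        have h2 : G ∈ x.asHomogeneousIdeal.toIdeal := hx (by simp)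
        have h3 : B * L = G - A * Fp := by rw [e]; ring
        rw [h3]
        exact Ideal.sub_mem _ h2 (Ideal.mul_mem_left _ _ h1)
      rcases isPreirreducible_iff_isClosed_union_isClosed.1 hirr.isPreirreducible _ _
        (isClosed_zeroLocus _ _) (isClosed_zeroLocus _ _) hcov with h | h
      · have hle : pts Fp G ⊆ pts Fp B := fun x hx =>
          ⟨hx.1, locus_eval hX.2.1 hG hB h _ x.rep_nonzero hx.1 hx.2⟩
        have heq : zeroLocus (homogeneousSubmodule (Fin 4) F) {Fp, G} =
            zeroLocus (homogeneousSubmodule (Fin 4) F) {Fp, B} := by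
          apply Set.Subset.antisymm
          · intro x hx
            rw [mem_zeroLocus]
            rintro f (rfl | rfl)
            · exact hx (by simp)
            · exact h hx (by simp)
          · intro x hx
            have h1 : Fp ∈ x.asHomogeneousIdeal.toIdeal := hx (by simp)
            have h2 : B ∈ x.asHomogeneousIdeal.toIdeal := hx (by simp)
            rw [mem_zeroLocus]
            rintro f (rfl | rfl)
            · exact h1
            · rw [e]
              exact Ideal.add_mem _ (Ideal.mul_mem_left _ _ h1) (Ideal.mul_mem_right _ _ h2)
        have := ih B hB (fun hdB => hd (by
          rw [e]
          exact dvd_add (dvd_mul_left _ _) (dvd_mul_of_dvd_left hdB _))) (heq ▸ hirr)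
        refine (Set.ncard_le_ncard hle (hfin _)).trans (this.trans ?_)
        apply max_le_max le_rfl
        gcongr
        omega
      · have hle : pts Fp G ⊆ pts Fp L := fun x hx =>
          ⟨hx.1, locus_eval hX.2.1 hG hL h _ x.rep_nonzero hx.1 hx.2⟩
        exact le_max_of_le_left
          ((Set.ncard_le_ncard hle (hfin _)).trans (linear_count hX hL hL0))
    · exact le_max_of_le_right h

end EQ

/-- An `F_q`-irreducible curve `D = X ∩ V(G)`, with `G` of degree `s ≥ 2`, on an elliptic
quadric `X` has at most `q(2s-2)` rational points. -/
theorem stmt_5 (q : ℕ) (hq : IsPrimePow q)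
    (F : Type) [Field F] [Fintype F] (hF : Fintype.card F = q)
    (Fp : MvPolynomial (Fin 4) F) (hX : IsEllipticQuadric F Fp)
    (s : ℕ) (hs : 2 ≤ s)
    (G : MvPolynomial (Fin 4) F) (hG : G.IsHomogeneous s) (hGF : ¬ Fp ∣ G)
    (hirr : IsIrreducible
      (ProjectiveSpectrum.zeroLocus (homogeneousSubmodule (Fin 4) F) {Fp, G})) :
    {x : Projectivization F (Fin 4 → F) |
      MvPolynomial.eval x.rep Fp = 0 ∧ MvPolynomial.eval x.rep G = 0}.ncard
        ≤ q * (2 * s - 2) := by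
  obtain ⟨k, rfl⟩ : ∃ k, s = k + 1 := ⟨s - 1, by omega⟩
  have h := EQ.main hX k G hG hGF hirr
  rw [hF] at h
  have hq2 : 2 ≤ q := hq.two_le
  refine le_trans h (max_le ?_ ?_)
  · calc q + 1 ≤ q * 2 := by omega
      _ ≤ q * (2 * (k + 1) - 2) := Nat.mul_le_mul_left _ (by omega)
  · exact Nat.mul_le_mul_left _ (by omega)
end
end
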